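/- arXiv:2511.02974 — 2 statements merged into one kernel-verified Lean document; each statement's English description precedes it below -/
import Mathlib

section
/- There is an absolute constant c > 0 with the following property. Let K be a convex body in ℝ^n with 0 in its interior such that the barycenter of the polar body K° is at the origin (equivalently, the Santaló point of K is at the origin). Then vol_n(K ∩ (−K)) ≥ c^n · vol_n(K). -/
open MeasureTheory Metric Set
open scoped ENNReal RealInnerProductSpace Pointwise

noncomputable section

/-- The polar body of `K`. -/
def polarBody {n : ℕ} (K : Set (EuclideanSpace ℝ (Fin n))) : Set (EuclideanSpace ℝ (Fin n)) :=
  {x | ∀ y ∈ K, ⟪x, y⟫ ≤ 1}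

/-!
Let `L = K°`, with support function `h` and Laplace transform `Z(x) = ∫_L exp ⟨x, y⟩ dy`. The
probability measure on `L` with density `exp ⟨x, y⟩ / Z(x)` has mean `m(x) = ∇ log Z(x) ∈ L` and
covariance `Dm(x)`. Integrating over homothetic copies of `L`, `∫ exp (-h) = n! vol K` and
`∫ exp (-max (h(p), h(-p)) / 2) dp = n! 2ⁿ vol (K ∩ -K)`, so it suffices to compare both integrals
with `1 / vol L`.

Contracting `L` by one half towards a maximizer of `⟨x, ·⟩` and using that `L` is centered, one gets
`vol L · exp (h(x) / 2) ≤ 2ⁿ Z(x)`, whence `⟨x, m(x)⟩ ≥ h(x) / 2 - n log 2` by Jensen.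

*Upper bound.* Jensen's inequality for a Gaussian with the covariance `Dm(x)` gives
`(vol L)² exp (-h) ≤ (8πe)ⁿ det Dm`. Since `m` is injective with values in `L`, integration yields
`vol L · ∫ exp (-h) ≤ (8πe)ⁿ`.

*Lower bound.* Put `u(x) = m(x) - m(-x)`. By Stokes' theorem the integral over `ℂⁿ` of
`exp (-∑ ζ_k U_k) det ∂̄U` does not change along a homotopy of sufficiently decaying fields `U`.
Deforming `U(x + iy) = u(x) - i u(y)` into complex conjugation gives
`(2π)ⁿ ≤ ∫∫ exp (-⟨x, u(x)⟩ - ⟨y, u(y)⟩) |det (Du(x) + Du(y))| dx dy`. For fixed `p = x + y` the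
determinant is the Jacobian of the injective map `x ↦ u(x) - u(p - x)` into `2(L - L)`, a body of
volume at most `8ⁿ vol L`, and the exponential is at most `16ⁿ exp (-max (h(p), h(-p)) / 2)`.
-/

section TemperateGrowth

open Function

variable {E F : Type*} [NormedAddCommGroup E] [NormedSpace ℝ E]
  [NormedAddCommGroup F] [NormedSpace ℝ F]

theorem hasTemperateGrowth_fderiv {f : E → F} (hf : f.HasTemperateGrowth) :
    (fderiv ℝ f).HasTemperateGrowth :=
  ⟨hf.1.fderiv_right (by simp), fun n => by
    obtain ⟨k, C, h⟩ := hf.2 (n + 1)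
    exact ⟨k, C, fun x => norm_iteratedFDeriv_fderiv.trans_le (h x)⟩⟩

theorem hasTemperateGrowth_fderiv_apply {f : E → F} (hf : f.HasTemperateGrowth) (v : E) :
    (fun x => fderiv ℝ f x v).HasTemperateGrowth :=
  (ContinuousLinearMap.apply ℝ F v).hasTemperateGrowth.comp (hasTemperateGrowth_fderiv hf)

theorem hasTemperateGrowth_prod {ι : Type*} (s : Finset ι) {f : ι → E → ℂ}
    (hf : ∀ i, (f i).HasTemperateGrowth) : (fun x => ∏ i ∈ s, f i x).HasTemperateGrowth := by
  classical
  induction s using Finset.induction_on with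
  | empty => simp
  | insert i s hi ih => simpa only [Finset.prod_insert hi] using (hf i).fun_mul ih

theorem hasTemperateGrowth_det {ι : Type*} [Fintype ι] [DecidableEq ι] {A : E → Matrix ι ι ℂ}
    (hA : ∀ i j, (fun x => A x i j).HasTemperateGrowth) :
    (fun x => (A x).det).HasTemperateGrowth := by
  simp only [Matrix.det_apply']
  exact .sum fun σ _ => (HasTemperateGrowth.const _).fun_mul
    (hasTemperateGrowth_prod _ fun i => hA _ _)

theorem hasTemperateGrowth_adjugate {ι : Type*} [Fintype ι] [DecidableEq ι] {A : E → Matrix ι ι ℂ}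
    (hA : ∀ i j, (fun x => A x i j).HasTemperateGrowth) (i j : ι) :
    (fun x => (A x).adjugate i j).HasTemperateGrowth := by
  simp only [Matrix.adjugate_apply]
  refine hasTemperateGrowth_det fun k l => ?_
  rcases eq_or_ne k j with rfl | hkj
  · simp only [Matrix.updateRow_self, HasTemperateGrowth.const]
  · simpa only [Matrix.updateRow_ne hkj] using hA k l

theorem exists_norm_le_of_hasTemperateGrowth {f : E → F} (hf : f.HasTemperateGrowth) :
    ∃ (k : ℕ) (C : ℝ), 0 ≤ C ∧ ∀ x, ‖f x‖ ≤ C * (1 + ‖x‖) ^ k := by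
  obtain ⟨k, C, hC, h⟩ := hf.norm_iteratedFDeriv_le_uniform 0
  exact ⟨k, C, hC, fun x => by simpa using h 0 le_rfl x⟩

theorem exists_one_add_pow_le_mul_exp (m : ℕ) {c : ℝ} (hc : 0 < c) :
    ∃ A : ℝ, ∀ t : ℝ, 0 ≤ t → (1 + t) ^ m ≤ A * Real.exp (c * t) := by
  refine ⟨m.factorial / c ^ m * Real.exp c, fun t ht => ?_⟩
  have hpow := Real.pow_div_factorial_le_exp (x := c * (1 + t)) (by positivity) m
  calc (1 + t) ^ m = m.factorial / c ^ m * ((c * (1 + t)) ^ m / m.factorial) := by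
        rw [mul_pow]; field_simp
    _ ≤ m.factorial / c ^ m * Real.exp (c * (1 + t)) := by gcongr
    _ = m.factorial / c ^ m * Real.exp c * Real.exp (c * t) := by
        rw [mul_assoc, ← Real.exp_add]; ring_nf

variable [FiniteDimensional ℝ E] [MeasurableSpace E] [BorelSpace E]
  (μ : Measure E) [μ.IsAddHaarMeasure]

theorem integrable_exp_neg_mul_one_add_norm_pow {c : ℝ} (hc : 0 < c) (k : ℕ) :
    Integrable (fun x => Real.exp (-(c * ‖x‖)) * (1 + ‖x‖) ^ k) μ := by
  set d := Module.finrank ℝ E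
  obtain ⟨A, hA⟩ := exists_one_add_pow_le_mul_exp (k + (d + 1)) hc
  have hdecay : Integrable (fun x : E => A * (1 + ‖x‖) ^ (-((d + 1 : ℕ) : ℝ))) μ :=
    (integrable_one_add_norm (by simp [d])).const_mul A
  refine hdecay.mono' (by fun_prop) (.of_forall fun x => ?_)
  rw [Real.norm_of_nonneg (by positivity), Real.rpow_neg (by positivity), Real.rpow_natCast,
    ← div_eq_mul_inv, le_div_iff₀ (by positivity), mul_assoc, ← pow_add, Real.exp_neg,
    inv_mul_le_iff₀ (Real.exp_pos _), mul_comm]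
  exact hA _ (norm_nonneg x)

theorem exists_integrable_bound_exp_mul {f : ℝ × E → ℂ} (hf : f.HasTemperateGrowth)
    {c : ℝ} (hc : 0 < c) (D : ℝ) :
    ∃ bound : E → ℝ, Integrable bound μ ∧
      ∀ s ∈ Icc (0 : ℝ) 1, ∀ x, Real.exp (D - c * ‖x‖) * ‖f (s, x)‖ ≤ bound x := by
  obtain ⟨k, C, hC, h⟩ := exists_norm_le_of_hasTemperateGrowth hf
  refine ⟨fun x => Real.exp D * C * 2 ^ k * (Real.exp (-(c * ‖x‖)) * (1 + ‖x‖) ^ k),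
    (integrable_exp_neg_mul_one_add_norm_pow μ hc k).const_mul _, fun s hs x => ?_⟩
  have hnorm : 1 + ‖(s, x)‖ ≤ 2 * (1 + ‖x‖) := by
    have : ‖(s, x)‖ ≤ 1 + ‖x‖ := by
      refine max_le ?_ (by simp)
      rw [Real.norm_of_nonneg hs.1]
      linarith [hs.2, norm_nonneg x]
    linarith [norm_nonneg x]
  calc Real.exp (D - c * ‖x‖) * ‖f (s, x)‖
      ≤ Real.exp (D - c * ‖x‖) * (C * (2 * (1 + ‖x‖)) ^ k) := by
        gcongr
        exact (h _).trans (by gcongr)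
    _ = _ := by
        rw [sub_eq_add_neg, Real.exp_add, mul_pow]
        ring

theorem integrable_exp_mul_of_hasTemperateGrowth {Q f : E → ℂ} (hQ : Continuous Q)
    (hf : f.HasTemperateGrowth) {c D : ℝ} (hc : 0 < c) (hdecay : ∀ x, c * ‖x‖ - D ≤ (Q x).re) :
    Integrable (fun x => Complex.exp (-Q x) * f x) μ := by
  obtain ⟨bound, hbound, h⟩ := exists_integrable_bound_exp_mul μ
    (hf.comp (ContinuousLinearMap.snd ℝ ℝ E).hasTemperateGrowth) hc D
  refine hbound.mono' ?_ (.of_forall fun x => ?_)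
  · exact ((Complex.continuous_exp.comp hQ.neg).mul hf.1.continuous).aestronglyMeasurable
  · refine le_trans ?_ (h 0 (by simp) x)
    rw [norm_mul, Complex.norm_exp, Complex.neg_re]
    gcongr
    · linarith [hdecay x]
    · rfl

end TemperateGrowth

section JacobiFormula

open Matrix

variable {ι W : Type*} [Fintype ι] [DecidableEq ι] [NormedAddCommGroup W] [NormedSpace ℝ W]

theorem det_updateRow_eq_sum_mul_adjugate {R : Type*} [CommRing R] (M : Matrix ι ι R) (k : ι)
    (v : ι → R) : (M.updateRow k v).det = ∑ j, v j * M.adjugate j k := by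
  rw [← cramer_transpose_apply, cramer_eq_adjugate_mulVec, ← adjugate_transpose,
    mulVec_transpose, vecMul, dotProduct]

theorem hasFDerivAt_det {M : W → Matrix ι ι ℂ} {M' : ι → ι → W →L[ℝ] ℂ} {x : W}
    (hM : ∀ k j, HasFDerivAt (fun x => M x k j) (M' k j) x) :
    HasFDerivAt (fun x => (M x).det) (∑ k, ∑ j, (M x).adjugate j k • M' k j) x := by
  have hdet (A : Matrix ι ι ℂ) :
      A.det = ∑ σ : Equiv.Perm ι, (Equiv.Perm.sign σ : ℂ) * ∏ i, A i (σ i) := by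
    rw [← det_transpose, det_apply']
    rfl
  have hleibniz := HasFDerivAt.fun_sum (u := Finset.univ) fun (σ : Equiv.Perm ι) _ =>
    (HasFDerivAt.finsetProd (u := Finset.univ) fun i _ => hM i (σ i)).const_mul
      (Equiv.Perm.sign σ : ℂ)
  simp only [← hdet] at hleibniz
  refine hleibniz.congr_fderiv (ContinuousLinearMap.ext fun v => ?_)
  have hrow (k : ι) : ∑ j, (M x).adjugate j k • M' k j v =
      ((M x).updateRow k fun j => M' k j v).det := by
    simp only [det_updateRow_eq_sum_mul_adjugate, smul_eq_mul, mul_comm]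
  simp only [_root_.sum_apply, _root_.smul_apply, hrow, hdet]
  rw [Finset.sum_comm]
  refine Finset.sum_congr rfl fun σ _ => ?_
  rw [smul_eq_mul, Finset.mul_sum]
  refine Finset.sum_congr rfl fun k _ => ?_
  rw [← Finset.prod_erase_mul _ _ (Finset.mem_univ k), updateRow_self, smul_eq_mul]
  congr 2
  exact Finset.prod_congr rfl fun i hi => by rw [updateRow_ne (Finset.ne_of_mem_erase hi)]

theorem det_updateRow_updateRow_swap {R : Type*} [CommRing R] (M : Matrix ι ι R) {k m : ι}
    (hkm : m ≠ k) (a b : ι → R) :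
    ((M.updateRow k a).updateRow m b).det = -((M.updateRow k b).updateRow m a).det := by
  have hswap : (M.updateRow k a).updateRow m b =
      ((M.updateRow k b).updateRow m a).submatrix (Equiv.swap m k) id := by
    ext i j
    rcases eq_or_ne i m with rfl | him
    · simp [updateRow_apply, hkm.symm]
    rcases eq_or_ne i k with rfl | hik
    · simp [updateRow_apply, him]
    simp [updateRow_apply, Equiv.swap_apply_of_ne_of_ne him hik, him, hik]
  rw [hswap, det_permute]
  simp [Equiv.Perm.sign_swap hkm]

theorem sum_sum_det_updateRow_updateRow_mul_eq_zero (M : Matrix ι ι ℂ) {k m : ι} (hkm : m ≠ k)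
    {c : ι → ι → ℂ} (hc : ∀ j l, c j l = c l j) :
    ∑ j, ∑ l, ((M.updateRow k (Pi.single j 1)).updateRow m (Pi.single l 1)).det * c j l = 0 := by
  refine self_eq_neg.1 ?_
  conv_lhs => rw [Finset.sum_comm]
  simp only [← Finset.sum_neg_distrib, ← neg_mul]
  refine Finset.sum_congr rfl fun j _ => Finset.sum_congr rfl fun l _ => ?_
  rw [hc, det_updateRow_updateRow_swap M hkm]

end JacobiFormula

section Dbar

open Function

variable {W : Type*} [NormedAddCommGroup W] [NormedSpace ℝ W]

/-- The differential operator `∂_v + i ∂_w` attached to `p = (v, w)`. If `v` and `w` are the real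
and the imaginary direction of a complex coordinate, this is twice the Wirtinger operator
`∂/∂z̄`. -/
def dbar (p : W × W) (g : W → ℂ) (z : W) : ℂ :=
  fderiv ℝ g z p.1 + Complex.I * fderiv ℝ g z p.2

theorem hasTemperateGrowth_dbar (p : W × W) {g : W → ℂ} (hg : g.HasTemperateGrowth) :
    (dbar p g).HasTemperateGrowth :=
  (hasTemperateGrowth_fderiv_apply hg p.1).fun_add
    ((HasTemperateGrowth.const _).fun_mul (hasTemperateGrowth_fderiv_apply hg p.2))

theorem dbar_const (p : W × W) (a : ℂ) (z : W) : dbar p (fun _ => a) z = 0 := by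
  simp [dbar]

theorem dbar_mul (p : W × W) {f g : W → ℂ} {z : W} (hf : DifferentiableAt ℝ f z)
    (hg : DifferentiableAt ℝ g z) :
    dbar p (fun z => f z * g z) z = f z * dbar p g z + g z * dbar p f z := by
  simp only [dbar, fderiv_fun_mul hf hg, _root_.add_apply,
    _root_.smul_apply, smul_eq_mul]
  ring

theorem dbar_sum {ι : Type*} (s : Finset ι) (p : W × W) {f : ι → W → ℂ} {z : W}
    (hf : ∀ i, DifferentiableAt ℝ (f i) z) :
    dbar p (fun z => ∑ i ∈ s, f i z) z = ∑ i ∈ s, dbar p (f i) z := by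
  simp only [dbar, fderiv_fun_sum fun i _ => hf i, _root_.sum_apply, Finset.mul_sum,
    Finset.sum_add_distrib]

theorem dbar_det {ι : Type*} [Fintype ι] [DecidableEq ι] (p : W × W) {M : W → Matrix ι ι ℂ}
    {z : W} (hM : ∀ k j, DifferentiableAt ℝ (fun z => M z k j) z) :
    dbar p (fun z => (M z).det) z =
      ∑ k, ∑ j, (M z).adjugate j k * dbar p (fun z => M z k j) z := by
  simp only [dbar, (hasFDerivAt_det fun k j => (hM k j).hasFDerivAt).fderiv,
    _root_.sum_apply, _root_.smul_apply, smul_eq_mul, Finset.mul_sum,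
    mul_add, Finset.sum_add_distrib, mul_left_comm]

theorem fderiv_dbar_apply (p : W × W) {g : W → ℂ} (hg : ContDiff ℝ 2 g) (z v : W) :
    fderiv ℝ (dbar p g) z v =
      fderiv ℝ (fderiv ℝ g) z v p.1 + Complex.I * fderiv ℝ (fderiv ℝ g) z v p.2 := by
  have hg' : DifferentiableAt ℝ (fderiv ℝ g) z :=
    (hg.fderiv_right (m := 1) le_rfl).differentiable one_ne_zero z
  have h (u : W) : HasFDerivAt (fun z => fderiv ℝ g z u)
      ((ContinuousLinearMap.apply ℝ ℂ u).comp (fderiv ℝ (fderiv ℝ g) z)) z :=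
    (ContinuousLinearMap.apply ℝ ℂ u).hasFDerivAt.comp z hg'.hasFDerivAt
  have := ((h p.1).fun_add ((h p.2).const_mul Complex.I)).fderiv
  unfold dbar
  simp [this]

theorem dbar_dbar_comm (p q : W × W) {g : W → ℂ} (hg : ContDiff ℝ 2 g) (z : W) :
    dbar p (dbar q g) z = dbar q (dbar p g) z := by
  have hsymm : IsSymmSndFDerivAt ℝ g z := hg.contDiffAt.isSymmSndFDerivAt (by simp)
  rw [dbar, dbar]
  simp only [fderiv_dbar_apply _ hg, hsymm.eq p.1 q.1, hsymm.eq p.1 q.2, hsymm.eq p.2 q.1,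
    hsymm.eq p.2 q.2]
  ring

variable [FiniteDimensional ℝ W] [MeasurableSpace W] [BorelSpace W]
  (μ : Measure W) [μ.IsAddHaarMeasure]

theorem integral_fderiv_eq_zero {F : Type*} [NormedAddCommGroup F] [NormedSpace ℝ F]
    {g : W → F} (hg : Differentiable ℝ g) (v : W)
    (hint : Integrable g μ) (hint' : Integrable (fun z => fderiv ℝ g z v) μ) :
    ∫ z, fderiv ℝ g z v ∂μ = 0 := by
  have := integral_smul_fderiv_eq_neg_fderiv_smul_of_integrable (μ := μ) (𝕜 := ℝ)
    (f := fun _ => (1 : ℝ)) (g := g) (v := v) (by simp) (by simpa using hint')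
    (by simpa using hint) (fun _ _ => differentiableAt_const _) fun z _ => hg z
  simpa using this

theorem integral_exp_mul_dbar_sub_eq_zero (p : W × W) {Q g : W → ℂ} (hQ : Q.HasTemperateGrowth)
    (hg : g.HasTemperateGrowth) {c D : ℝ} (hc : 0 < c) (hdecay : ∀ z, c * ‖z‖ - D ≤ (Q z).re) :
    ∫ z, Complex.exp (-Q z) * (dbar p g z - dbar p Q z * g z) ∂μ = 0 := by
  have hQdiff : Differentiable ℝ Q := hQ.1.differentiable (by simp)
  have hgdiff : Differentiable ℝ g := hg.1.differentiable (by simp)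
  have hint {f : W → ℂ} (hf : f.HasTemperateGrowth) :
      Integrable (fun z => Complex.exp (-Q z) * f z) μ :=
    integrable_exp_mul_of_hasTemperateGrowth μ hQ.1.continuous hf hc hdecay
  have hderiv (v z : W) : fderiv ℝ (fun z => Complex.exp (-Q z) * g z) z v =
      Complex.exp (-Q z) * (fderiv ℝ g z v - fderiv ℝ Q z v * g z) := by
    rw [((hQdiff z).hasFDerivAt.fun_neg.cexp.fun_mul (hgdiff z).hasFDerivAt).fderiv]
    simp only [_root_.add_apply, _root_.smul_apply,
      _root_.neg_apply, smul_eq_mul]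
    ring
  have hint' (v : W) :
      Integrable (fun z => Complex.exp (-Q z) * (fderiv ℝ g z v - fderiv ℝ Q z v * g z)) μ :=
    hint ((hasTemperateGrowth_fderiv_apply hg v).fun_sub
      ((hasTemperateGrowth_fderiv_apply hQ v).fun_mul hg))
  have hzero (v : W) :
      ∫ z, Complex.exp (-Q z) * (fderiv ℝ g z v - fderiv ℝ Q z v * g z) ∂μ = 0 := by
    simp only [← hderiv]
    exact integral_fderiv_eq_zero μ (by fun_prop) v (hint hg) (by simpa only [hderiv] using hint' v)
  have hsplit (z : W) : Complex.exp (-Q z) * (dbar p g z - dbar p Q z * g z) =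
      Complex.exp (-Q z) * (fderiv ℝ g z p.1 - fderiv ℝ Q z p.1 * g z) +
        Complex.I * (Complex.exp (-Q z) * (fderiv ℝ g z p.2 - fderiv ℝ Q z p.2 * g z)) := by
    simp only [dbar]
    ring
  simp only [hsplit]
  rw [integral_add (hint' _) ((hint' _).const_mul _), integral_const_mul, hzero, hzero, mul_zero,
    add_zero]

end Dbar

section Stokes

open Function

variable {ι W : Type*} [NormedAddCommGroup W] [NormedSpace ℝ W]

/-- The matrix `∂̄C` with entries `∂̄_j C_k`, where `∂̄_j` is the operator `dbar (p j)`. -/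
def dbarMatrix (p : ι → W × W) (C : ι → W → ℂ) (z : W) : Matrix ι ι ℂ :=
  Matrix.of fun k j => dbar (p j) (C k) z

theorem hasTemperateGrowth_dbarMatrix (p : ι → W × W) {C : ι → W → ℂ}
    (hC : ∀ k, (C k).HasTemperateGrowth) (k j : ι) :
    (fun z => dbarMatrix p C z k j).HasTemperateGrowth :=
  hasTemperateGrowth_dbar (p j) (hC k)

variable [Fintype ι]

theorem hasTemperateGrowth_sum_mul {ζ C : ι → W → ℂ} (hζ : ∀ k, (ζ k).HasTemperateGrowth)
    (hC : ∀ k, (C k).HasTemperateGrowth) :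
    (fun z => ∑ k, ζ k z * C k z).HasTemperateGrowth :=
  .sum fun k _ => (hζ k).fun_mul (hC k)

theorem hasTemperateGrowth_trace_mul {A B : W → Matrix ι ι ℂ}
    (hA : ∀ i j, (fun z => A z i j).HasTemperateGrowth)
    (hB : ∀ i j, (fun z => B z i j).HasTemperateGrowth) :
    (fun z => (A z * B z).trace).HasTemperateGrowth :=
  .sum fun i _ => .sum fun j _ => (hA i j).fun_mul (hB j i)

/- Piola identity: the second derivatives are symmetric while the minors they multiply are
alternating. -/
theorem sum_dbar_adjugate_dbarMatrix_eq_zero [DecidableEq ι] (p : ι → W × W) {C : ι → W → ℂ}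
    (hC : ∀ k, ContDiff ℝ 2 (C k)) (k : ι) (z : W) :
    ∑ j, dbar (p j) (fun z => (dbarMatrix p C z).adjugate j k) z = 0 := by
  have hdiff (q : W × W) (m : ι) : DifferentiableAt ℝ (dbar q (C m)) z := by
    have : Differentiable ℝ (fderiv ℝ (C m)) :=
      ((hC m).fderiv_right (m := 1) le_rfl).differentiable one_ne_zero
    unfold dbar
    fun_prop
  have hentry (j m l : ι) :
      DifferentiableAt ℝ (fun z => (dbarMatrix p C z).updateRow k (Pi.single j 1) m l) z := by
    rcases eq_or_ne m k with rfl | hmk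
    · simp only [Matrix.updateRow_self, differentiableAt_const]
    · simp only [Matrix.updateRow_ne hmk]
      exact hdiff (p l) m
  simp only [Matrix.adjugate_apply, dbar_det _ (hentry _)]
  rw [Finset.sum_comm]
  refine Finset.sum_eq_zero fun m _ => ?_
  rcases eq_or_ne m k with rfl | hmk
  · simp only [Matrix.updateRow_self, dbar_const, mul_zero, Finset.sum_const_zero]
  · have hrow (j l : ι) :
        dbar (p j) (fun z => (dbarMatrix p C z).updateRow k (Pi.single j 1) m l) z =
          dbar (p j) (dbar (p l) (C m)) z := by
      simp only [Matrix.updateRow_ne hmk, dbarMatrix, Matrix.of_apply]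
    simp only [hrow]
    exact sum_sum_det_updateRow_updateRow_mul_eq_zero (dbarMatrix p C z) hmk
      (c := fun j l => dbar (p j) (dbar (p l) (C m)) z)
      fun j l => dbar_dbar_comm (p j) (p l) (hC m) z

section HolomorphicPairing

variable {p : ι → W × W} {ζ C H : ι → W → ℂ} (hζ : ∀ k, (ζ k).HasTemperateGrowth)
  (hζ_dbar : ∀ j k z, dbar (p j) (ζ k) z = 0) (hC : ∀ k, (C k).HasTemperateGrowth)
  (hH : ∀ k, (H k).HasTemperateGrowth)

include hζ hζ_dbar hC in
theorem dbar_sum_mul_eq (j : ι) (z : W) :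
    dbar (p j) (fun z => ∑ k, ζ k z * C k z) z = ∑ k, ζ k z * dbarMatrix p C z k j := by
  have hdiff {f : W → ℂ} (hf : f.HasTemperateGrowth) : DifferentiableAt ℝ f z :=
    hf.1.differentiable (by simp) z
  rw [dbar_sum _ _ fun k => hdiff ((hζ k).fun_mul (hC k))]
  refine Finset.sum_congr rfl fun k _ => ?_
  rw [dbar_mul _ (hdiff (hζ k)) (hdiff (hC k)), hζ_dbar, mul_zero, add_zero, dbarMatrix,
    Matrix.of_apply]

variable [DecidableEq ι]

include hζ hζ_dbar hC hH in
theorem sum_dbar_cofactor_sub_eq (z : W) :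
    ∑ j, (dbar (p j) (fun z => ∑ k, H k z * (dbarMatrix p C z).adjugate j k) z -
        dbar (p j) (fun z => ∑ k, ζ k z * C k z) z *
          ∑ k, H k z * (dbarMatrix p C z).adjugate j k) =
      ((dbarMatrix p C z).adjugate * dbarMatrix p H z).trace -
        (∑ k, ζ k z * H k z) * (dbarMatrix p C z).det := by
  have hdiff {f : W → ℂ} (hf : f.HasTemperateGrowth) : DifferentiableAt ℝ f z :=
    hf.1.differentiable (by simp) z
  have hadj (j k : ι) := hasTemperateGrowth_adjugate (hasTemperateGrowth_dbarMatrix p hC) j k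
  have hpiola (k : ι) := sum_dbar_adjugate_dbarMatrix_eq_zero p
    (fun k => contDiff_infty.1 (hC k).1 2) k z
  have hcofactor (m k : ι) : ∑ j, dbarMatrix p C z m j * (dbarMatrix p C z).adjugate j k =
      if m = k then (dbarMatrix p C z).det else 0 := by
    rw [← Matrix.mul_apply, Matrix.mul_adjugate, Matrix.smul_apply, Matrix.one_apply]
    simp
  rw [Finset.sum_sub_distrib]
  congr 1
  · simp only [dbar_sum _ _ fun k => hdiff ((hH k).fun_mul (hadj _ k)),
      dbar_mul _ (hdiff (hH _)) (hdiff (hadj _ _)), Finset.sum_add_distrib]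
    rw [Finset.sum_comm]
    simp only [← Finset.mul_sum, hpiola, mul_zero, Finset.sum_const_zero, zero_add]
    rfl
  · simp only [dbar_sum_mul_eq hζ hζ_dbar hC]
    calc ∑ j, (∑ m, ζ m z * dbarMatrix p C z m j) *
            ∑ k, H k z * (dbarMatrix p C z).adjugate j k
        = ∑ m, ∑ k, ζ m z * H k z *
            ∑ j, dbarMatrix p C z m j * (dbarMatrix p C z).adjugate j k := by
          simp only [Finset.sum_mul_sum]
          rw [Finset.sum_comm]
          refine Finset.sum_congr rfl fun m _ => ?_
          rw [Finset.sum_comm]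
          refine Finset.sum_congr rfl fun k _ => ?_
          rw [Finset.mul_sum]
          exact Finset.sum_congr rfl fun j _ => by ring
      _ = (∑ k, ζ k z * H k z) * (dbarMatrix p C z).det := by
          simp [hcofactor, Finset.sum_mul]

variable [FiniteDimensional ℝ W] [MeasurableSpace W] [BorelSpace W]
  (μ : Measure W) [μ.IsAddHaarMeasure]

include hζ hζ_dbar hC hH in
theorem integral_exp_mul_trace_adjugate_sub_eq_zero {c D : ℝ} (hc : 0 < c)
    (hdecay : ∀ z, c * ‖z‖ - D ≤ (∑ k, ζ k z * C k z).re) :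
    ∫ z, Complex.exp (-∑ k, ζ k z * C k z) *
      (((dbarMatrix p C z).adjugate * dbarMatrix p H z).trace -
        (∑ k, ζ k z * H k z) * (dbarMatrix p C z).det) ∂μ = 0 := by
  have hQ := hasTemperateGrowth_sum_mul hζ hC
  have hg (j : ι) := hasTemperateGrowth_sum_mul hH
    (hasTemperateGrowth_adjugate (hasTemperateGrowth_dbarMatrix p hC) j)
  simp_rw [← sum_dbar_cofactor_sub_eq hζ hζ_dbar hC hH]
  conv_lhs => enter [2, z]; rw [Finset.mul_sum]
  rw [integral_finsetSum]
  · exact Finset.sum_eq_zero fun j _ =>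
      integral_exp_mul_dbar_sub_eq_zero μ (p j) hQ (hg j) hc hdecay
  · exact fun j _ => integrable_exp_mul_of_hasTemperateGrowth μ hQ.1.continuous
      ((hasTemperateGrowth_dbar _ (hg j)).fun_sub ((hasTemperateGrowth_dbar _ hQ).fun_mul (hg j)))
      hc hdecay

end HolomorphicPairing

end Stokes

section Homotopy

open Function

theorem integral_eq_integral_of_integral_deriv_eq_zero {W : Type*} [TopologicalSpace W]
    [SecondCountableTopology W] [MeasurableSpace W] [BorelSpace W] {μ : Measure W} [SFinite μ]
    {F F' : ℝ → W → ℂ} {bound : W → ℝ}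
    (hF₀ : Integrable (F 0) μ) (hF₁ : Integrable (F 1) μ) (hbound : Integrable bound μ)
    (hderiv : ∀ s z, HasDerivAt (F · z) (F' s z) s) (hcont : Continuous (uncurry F'))
    (hle : ∀ s ∈ Icc (0 : ℝ) 1, ∀ z, ‖F' s z‖ ≤ bound z)
    (hzero : ∀ s ∈ Icc (0 : ℝ) 1, ∫ z, F' s z ∂μ = 0) :
    ∫ z, F 0 z ∂μ = ∫ z, F 1 z ∂μ := by
  have hftc (z : W) : ∫ s in Ioc (0 : ℝ) 1, F' s z = F 1 z - F 0 z := by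
    rw [← intervalIntegral.integral_of_le zero_le_one]
    exact intervalIntegral.integral_eq_sub_of_hasDerivAt (fun s _ => hderiv s z)
      ((hcont.comp (Continuous.prodMk_left z)).intervalIntegrable _ _)
  have hint : Integrable (uncurry F') ((volume.restrict (Ioc (0 : ℝ) 1)).prod μ) := by
    refine (hbound.comp_snd (volume.restrict (Ioc (0 : ℝ) 1))).mono'
      hcont.aestronglyMeasurable ?_
    have hmem : ∀ᵐ s ∂volume.restrict (Ioc (0 : ℝ) 1), s ∈ Ioc (0 : ℝ) 1 :=
      ae_restrict_mem measurableSet_Ioc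
    filter_upwards [Measure.quasiMeasurePreserving_fst.ae hmem] with q hq
    exact hle q.1 (Ioc_subset_Icc_self hq) q.2
  have hsub : ∫ z, (F 1 z - F 0 z) ∂μ = 0 := by
    simp only [← hftc]
    rw [← integral_integral_swap hint]
    exact setIntegral_eq_zero_of_forall_eq_zero fun s hs => hzero s (Ioc_subset_Icc_self hs)
  rw [integral_sub hF₁ hF₀, sub_eq_zero] at hsub
  exact hsub.symm

variable {ι W : Type*} [NormedAddCommGroup W] [NormedSpace ℝ W]

theorem dbarMatrix_add_smul (p : ι → W × W) {C H : ι → W → ℂ}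
    (hC : ∀ k, Differentiable ℝ (C k)) (hH : ∀ k, Differentiable ℝ (H k)) (s : ℂ) (z : W) :
    dbarMatrix p (fun k z => C k z + s * H k z) z = dbarMatrix p C z + s • dbarMatrix p H z := by
  ext k j
  simp only [dbarMatrix, dbar, Matrix.of_apply, Matrix.add_apply, Matrix.smul_apply, smul_eq_mul,
    fderiv_fun_add (hC k z) ((hH k z).const_mul s), fderiv_const_mul (hH k z), _root_.add_apply,
    _root_.smul_apply]
  ring

variable [Fintype ι] [DecidableEq ι]

theorem hasDerivAt_exp_mul_det (a b : ℂ) (M N : Matrix ι ι ℂ) (s : ℝ) :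
    HasDerivAt (fun s : ℝ => Complex.exp (-(a + s * b)) * (M + (s : ℂ) • N).det)
      (Complex.exp (-(a + s * b)) *
        (((M + (s : ℂ) • N).adjugate * N).trace - b * (M + (s : ℂ) • N).det)) s := by
  have hs : HasDerivAt (fun s : ℝ => (s : ℂ)) 1 s := Complex.ofRealCLM.hasDerivAt
  have hentry (k j : ι) : HasFDerivAt (fun s : ℝ => (M + (s : ℂ) • N) k j)
      (ContinuousLinearMap.toSpanSingleton ℝ (N k j)) s := by
    simpa using ((hs.mul_const (N k j)).const_add (M k j)).hasFDerivAt
  have hdet := (hasFDerivAt_det hentry).hasDerivAt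
  have hexp := ((hs.mul_const b).const_add a).fun_neg.cexp
  refine (hexp.fun_mul hdet).congr_deriv ?_
  have htrace : (((M + (s : ℂ) • N).adjugate * N).trace) =
      ∑ k, ∑ j, (M + (s : ℂ) • N).adjugate j k * N k j := by
    rw [Finset.sum_comm]
    rfl
  simp only [htrace, _root_.sum_apply, _root_.smul_apply,
    ContinuousLinearMap.toSpanSingleton_apply, one_smul, smul_eq_mul]
  ring

theorem hasTemperateGrowth_trace_adjugate_add_smul_mul_sub {b : W → ℂ} {M N : W → Matrix ι ι ℂ}
    (hb : b.HasTemperateGrowth) (hM : ∀ i j, (fun z => M z i j).HasTemperateGrowth)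
    (hN : ∀ i j, (fun z => N z i j).HasTemperateGrowth) :
    HasTemperateGrowth fun q : ℝ × W =>
      ((M q.2 + (q.1 : ℂ) • N q.2).adjugate * N q.2).trace -
        b q.2 * (M q.2 + (q.1 : ℂ) • N q.2).det := by
  have hsnd {f : W → ℂ} (hf : f.HasTemperateGrowth) :
      HasTemperateGrowth fun q : ℝ × W => f q.2 :=
    hf.comp (ContinuousLinearMap.snd ℝ ℝ W).hasTemperateGrowth
  have hfst : HasTemperateGrowth fun q : ℝ × W => (q.1 : ℂ) :=
    Complex.hasTemperateGrowth_ofReal.comp (ContinuousLinearMap.fst ℝ ℝ W).hasTemperateGrowth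
  have hpath (i j : ι) : HasTemperateGrowth fun q : ℝ × W => (M q.2 + (q.1 : ℂ) • N q.2) i j :=
    (hsnd (hM i j)).fun_add (hfst.fun_mul (hsnd (hN i j)))
  exact (hasTemperateGrowth_trace_mul (hasTemperateGrowth_adjugate hpath) fun i j =>
    hsnd (hN i j)).fun_sub ((hsnd hb).fun_mul (hasTemperateGrowth_det hpath))

variable [FiniteDimensional ℝ W] [MeasurableSpace W] [BorelSpace W]
  (μ : Measure W) [μ.IsAddHaarMeasure]

theorem integral_exp_mul_det_dbarMatrix_eq_add {p : ι → W × W} {ζ C H : ι → W → ℂ}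
    (hζ : ∀ k, (ζ k).HasTemperateGrowth) (hζ_dbar : ∀ j k z, dbar (p j) (ζ k) z = 0)
    (hC : ∀ k, (C k).HasTemperateGrowth) (hH : ∀ k, (H k).HasTemperateGrowth) {c D : ℝ}
    (hc : 0 < c) (hdecay : ∀ s ∈ Icc (0 : ℝ) 1, ∀ z,
      c * ‖z‖ - D ≤ (∑ k, ζ k z * C k z + s * ∑ k, ζ k z * H k z).re) :
    ∫ z, Complex.exp (-∑ k, ζ k z * C k z) * (dbarMatrix p C z).det ∂μ =
      ∫ z, Complex.exp (-∑ k, ζ k z * (C k z + H k z)) *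
        (dbarMatrix p (fun k z => C k z + H k z) z).det ∂μ := by
  have hdiff {f : ι → W → ℂ} (hf : ∀ k, (f k).HasTemperateGrowth) (k : ι) :
      Differentiable ℝ (f k) := (hf k).1.differentiable (by simp)
  have hpath (s : ℝ) (k : ι) : HasTemperateGrowth fun z => C k z + s * H k z :=
    (hC k).fun_add ((HasTemperateGrowth.const _).fun_mul (hH k))
  have hpairing (s : ℝ) (z : W) : ∑ k, ζ k z * (C k z + s * H k z) =
      ∑ k, ζ k z * C k z + s * ∑ k, ζ k z * H k z := by
    simp only [mul_add, Finset.sum_add_distrib, Finset.mul_sum, mul_left_comm]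
  have hmatrix (s : ℝ) (z : W) := dbarMatrix_add_smul p (hdiff hC) (hdiff hH) s z
  have hQ := hasTemperateGrowth_sum_mul hζ hC
  have hb := hasTemperateGrowth_sum_mul hζ hH
  have hdensity := hasTemperateGrowth_trace_adjugate_add_smul_mul_sub hb
    (hasTemperateGrowth_dbarMatrix p hC) (hasTemperateGrowth_dbarMatrix p hH)
  have hint (s : ℝ) (hs : s ∈ Icc (0 : ℝ) 1) := integrable_exp_mul_of_hasTemperateGrowth μ
    (hasTemperateGrowth_sum_mul hζ (hpath s)).1.continuous
    (hasTemperateGrowth_det (hasTemperateGrowth_dbarMatrix p (hpath s))) hc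
    (D := D) (by simpa only [hpairing] using hdecay s hs)
  have hstokes (s : ℝ) (hs : s ∈ Icc (0 : ℝ) 1) := integral_exp_mul_trace_adjugate_sub_eq_zero
    hζ hζ_dbar (hpath s) hH μ hc (D := D) (by simpa only [hpairing] using hdecay s hs)
  obtain ⟨bound, hbound, hle⟩ := exists_integrable_bound_exp_mul μ hdensity hc D
  simp only [hpairing, hmatrix] at hint hstokes
  have hzero := integral_eq_integral_of_integral_deriv_eq_zero (hint 0 (by simp))
    (hint 1 (by simp)) hbound (fun s z => hasDerivAt_exp_mul_det _ _ _ _ s) ?_ ?_ hstokes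
  · have hone (z : W) := hpairing 1 z
    have hone' (z : W) := hmatrix 1 z
    simp only [Complex.ofReal_one, one_mul] at hone hone'
    simpa [hone, hone'] using hzero
  · exact (Complex.continuous_exp.comp ((hQ.1.continuous.comp continuous_snd).add
      ((Complex.continuous_ofReal.comp continuous_fst).mul
        (hb.1.continuous.comp continuous_snd))).neg).mul hdensity.1.continuous
  · intro s hs z
    refine le_trans ?_ (hle s hs z)
    rw [norm_mul, Complex.norm_exp, Complex.neg_re]
    gcongr
    linarith [hdecay s hs z]

theorem integral_exp_mul_det_dbarMatrix_eq_of_decay {p : ι → W × W} {ζ C G : ι → W → ℂ}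
    (hζ : ∀ k, (ζ k).HasTemperateGrowth) (hζ_dbar : ∀ j k z, dbar (p j) (ζ k) z = 0)
    (hC : ∀ k, (C k).HasTemperateGrowth) (hG : ∀ k, (G k).HasTemperateGrowth) {c D : ℝ}
    (hc : 0 < c) (hC_decay : ∀ z, c * ‖z‖ - D ≤ (∑ k, ζ k z * C k z).re)
    (hG_decay : ∀ z, c * ‖z‖ - D ≤ (∑ k, ζ k z * G k z).re) :
    ∫ z, Complex.exp (-∑ k, ζ k z * C k z) * (dbarMatrix p C z).det ∂μ =
      ∫ z, Complex.exp (-∑ k, ζ k z * G k z) * (dbarMatrix p G z).det ∂μ := by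
  have hdecay (s : ℝ) (hs : s ∈ Icc (0 : ℝ) 1) (z : W) :
      c * ‖z‖ - D ≤ (∑ k, ζ k z * C k z + s * ∑ k, ζ k z * (G k z - C k z)).re := by
    have hre : (∑ k, ζ k z * C k z + s * ∑ k, ζ k z * (G k z - C k z)).re =
        (1 - s) * (∑ k, ζ k z * C k z).re + s * (∑ k, ζ k z * G k z).re := by
      simp only [mul_sub, Finset.sum_sub_distrib, Complex.add_re, Complex.sub_re,
        Complex.re_ofReal_mul]
      ring
    rw [hre]
    nlinarith [hC_decay z, hG_decay z, hs.1, hs.2]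
  have h := integral_exp_mul_det_dbarMatrix_eq_add μ hζ hζ_dbar hC
    (fun k => (hG k).fun_sub (hC k)) hc hdecay
  simpa only [add_sub_cancel] using h

end Homotopy

section GaussianComparison

open Function

variable {ι : Type*}

/-- The `k`-th holomorphic coordinate `x_k + i y_k` on the complexification `ℝ^ι × ℝ^ι ≅ ℂ^ι`. -/
def holomorphicCoord (k : ι) (z : EuclideanSpace ℝ ι × EuclideanSpace ℝ ι) : ℂ :=
  (z.1 k : ℂ) + Complex.I * (z.2 k : ℂ)

/-- The extension `(x, y) ↦ U x - i U y` of a vector field `U` on `ℝ^ι` to `ℂ^ι`; for `U = id` it is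
complex conjugation. -/
def conjExtension (U : EuclideanSpace ℝ ι → EuclideanSpace ℝ ι) (k : ι)
    (z : EuclideanSpace ℝ ι × EuclideanSpace ℝ ι) : ℂ :=
  (U z.1 k : ℂ) - Complex.I * (U z.2 k : ℂ)

/-- The `j`-th real and imaginary coordinate directions, so that `dbar (coordDirections j)` is
`∂/∂x_j + i ∂/∂y_j`. -/
def coordDirections [DecidableEq ι] (j : ι) : (EuclideanSpace ℝ ι × EuclideanSpace ℝ ι) ×
    (EuclideanSpace ℝ ι × EuclideanSpace ℝ ι) :=
  ((EuclideanSpace.single j 1, 0), (0, EuclideanSpace.single j 1))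

theorem hasFDerivAt_coord_ofReal [Finite ι] {f : EuclideanSpace ℝ ι → EuclideanSpace ℝ ι} {x}
    (hf : DifferentiableAt ℝ f x) (k : ι) :
    HasFDerivAt (fun x => (f x k : ℂ))
      ((Complex.ofRealCLM.comp (EuclideanSpace.proj k)).comp (fderiv ℝ f x)) x := by
  have := Fintype.ofFinite ι
  exact (Complex.ofRealCLM.comp (EuclideanSpace.proj (𝕜 := ℝ) k)).hasFDerivAt.comp x hf.hasFDerivAt

variable [Fintype ι]

theorem hasTemperateGrowth_conjExtension {U : EuclideanSpace ℝ ι → EuclideanSpace ℝ ι}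
    (hU : U.HasTemperateGrowth) (k : ι) : (conjExtension U k).HasTemperateGrowth := by
  have hcoord : HasTemperateGrowth fun x => (U x k : ℂ) :=
    Complex.hasTemperateGrowth_ofReal.comp
      ((EuclideanSpace.proj (𝕜 := ℝ) k).hasTemperateGrowth.comp hU)
  exact (hcoord.comp (ContinuousLinearMap.fst ℝ _ _).hasTemperateGrowth).fun_sub
    ((HasTemperateGrowth.const _).fun_mul
      (hcoord.comp
        (ContinuousLinearMap.snd ℝ (EuclideanSpace ℝ ι) (EuclideanSpace ℝ ι)).hasTemperateGrowth))

theorem hasTemperateGrowth_holomorphicCoord (k : ι) :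
    (holomorphicCoord k).HasTemperateGrowth := by
  have hcoord : HasTemperateGrowth fun x : EuclideanSpace ℝ ι => (x k : ℂ) :=
    Complex.hasTemperateGrowth_ofReal.comp (EuclideanSpace.proj (𝕜 := ℝ) k).hasTemperateGrowth
  exact (hcoord.comp (ContinuousLinearMap.fst ℝ _ _).hasTemperateGrowth).fun_add
    ((HasTemperateGrowth.const _).fun_mul
      (hcoord.comp
        (ContinuousLinearMap.snd ℝ (EuclideanSpace ℝ ι) (EuclideanSpace ℝ ι)).hasTemperateGrowth))

theorem re_sum_holomorphicCoord_mul_conjExtension (U : EuclideanSpace ℝ ι → EuclideanSpace ℝ ι)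
    (z : EuclideanSpace ℝ ι × EuclideanSpace ℝ ι) :
    (∑ k, holomorphicCoord k z * conjExtension U k z).re = ⟪z.1, U z.1⟫ + ⟪z.2, U z.2⟫ := by
  rw [Complex.re_sum]
  simp only [holomorphicCoord, conjExtension, PiLp.inner_apply, ← Finset.sum_add_distrib]
  refine Finset.sum_congr rfl fun k _ => ?_
  simp
  ring

theorem sum_holomorphicCoord_mul_conjExtension_id
    (z : EuclideanSpace ℝ ι × EuclideanSpace ℝ ι) :
    ∑ k, holomorphicCoord k z * conjExtension id k z = ((‖z.1‖ ^ 2 + ‖z.2‖ ^ 2 : ℝ) : ℂ) := by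
  simp only [EuclideanSpace.real_norm_sq_eq, holomorphicCoord, conjExtension, id,
    ← Finset.sum_add_distrib]
  push_cast
  refine Finset.sum_congr rfl fun k _ => ?_
  linear_combination (-(z.2 k : ℂ) ^ 2) * Complex.I_mul_I

theorem norm_le_re_sum_holomorphicCoord_mul_conjExtension
    {U : EuclideanSpace ℝ ι → EuclideanSpace ℝ ι} {c D : ℝ} (hc : 0 ≤ c)
    (hU : ∀ x, c * ‖x‖ - D ≤ ⟪x, U x⟫) (z : EuclideanSpace ℝ ι × EuclideanSpace ℝ ι) :
    c * ‖z‖ - 2 * D ≤ (∑ k, holomorphicCoord k z * conjExtension U k z).re := by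
  have hnorm : ‖z‖ ≤ ‖z.1‖ + ‖z.2‖ := max_le (by simp) (by simp)
  rw [re_sum_holomorphicCoord_mul_conjExtension]
  nlinarith [hU z.1, hU z.2]

variable [DecidableEq ι]

theorem dbar_coordDirections_holomorphicCoord (j k : ι)
    (z : EuclideanSpace ℝ ι × EuclideanSpace ℝ ι) :
    dbar (coordDirections j) (holomorphicCoord k) z = 0 := by
  have h (x : EuclideanSpace ℝ ι) := hasFDerivAt_coord_ofReal (differentiableAt_id (x := x)) k
  have hcoord := ((h z.1).comp z hasFDerivAt_fst).fun_add
    (((h z.2).comp z hasFDerivAt_snd).const_mul Complex.I)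
  have hfderiv : fderiv ℝ (holomorphicCoord k) z = _ := hcoord.fderiv
  simp [dbar, coordDirections, hfderiv, ← mul_assoc]

theorem dbarMatrix_conjExtension {U : EuclideanSpace ℝ ι → EuclideanSpace ℝ ι}
    (hU : Differentiable ℝ U) (z : EuclideanSpace ℝ ι × EuclideanSpace ℝ ι) :
    dbarMatrix coordDirections (conjExtension U) z =
      (LinearMap.toMatrix (EuclideanSpace.basisFun ι ℝ).toBasis
        (EuclideanSpace.basisFun ι ℝ).toBasis
        (fderiv ℝ U z.1 + fderiv ℝ U z.2 : _ →L[ℝ] _)).map Complex.ofRealHom := by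
  ext k j
  have hcoord := ((hasFDerivAt_coord_ofReal (hU z.1) k).comp z hasFDerivAt_fst).fun_sub
    (((hasFDerivAt_coord_ofReal (hU z.2) k).comp z hasFDerivAt_snd).const_mul Complex.I)
  have hfderiv : fderiv ℝ (conjExtension U k) z = _ := hcoord.fderiv
  simp [dbarMatrix, dbar, coordDirections, hfderiv, ← mul_assoc, LinearMap.toMatrix_apply]

theorem det_dbarMatrix_conjExtension {U : EuclideanSpace ℝ ι → EuclideanSpace ℝ ι}
    (hU : Differentiable ℝ U) (z : EuclideanSpace ℝ ι × EuclideanSpace ℝ ι) :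
    (dbarMatrix coordDirections (conjExtension U) z).det =
      ((fderiv ℝ U z.1 + fderiv ℝ U z.2).det : ℝ) := by
  rw [dbarMatrix_conjExtension hU, ← RingHom.mapMatrix_apply, ← RingHom.map_det,
    LinearMap.det_toMatrix]
  rfl

theorem integral_exp_mul_det_dbarMatrix_conjExtension_id :
    ∫ z : EuclideanSpace ℝ ι × EuclideanSpace ℝ ι,
      Complex.exp (-∑ k, holomorphicCoord k z * conjExtension id k z) *
      (dbarMatrix coordDirections (conjExtension id) z).det =
        ((2 * Real.pi) ^ Fintype.card ι : ℝ) := by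
  have hdet (z : EuclideanSpace ℝ ι × EuclideanSpace ℝ ι) :
      (fderiv ℝ id z.1 + fderiv ℝ id z.2).det = 2 ^ Fintype.card ι := by
    rw [fderiv_id, fderiv_id, ← two_smul ℝ, ContinuousLinearMap.det,
      ContinuousLinearMap.toLinearMap_smul, LinearMap.det_smul]
    simp
  have hexp (z : EuclideanSpace ℝ ι × EuclideanSpace ℝ ι) :
      Complex.exp (-∑ k, holomorphicCoord k z * conjExtension id k z) =
        (Real.exp (-1 * ‖z.1‖ ^ 2) * Real.exp (-1 * ‖z.2‖ ^ 2) : ℝ) := by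
    rw [sum_holomorphicCoord_mul_conjExtension_id, ← Real.exp_add, ← mul_add, neg_one_mul]
    push_cast
    rfl
  have hgauss : ∫ z : EuclideanSpace ℝ ι × EuclideanSpace ℝ ι,
      Real.exp (-1 * ‖z.1‖ ^ 2) * Real.exp (-1 * ‖z.2‖ ^ 2) = Real.pi ^ Fintype.card ι := by
    rw [Measure.volume_eq_prod, integral_prod_mul (fun x : EuclideanSpace ℝ ι =>
      Real.exp (-1 * ‖x‖ ^ 2)) (fun x => Real.exp (-1 * ‖x‖ ^ 2)),
      GaussianFourier.integral_rexp_neg_mul_sq_norm one_pos, ← Real.rpow_add (by positivity)]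
    simp
  simp only [det_dbarMatrix_conjExtension differentiable_id, hexp, hdet, ← Complex.ofReal_mul]
  rw [integral_complex_ofReal, integral_mul_const, hgauss, ← mul_pow, mul_comm]

omit [DecidableEq ι] in
theorem ofReal_two_pi_pow_le_lintegral_exp_mul_det_fderiv
    {U : EuclideanSpace ℝ ι → EuclideanSpace ℝ ι} (hU : U.HasTemperateGrowth) {c D : ℝ}
    (hc : 0 < c) (hdecay : ∀ x, c * ‖x‖ - D ≤ ⟪x, U x⟫) :
    ENNReal.ofReal ((2 * Real.pi) ^ Fintype.card ι) ≤
      ∫⁻ z : EuclideanSpace ℝ ι × EuclideanSpace ℝ ι,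
        ENNReal.ofReal (Real.exp (-(⟪z.1, U z.1⟫ + ⟪z.2, U z.2⟫))) *
          ENNReal.ofReal |(fderiv ℝ U z.1 + fderiv ℝ U z.2).det| := by
  classical
  have hU_decay (x : EuclideanSpace ℝ ι) : c * ‖x‖ - max D (c ^ 2) ≤ ⟪x, U x⟫ := by
    linarith [hdecay x, le_max_left D (c ^ 2)]
  have hid_decay (x : EuclideanSpace ℝ ι) : c * ‖x‖ - max D (c ^ 2) ≤ ⟪x, id x⟫ := by
    rw [id, real_inner_self_eq_norm_sq]
    nlinarith [le_max_right D (c ^ 2), sq_nonneg (2 * ‖x‖ - c)]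
  have : (volume : Measure (EuclideanSpace ℝ ι × EuclideanSpace ℝ ι)).IsAddHaarMeasure :=
    Measure.prod.instIsAddHaarMeasure _ _
  have heq := integral_exp_mul_det_dbarMatrix_eq_of_decay
    (volume : Measure (EuclideanSpace ℝ ι × EuclideanSpace ℝ ι))
    hasTemperateGrowth_holomorphicCoord dbar_coordDirections_holomorphicCoord
    (hasTemperateGrowth_conjExtension hU) (hasTemperateGrowth_conjExtension .id) hc
    (norm_le_re_sum_holomorphicCoord_mul_conjExtension hc.le hU_decay)
    (norm_le_re_sum_holomorphicCoord_mul_conjExtension hc.le hid_decay)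
  rw [integral_exp_mul_det_dbarMatrix_conjExtension_id] at heq
  calc ENNReal.ofReal ((2 * Real.pi) ^ Fintype.card ι)
      = ‖(((2 * Real.pi) ^ Fintype.card ι : ℝ) : ℂ)‖ₑ := by
        rw [← ofReal_norm, Complex.norm_real, Real.norm_of_nonneg (by positivity)]
    _ ≤ ∫⁻ z, ‖Complex.exp (-∑ k, holomorphicCoord k z * conjExtension U k z) *
          (dbarMatrix coordDirections (conjExtension U) z).det‖ₑ := by
        rw [← heq]
        exact enorm_integral_le_lintegral_enorm _
    _ = _ := by
        refine lintegral_congr fun z => ?_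
        rw [enorm_mul, ← ofReal_norm, ← ofReal_norm, Complex.norm_exp,
          Complex.neg_re, re_sum_holomorphicCoord_mul_conjExtension,
          det_dbarMatrix_conjExtension (hU.1.differentiable (by simp)), Complex.norm_real,
          Real.norm_eq_abs]

end GaussianComparison

section Tilting

open Function

variable {E F : Type*} [NormedAddCommGroup E] [InnerProductSpace ℝ E] [MeasurableSpace E]
  [NormedAddCommGroup F]

/-- The exponential tilt of `ν` by `x`: the probability measure with density proportional to
`exp ⟪x, ·⟫` with respect to `ν`. -/
def expTilt (ν : Measure E) (x : E) : Measure E := ν.tilted fun y => ⟪x, y⟫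

/-- The mean of the exponential tilt of `ν` by `x`, i.e. the gradient at `x` of the logarithmic
Laplace transform of `ν`. -/
def tiltedMean (ν : Measure E) (x : E) : E := ∫ y, y ∂expTilt ν x

variable {L : Set E} {ν : Measure E}

theorem ae_expTilt_mem (hν : ∀ᵐ y ∂ν, y ∈ L) (x : E) : ∀ᵐ y ∂expTilt ν x, y ∈ L :=
  (tilted_absolutelyContinuous _ _).ae_le hν

theorem integral_expTilt_eq [NormedSpace ℝ F] (x : E) (g : E → F) :
    ∫ y, g y ∂expTilt ν x =
      (∫ y, Real.exp ⟪x, y⟫ ∂ν)⁻¹ • ∫ y, Real.exp ⟪x, y⟫ • g y ∂ν := by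
  rw [expTilt, integral_tilted, ← integral_smul]
  simp only [div_eq_inv_mul, mul_smul]

variable [FiniteDimensional ℝ E] [BorelSpace E] [IsFiniteMeasure ν]

theorem integrable_of_continuous_of_ae_mem_compact (hL : IsCompact L) (hν : ∀ᵐ y ∂ν, y ∈ L)
    {g : E → F} (hg : Continuous g) : Integrable g ν := by
  obtain ⟨C, hC⟩ := hL.exists_bound_of_continuousOn hg.continuousOn
  exact .of_bound hg.aestronglyMeasurable C (hν.mono fun y hy => hC y hy)

variable (hL : IsCompact L) (hν : ∀ᵐ y ∂ν, y ∈ L)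

include hL hν in
theorem integrable_exp_inner (x : E) : Integrable (fun y => Real.exp ⟪x, y⟫) ν :=
  integrable_of_continuous_of_ae_mem_compact hL hν (g := fun y => Real.exp ⟪x, y⟫) (by fun_prop)

include hL hν in
theorem isProbabilityMeasure_expTilt [NeZero ν] (x : E) : IsProbabilityMeasure (expTilt ν x) :=
  isProbabilityMeasure_tilted (integrable_exp_inner hL hν x)

include hL hν in
theorem integral_exp_inner_pos [NeZero ν] (x : E) : 0 < ∫ y, Real.exp ⟪x, y⟫ ∂ν :=
  integral_exp_pos (integrable_exp_inner hL hν x)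

include hL hν in
theorem integrable_expTilt_of_continuous [NeZero ν] (x : E) {g : E → F} (hg : Continuous g) :
    Integrable g (expTilt ν x) :=
  have := isProbabilityMeasure_expTilt hL hν x
  integrable_of_continuous_of_ae_mem_compact hL (ae_expTilt_mem hν x) hg

variable [NormedSpace ℝ F]

include hL hν in
theorem norm_integral_expTilt_le [NeZero ν] {g : E → F} {C : ℝ} (hg : ∀ y ∈ L, ‖g y‖ ≤ C)
    (x : E) : ‖∫ y, g y ∂expTilt ν x‖ ≤ C := by
  have := isProbabilityMeasure_expTilt hL hν x
  simpa using norm_integral_le_of_norm_le_const ((ae_expTilt_mem hν x).mono hg)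

include hL hν in
theorem tiltedMean_mem [NeZero ν] (hconv : Convex ℝ L) (x : E) : tiltedMean ν x ∈ L :=
  have := isProbabilityMeasure_expTilt hL hν x
  hconv.integral_mem hL.isClosed (ae_expTilt_mem hν x)
    (integrable_expTilt_of_continuous hL hν x continuous_id)

include hL hν in
theorem inner_tiltedMean [NeZero ν] (v x : E) :
    ⟪v, tiltedMean ν x⟫ = ∫ y, ⟪v, y⟫ ∂expTilt ν x :=
  (integral_inner (integrable_expTilt_of_continuous hL hν x continuous_id) v).symm

include hL hν in
theorem hasFDerivAt_integral_exp_inner_smul {g : E → F} (hg : Continuous g) (x : E) :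
    HasFDerivAt (fun x => ∫ y, Real.exp ⟪x, y⟫ • g y ∂ν)
      (∫ y, Real.exp ⟪x, y⟫ • (innerSL ℝ y).smulRight (g y) ∂ν) x := by
  obtain ⟨R, hR⟩ := hL.isBounded.exists_norm_le
  obtain ⟨C, hC⟩ := hL.exists_bound_of_continuousOn hg.continuousOn
  have hcont (x : E) : Continuous fun y => Real.exp ⟪x, y⟫ • g y := by fun_prop
  have hcont' : Continuous fun y => Real.exp ⟪x, y⟫ • (innerSL ℝ y).smulRight (g y) := by fun_prop
  refine hasFDerivAt_integral_of_dominated_of_fderiv_le (𝕜 := ℝ) (s := ball x 1)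
    (F' := fun x y => Real.exp ⟪x, y⟫ • (innerSL ℝ y).smulRight (g y))
    (bound := fun _ => Real.exp ((‖x‖ + 1) * R) * (R * C)) (ball_mem_nhds x one_pos)
    (.of_forall fun x => (hcont x).aestronglyMeasurable)
    (integrable_of_continuous_of_ae_mem_compact hL hν (hcont x))
    hcont'.aestronglyMeasurable ?_ (integrable_const _) ?_
  · filter_upwards [hν] with y hy z hz
    have hz_norm : ‖z‖ ≤ ‖x‖ + 1 := (norm_lt_of_mem_ball hz).le
    have hR₀ : 0 ≤ R := (norm_nonneg y).trans (hR y hy)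
    have hinner : ⟪z, y⟫ ≤ (‖x‖ + 1) * R :=
      (real_inner_le_norm z y).trans (by gcongr; exact hR y hy)
    rw [norm_smul, Real.norm_of_nonneg (Real.exp_pos _).le,
      ContinuousLinearMap.norm_smulRight_apply, innerSL_apply_norm]
    gcongr
    exacts [hR y hy, hC y hy]
  · refine .of_forall fun y z _ => ?_
    have hinner : HasFDerivAt (fun z => ⟪z, y⟫) (innerSL ℝ y) z := by
      simp only [real_inner_comm y]
      exact (innerSL ℝ y).hasFDerivAt
    refine (hinner.exp.smul_const (g y)).congr_fderiv ?_
    ext v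
    simp [mul_smul]

include hL hν in
theorem integral_exp_inner_smul_eq [NeZero ν] (x : E) (g : E → F) :
    ∫ y, Real.exp ⟪x, y⟫ • g y ∂ν = (∫ y, Real.exp ⟪x, y⟫ ∂ν) • ∫ y, g y ∂expTilt ν x := by
  rw [integral_expTilt_eq, smul_inv_smul₀ (integral_exp_inner_pos hL hν x).ne']

include hL hν in
theorem integral_innerSL_expTilt [NeZero ν] (x : E) :
    ∫ y, innerSL ℝ y ∂expTilt ν x = innerSL ℝ (tiltedMean ν x) :=
  (innerSL ℝ).integral_comp_comm (integrable_expTilt_of_continuous hL hν x continuous_id)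

include hL hν in
theorem hasFDerivAt_integral_exp_inner [NeZero ν] (x : E) :
    HasFDerivAt (fun x => ∫ y, Real.exp ⟪x, y⟫ ∂ν)
      ((∫ y, Real.exp ⟪x, y⟫ ∂ν) • innerSL ℝ (tiltedMean ν x)) x := by
  have h := hasFDerivAt_integral_exp_inner_smul hL hν (continuous_const (y := (1 : ℝ))) x
  have hsmulRight (y : E) : (innerSL ℝ y).smulRight (1 : ℝ) = innerSL ℝ y := by ext; simp
  simpa only [smul_eq_mul, mul_one, hsmulRight, integral_exp_inner_smul_eq hL hν,
    integral_innerSL_expTilt hL hν] using h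

include hL hν in
theorem hasFDerivAt_integral_expTilt [NeZero ν] {g : E → F} (hg : Continuous g) (x : E) :
    HasFDerivAt (fun x => ∫ y, g y ∂expTilt ν x)
      (∫ y, (innerSL ℝ y).smulRight (g y) ∂expTilt ν x -
        (innerSL ℝ (tiltedMean ν x)).smulRight (∫ y, g y ∂expTilt ν x)) x := by
  have hpos := integral_exp_inner_pos hL hν x
  have hinv := (hasDerivAt_inv hpos.ne').comp_hasFDerivAt x
    (hasFDerivAt_integral_exp_inner hL hν x)
  simp_rw [integral_expTilt_eq (g := g)]
  refine (hinv.smul (hasFDerivAt_integral_exp_inner_smul hL hν hg x)).congr_fderiv ?_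
  rw [integral_exp_inner_smul_eq hL hν x, integral_exp_inner_smul_eq hL hν x g]
  ext v
  simp only [Function.comp_apply, smul_smul, _root_.add_apply, _root_.sub_apply,
    _root_.smul_apply, ContinuousLinearMap.smulRight_apply, smul_eq_mul]
  rw [inv_mul_cancel₀ hpos.ne', one_smul, mul_one, sub_eq_add_neg, ← neg_smul]
  congr 2
  field_simp

end Tilting

section TiltedSmooth

theorem exists_norm_iteratedFDeriv_bilinear_le {D E F G : Type*} [NormedAddCommGroup D]
    [NormedSpace ℝ D] [NormedAddCommGroup E] [NormedSpace ℝ E] [NormedAddCommGroup F]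
    [NormedSpace ℝ F] [NormedAddCommGroup G] [NormedSpace ℝ G] (B : E →L[ℝ] F →L[ℝ] G) {n : ℕ}
    {f : D → E} {g : D → F} (hf : ContDiff ℝ n f) (hg : ContDiff ℝ n g)
    (hf_bdd : ∀ m ≤ n, ∃ C, ∀ x, ‖iteratedFDeriv ℝ m f x‖ ≤ C)
    (hg_bdd : ∀ m ≤ n, ∃ C, ∀ x, ‖iteratedFDeriv ℝ m g x‖ ≤ C) :
    ∃ C, ∀ x, ‖iteratedFDeriv ℝ n (fun x => B (f x) (g x)) x‖ ≤ C := by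
  choose! Cf hCf using hf_bdd
  choose! Cg hCg using hg_bdd
  refine ⟨‖B‖ * ∑ i ∈ Finset.range (n + 1), n.choose i * Cf i * Cg (n - i), fun x =>
    (B.norm_iteratedFDeriv_le_of_bilinear hf hg x le_rfl).trans ?_⟩
  gcongr with i hi
  · exact mul_nonneg (by positivity) ((norm_nonneg _).trans (hCf i (by grind) x))
  · exact hCf i (by grind) x
  · exact hCg (n - i) (by grind) x

universe u

variable {E : Type u} [NormedAddCommGroup E] [InnerProductSpace ℝ E] [FiniteDimensional ℝ E]
  [MeasurableSpace E] [BorelSpace E] {L : Set E} {ν : Measure E} [IsFiniteMeasure ν] [NeZero ν]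
  (hL : IsCompact L) (hν : ∀ᵐ y ∂ν, y ∈ L)

include hL hν in
theorem fderiv_integral_expTilt {F : Type*} [NormedAddCommGroup F] [NormedSpace ℝ F] {g : E → F}
    (hg : Continuous g) :
    fderiv ℝ (fun x => ∫ y, g y ∂expTilt ν x) = fun x =>
      ∫ y, (innerSL ℝ y).smulRight (g y) ∂expTilt ν x -
        ContinuousLinearMap.smulRightL ℝ E F (∫ y, innerSL ℝ y ∂expTilt ν x)
          (∫ y, g y ∂expTilt ν x) := by
  funext x
  rw [(hasFDerivAt_integral_expTilt hL hν hg x).fderiv, integral_innerSL_expTilt hL hν]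
  rfl

include hL hν in
theorem contDiff_integral_expTilt (n : ℕ) : ∀ {F : Type u} [NormedAddCommGroup F]
    [NormedSpace ℝ F] {g : E → F}, Continuous g → ContDiff ℝ n fun x => ∫ y, g y ∂expTilt ν x := by
  induction n with
  | zero =>
    intro F _ _ g hg
    exact contDiff_zero.2 (continuous_iff_continuousAt.2 fun x =>
      (hasFDerivAt_integral_expTilt hL hν hg x).continuousAt)
  | succ n ih =>
    intro F _ _ g hg
    rw [Nat.cast_succ]
    refine contDiff_succ_iff_fderiv.2 ⟨fun x =>
      (hasFDerivAt_integral_expTilt hL hν hg x).differentiableAt, by simp, ?_⟩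
    rw [fderiv_integral_expTilt hL hν hg]
    have hcont : Continuous fun y => (innerSL ℝ y).smulRight (g y) := by fun_prop
    exact (ih hcont).sub ((ContinuousLinearMap.smulRightL ℝ E F).isBoundedBilinearMap.contDiff.comp₂
      (ih (innerSL ℝ).continuous) (ih hg))

include hL hν in
theorem exists_norm_iteratedFDeriv_integral_expTilt_le (n : ℕ) : ∀ {F : Type u}
    [NormedAddCommGroup F] [NormedSpace ℝ F] {g : E → F}, Continuous g →
      ∃ C, ∀ x, ‖iteratedFDeriv ℝ n (fun x => ∫ y, g y ∂expTilt ν x) x‖ ≤ C := by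
  induction n using Nat.strong_induction_on with
  | _ n ih =>
  intro F _ _ g hg
  obtain _ | n := n
  · obtain ⟨C, hC⟩ := hL.exists_bound_of_continuousOn hg.continuousOn
    exact ⟨C, fun x => by simpa using norm_integral_expTilt_le hL hν hC x⟩
  · have hcont : Continuous fun y => (innerSL ℝ y).smulRight (g y) := by fun_prop
    have hinner_smooth := contDiff_integral_expTilt hL hν n (innerSL ℝ (E := E)).continuous
    have hg_smooth := contDiff_integral_expTilt hL hν n hg
    have hprod_smooth : ContDiff ℝ n fun x => ContinuousLinearMap.smulRightL ℝ E F
        (∫ y, innerSL ℝ y ∂expTilt ν x) (∫ y, g y ∂expTilt ν x) := by fun_prop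
    obtain ⟨C, hC⟩ := ih n n.lt_succ_self hcont
    obtain ⟨C', hC'⟩ := exists_norm_iteratedFDeriv_bilinear_le
      (ContinuousLinearMap.smulRightL ℝ E F) hinner_smooth hg_smooth
      (fun m hm => ih m (Nat.lt_succ_of_le hm) (innerSL ℝ).continuous)
      (fun m hm => ih m (Nat.lt_succ_of_le hm) hg)
    refine ⟨C + C', fun x => ?_⟩
    rw [← norm_iteratedFDeriv_fderiv, fderiv_integral_expTilt hL hν hg,
      fun_iteratedFDeriv_sub (contDiff_integral_expTilt hL hν n hcont) hprod_smooth]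
    exact (norm_sub_le _ _).trans (add_le_add (hC x) (hC' x))

include hL hν in
theorem hasTemperateGrowth_tiltedMean : (tiltedMean ν).HasTemperateGrowth :=
  ⟨contDiff_infty.2 fun n => contDiff_integral_expTilt hL hν n continuous_id, fun n => by
    obtain ⟨C, hC⟩ := exists_norm_iteratedFDeriv_integral_expTilt_le hL hν n continuous_id
    exact ⟨0, C, fun x => by simpa using! hC x⟩⟩

end TiltedSmooth

section TiltedCovariance

variable {E : Type*} [NormedAddCommGroup E] [InnerProductSpace ℝ E] [FiniteDimensional ℝ E]
  [MeasurableSpace E] [BorelSpace E] {L : Set E} {ν : Measure E} [IsFiniteMeasure ν] [NeZero ν]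
  (hL : IsCompact L) (hν : ∀ᵐ y ∂ν, y ∈ L)

include hL hν in
theorem differentiable_tiltedMean : Differentiable ℝ (tiltedMean ν) := fun x =>
  (hasFDerivAt_integral_expTilt hL hν continuous_id x).differentiableAt

include hL hν in
theorem inner_fderiv_tiltedMean (x u v : E) :
    ⟪u, fderiv ℝ (tiltedMean ν) x v⟫ =
      ∫ y, ⟪u, y - tiltedMean ν x⟫ * ⟪v, y - tiltedMean ν x⟫ ∂expTilt ν x := by
  have := isProbabilityMeasure_expTilt hL hν x
  have hint {g : E → ℝ} (hg : Continuous g) : Integrable g (expTilt ν x) :=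
    integrable_expTilt_of_continuous hL hν x hg
  have hfderiv : fderiv ℝ (tiltedMean ν) x = _ :=
    (hasFDerivAt_integral_expTilt hL hν continuous_id x).fderiv
  have hmoment : ⟪u, (∫ y, (innerSL ℝ y).smulRight y ∂expTilt ν x) v⟫ =
      ∫ y, ⟪u, y⟫ * ⟪v, y⟫ ∂expTilt ν x := by
    have hcont : Continuous fun y : E => (innerSL ℝ y).smulRight y := by fun_prop
    have hcont' : Continuous fun y : E => (innerSL ℝ y).smulRight y v := by fun_prop
    rw [ContinuousLinearMap.integral_apply (integrable_expTilt_of_continuous hL hν x hcont),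
      ← integral_inner (integrable_expTilt_of_continuous hL hν x hcont')]
    simp [inner_smul_right, mul_comm, real_inner_comm]
  have hexpand (y : E) : ⟪u, y - tiltedMean ν x⟫ * ⟪v, y - tiltedMean ν x⟫ =
      ⟪u, y⟫ * ⟪v, y⟫ - ⟪v, tiltedMean ν x⟫ * ⟪u, y⟫ - ⟪u, tiltedMean ν x⟫ * ⟪v, y⟫ +
        ⟪u, tiltedMean ν x⟫ * ⟪v, tiltedMean ν x⟫ := by
    simp only [inner_sub_right]
    ring
  simp_rw [hexpand]
  rw [integral_add (hint (by fun_prop)) (hint (by fun_prop)),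
    integral_sub (hint (by fun_prop)) (hint (by fun_prop)),
    integral_sub (hint (by fun_prop)) (hint (by fun_prop)), integral_const_mul,
    integral_const_mul, ← inner_tiltedMean hL hν, ← inner_tiltedMean hL hν, hfderiv,
    sub_apply, inner_sub_right]
  simp only [id, hmoment, ← tiltedMean.eq_def, ContinuousLinearMap.smulRight_apply,
    innerSL_apply_apply, inner_smul_right, integral_const, probReal_univ, one_smul]
  rw [real_inner_comm v]
  ring

include hL hν in
theorem isSymmetric_fderiv_tiltedMean (x : E) :
    (fderiv ℝ (tiltedMean ν) x : E →ₗ[ℝ] E).IsSymmetric := fun u v => by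
  rw [real_inner_comm]
  simp only [ContinuousLinearMap.coe_coe, inner_fderiv_tiltedMean hL hν, mul_comm]

theorem addHaar_setOf_inner_sub_eq_zero (μ : Measure E) [μ.IsAddHaarMeasure] {v : E} (hv : v ≠ 0)
    (m : E) : μ {y | ⟪v, y - m⟫ = 0} = 0 := by
  refine measure_mono_null (fun y hy => ?_) (Measure.addHaar_affineSubspace μ
    (.mk' m (ℝ ∙ v)ᗮ) fun h => hv ?_)
  · rw [SetLike.mem_coe, AffineSubspace.mem_mk', vsub_eq_sub,
      Submodule.mem_orthogonal_singleton_iff_inner_right]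
    exact hy
  · have hdir := congrArg AffineSubspace.direction h
    rw [AffineSubspace.direction_mk', AffineSubspace.direction_top,
      Submodule.orthogonal_eq_top_iff, Submodule.span_singleton_eq_bot] at hdir
    exact hdir

include hL hν in
theorem inner_fderiv_tiltedMean_pos {μ : Measure E} [μ.IsAddHaarMeasure] (hνμ : ν ≪ μ) (x : E)
    {v : E} (hv : v ≠ 0) : 0 < ⟪v, fderiv ℝ (tiltedMean ν) x v⟫ := by
  have := isProbabilityMeasure_expTilt hL hν x
  rw [inner_fderiv_tiltedMean hL hν]
  have hnonneg (y : E) : 0 ≤ ⟪v, y - tiltedMean ν x⟫ * ⟪v, y - tiltedMean ν x⟫ :=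
    mul_self_nonneg _
  refine (integral_nonneg hnonneg).lt_of_ne' fun hzero => ?_
  rw [integral_eq_zero_iff_of_nonneg hnonneg
    (integrable_expTilt_of_continuous hL hν x (by fun_prop))] at hzero
  have hnull : ∀ᵐ y ∂expTilt ν x, ⟪v, y - tiltedMean ν x⟫ ≠ 0 :=
    ((tilted_absolutelyContinuous _ _).trans hνμ).ae_le
      (measure_eq_zero_iff_ae_notMem.1 (addHaar_setOf_inner_sub_eq_zero μ hv (tiltedMean ν x)))
  obtain ⟨y, hy, hy'⟩ := (hzero.and hnull).exists
  exact hy' (mul_self_eq_zero.1 hy)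

end TiltedCovariance

section ChangeOfVariables

variable {E : Type*} [NormedAddCommGroup E] [InnerProductSpace ℝ E] {f : E → E}

theorem injective_of_inner_fderiv_pos (hf : Differentiable ℝ f)
    (hpos : ∀ x v, v ≠ 0 → 0 < ⟪v, fderiv ℝ f x v⟫) : Function.Injective f := by
  intro a b hab
  by_contra hne
  have hv : b - a ≠ 0 := sub_ne_zero.2 (Ne.symm hne)
  have hderiv (t : ℝ) : HasDerivAt (fun t : ℝ => ⟪b - a, f (AffineMap.lineMap a b t)⟫)
      ⟪b - a, fderiv ℝ f (AffineMap.lineMap a b t) (b - a)⟫ t :=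
    (innerSL ℝ (b - a)).hasFDerivAt.comp_hasDerivAt t
      ((hf _).hasFDerivAt.comp_hasDerivAt t AffineMap.hasDerivAt_lineMap)
  have hmono : StrictMono fun t : ℝ => ⟪b - a, f (AffineMap.lineMap a b t)⟫ :=
    strictMono_of_deriv_pos fun t => (hderiv t).deriv ▸ hpos _ _ hv
  simpa [hab] using hmono zero_lt_one

theorem lintegral_abs_det_fderiv_le [FiniteDimensional ℝ E] [MeasurableSpace E] [BorelSpace E]
    (μ : Measure E) [μ.IsAddHaarMeasure] (hf : Differentiable ℝ f)
    (hpos : ∀ x v, v ≠ 0 → 0 < ⟪v, fderiv ℝ f x v⟫) {S : Set E} (hS : ∀ x, f x ∈ S) :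
    ∫⁻ x, ENNReal.ofReal |(fderiv ℝ f x).det| ∂μ ≤ μ S := by
  have himage := lintegral_abs_det_fderiv_eq_addHaar_image μ MeasurableSet.univ
    (fun x _ => (hf x).hasFDerivAt.hasFDerivWithinAt) (injective_of_inner_fderiv_pos hf hpos).injOn
  rw [Measure.restrict_univ] at himage
  rw [himage]
  exact measure_mono (image_subset_iff.2 fun x _ => hS x)

end ChangeOfVariables

section SupportFunction

variable {E : Type*} [NormedAddCommGroup E] [InnerProductSpace ℝ E] {L : Set E}

/-- The support function of `L`. It is only meaningful for nonempty bounded `L`: otherwise the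
supremum may be taken over an empty or unbounded set. -/
def supportFunction (L : Set E) (x : E) : ℝ := sSup ((fun y => ⟪x, y⟫) '' L)

theorem exists_supportFunction_eq_inner (hL : IsCompact L) (hne : L.Nonempty) (x : E) :
    ∃ y ∈ L, supportFunction L x = ⟪x, y⟫ := by
  obtain ⟨y, hy, h⟩ := (hL.image (f := fun y => ⟪x, y⟫) (by fun_prop)).sSup_mem (hne.image _)
  exact ⟨y, hy, h.symm⟩

theorem inner_le_supportFunction (hL : IsCompact L) (x : E) {y : E} (hy : y ∈ L) :
    ⟪x, y⟫ ≤ supportFunction L x :=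
  le_csSup (hL.image (f := fun y => ⟪x, y⟫) (by fun_prop)).bddAbove ⟨y, hy, rfl⟩

theorem supportFunction_le_iff (hL : IsCompact L) (hne : L.Nonempty) {x : E} {t : ℝ} :
    supportFunction L x ≤ t ↔ ∀ y ∈ L, ⟪x, y⟫ ≤ t := by
  refine ⟨fun h y hy => (inner_le_supportFunction hL x hy).trans h, fun h => ?_⟩
  obtain ⟨y, hy, hxy⟩ := exists_supportFunction_eq_inner hL hne x
  exact hxy ▸ h y hy

theorem supportFunction_nonneg (hL : IsCompact L) (h0 : 0 ∈ L) (x : E) :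
    0 ≤ supportFunction L x := by
  simpa using inner_le_supportFunction hL x h0

theorem supportFunction_add_le (hL : IsCompact L) (hne : L.Nonempty) (x y : E) :
    supportFunction L (x + y) ≤ supportFunction L x + supportFunction L y :=
  (supportFunction_le_iff hL hne).2 fun z hz => by
    rw [inner_add_left]
    exact add_le_add (inner_le_supportFunction hL x hz) (inner_le_supportFunction hL y hz)

theorem measurable_supportFunction [MeasurableSpace E] [BorelSpace E] (hL : IsCompact L)
    (hne : L.Nonempty) : Measurable (supportFunction L) := by
  refine measurable_of_Iic fun t => IsClosed.measurableSet ?_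
  have hpreimage : supportFunction L ⁻¹' Iic t = ⋂ y ∈ L, {x | ⟪x, y⟫ ≤ t} := by
    ext x
    simp [supportFunction_le_iff hL hne]
  rw [hpreimage]
  exact isClosed_biInter fun y _ => isClosed_le (by fun_prop) continuous_const

theorem exists_mem_inner_eq_mul_norm (h0 : 0 ∈ interior L) :
    ∃ r > 0, ∀ x, ∃ y ∈ L, ⟪x, y⟫ = r * ‖x‖ := by
  obtain ⟨r, hr, hball⟩ := nhds_basis_closedBall.mem_iff.1 (mem_interior_iff_mem_nhds.1 h0)
  refine ⟨r, hr, fun x => ?_⟩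
  obtain rfl | hx := eq_or_ne x 0
  · exact ⟨0, interior_subset h0, by simp⟩
  refine ⟨(r / ‖x‖) • x, hball ?_, ?_⟩
  · simp [norm_smul, div_mul_cancel₀ _ (norm_ne_zero_iff.2 hx), abs_of_pos hr]
  · rw [inner_smul_right, real_inner_self_eq_norm_sq]
    field_simp

theorem exists_mul_norm_le_supportFunction (hL : IsCompact L) (h0 : 0 ∈ interior L) :
    ∃ r > 0, ∀ x, r * ‖x‖ ≤ supportFunction L x := by
  obtain ⟨r, hr, hinner⟩ := exists_mem_inner_eq_mul_norm h0
  refine ⟨r, hr, fun x => ?_⟩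
  obtain ⟨y, hy, hxy⟩ := hinner x
  exact hxy ▸ inner_le_supportFunction hL x hy

end SupportFunction

section LaplaceTransform

variable {E : Type*} [NormedAddCommGroup E] [InnerProductSpace ℝ E] [FiniteDimensional ℝ E]
  [MeasurableSpace E] [BorelSpace E] {L : Set E}

theorem exp_integral_le_integral_exp {Ω : Type*} [MeasurableSpace Ω] {P : Measure Ω}
    [IsProbabilityMeasure P] {f : Ω → ℝ} (hf : Integrable f P)
    (hexp : Integrable (fun ω => Real.exp (f ω)) P) :
    Real.exp (∫ ω, f ω ∂P) ≤ ∫ ω, Real.exp (f ω) ∂P :=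
  convexOn_exp.map_integral_le Real.continuous_exp.continuousOn isClosed_univ (by simp) hf hexp

theorem exp_neg_inner_tiltedMean_mul_integral_le {ν : Measure E} [IsFiniteMeasure ν] [NeZero ν]
    (hL : IsCompact L) (hν : ∀ᵐ y ∂ν, y ∈ L) (x : E) :
    Real.exp (-⟪x, tiltedMean ν x⟫) * ∫ y, Real.exp ⟪x, y⟫ ∂ν ≤ ν.real univ := by
  have := isProbabilityMeasure_expTilt hL hν x
  have hcont : Continuous fun y : E => -⟪x, y⟫ := by fun_prop
  have hjensen := exp_integral_le_integral_exp
    (integrable_expTilt_of_continuous hL hν x hcont)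
    (integrable_expTilt_of_continuous hL hν x (Real.continuous_exp.comp hcont))
  rw [integral_neg, ← inner_tiltedMean hL hν, integral_expTilt_eq] at hjensen
  rw [← le_div_iff₀ (integral_exp_inner_pos hL hν x), div_eq_inv_mul]
  simpa [← Real.exp_add] using hjensen

theorem measureReal_univ_le_integral_exp_inner {ν : Measure E} [IsFiniteMeasure ν]
    (hL : IsCompact L) (hν : ∀ᵐ y ∂ν, y ∈ L) (hbar : ∫ y, y ∂ν = 0) (x : E) :
    ν.real univ ≤ ∫ y, Real.exp ⟪x, y⟫ ∂ν := by
  have hint {g : E → ℝ} (hg : Continuous g) : Integrable g ν :=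
    integrable_of_continuous_of_ae_mem_compact hL hν hg
  have hinner : ∫ y, ⟪x, y⟫ ∂ν = 0 := by
    rw [integral_inner (integrable_of_continuous_of_ae_mem_compact hL hν continuous_id') x, hbar,
      inner_zero_right]
  calc ν.real univ = ∫ y, (⟪x, y⟫ + 1) ∂ν := by
        rw [integral_add (hint (by fun_prop)) (hint (by fun_prop)), hinner]
        simp
    _ ≤ ∫ y, Real.exp ⟪x, y⟫ ∂ν :=
        integral_mono (hint (by fun_prop)) (hint (by fun_prop)) fun y => Real.add_one_le_exp _

variable (μ : Measure E) [μ.IsAddHaarMeasure]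

theorem setIntegral_comp_midpoint_le (hconv : Convex ℝ L) {a : E}
    (ha : a ∈ L) {f : E → ℝ} (hf : IntegrableOn f L μ) (hf0 : ∀ y, 0 ≤ f y) :
    ∫ y in L, f (midpoint ℝ a y) ∂μ ≤ 2 ^ Module.finrank ℝ E * ∫ y in L, f y ∂μ := by
  set b := (2⁻¹ : ℝ) • a
  have hsub : (2⁻¹ : ℝ) • L ⊆ (b + ·) ⁻¹' L := by
    rintro _ ⟨y, hy, rfl⟩
    exact hconv ha hy (by norm_num) (by norm_num) (by norm_num)
  have htranslate := (measurePreserving_add_left μ b).setIntegral_preimage_emb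
    (measurableEmbedding_addLeft b) f L
  have hf_translate : IntegrableOn (fun z => f (b + z)) ((b + ·) ⁻¹' L) μ :=
    ((measurePreserving_add_left μ b).integrableOn_comp_preimage
      (measurableEmbedding_addLeft b)).2 hf
  have hmidpoint (y : E) : midpoint ℝ a y = b + (2⁻¹ : ℝ) • y := by
    rw [midpoint_eq_smul_add, smul_add, invOf_eq_inv]
  simp_rw [hmidpoint]
  rw [Measure.setIntegral_comp_smul μ (fun z => f (b + z)) L (by norm_num : (2⁻¹ : ℝ) ≠ 0),
    ← htranslate, inv_pow, inv_inv, abs_of_pos (by positivity), smul_eq_mul]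
  gcongr ?_ * ?_
  exact setIntegral_mono_set hf_translate (.of_forall fun z => hf0 _) hsub.eventuallyLE

theorem measureReal_mul_exp_supportFunction_le (hL : IsCompact L) (hne : L.Nonempty)
    (hconv : Convex ℝ L) (hbar : ∫ y in L, y ∂μ = 0) (x : E) :
    μ.real L * Real.exp (supportFunction L x / 2) ≤
      2 ^ Module.finrank ℝ E * ∫ y in L, Real.exp ⟪x, y⟫ ∂μ := by
  have := isFiniteMeasure_restrict.2 (hL.measure_ne_top (μ := μ))
  have hL_ae := ae_restrict_mem hL.measurableSet (μ := μ)
  obtain ⟨a, ha, hxa⟩ := exists_supportFunction_eq_inner hL hne x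
  have hsplit (y : E) : Real.exp ⟪x, midpoint ℝ a y⟫ =
      Real.exp (⟪x, a⟫ / 2) * Real.exp ⟪(2⁻¹ : ℝ) • x, y⟫ := by
    rw [← Real.exp_add, midpoint_eq_smul_add, smul_add, inner_add_right, inner_smul_left,
      inner_smul_right, inner_smul_right, invOf_eq_inv]
    simp [div_eq_inv_mul]
  calc μ.real L * Real.exp (supportFunction L x / 2)
      ≤ (∫ y in L, Real.exp ⟪(2⁻¹ : ℝ) • x, y⟫ ∂μ) * Real.exp (⟪x, a⟫ / 2) := by
        rw [hxa]
        gcongr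
        simpa using measureReal_univ_le_integral_exp_inner hL hL_ae hbar ((2⁻¹ : ℝ) • x)
    _ = ∫ y in L, Real.exp ⟪x, midpoint ℝ a y⟫ ∂μ := by
        simp_rw [hsplit]
        rw [integral_const_mul, mul_comm]
    _ ≤ 2 ^ Module.finrank ℝ E * ∫ y in L, Real.exp ⟪x, y⟫ ∂μ :=
        setIntegral_comp_midpoint_le μ hconv ha
          (f := fun y => Real.exp ⟪x, y⟫) (integrable_exp_inner hL hL_ae x)
          fun y => (Real.exp_pos _).le

theorem supportFunction_div_two_sub_le_inner_tiltedMean (hL : IsCompact L) (hconv : Convex ℝ L)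
    (hpos : μ L ≠ 0) (hbar : ∫ y in L, y ∂μ = 0) (x : E) :
    supportFunction L x / 2 - Module.finrank ℝ E * Real.log 2 ≤
      ⟪x, tiltedMean (μ.restrict L) x⟫ := by
  have := isFiniteMeasure_restrict.2 (hL.measure_ne_top (μ := μ))
  have : NeZero (μ.restrict L) := ⟨Measure.restrict_eq_zero.not.2 hpos⟩
  have hreal : 0 < μ.real L := ENNReal.toReal_pos hpos hL.measure_ne_top
  have hjensen := exp_neg_inner_tiltedMean_mul_integral_le hL
    (ae_restrict_mem hL.measurableSet (μ := μ)) x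
  have hlower := measureReal_mul_exp_supportFunction_le μ hL
    (nonempty_of_measure_ne_zero hpos) hconv hbar x
  rw [measureReal_restrict_apply_univ] at hjensen
  set m := ⟪x, tiltedMean (μ.restrict L) x⟫
  set Z := ∫ y in L, Real.exp ⟪x, y⟫ ∂μ
  have hexp : Real.exp (supportFunction L x / 2 - m) ≤ 2 ^ Module.finrank ℝ E := by
    refine le_of_mul_le_mul_left ?_ hreal
    calc μ.real L * Real.exp (supportFunction L x / 2 - m)
        = μ.real L * Real.exp (supportFunction L x / 2) * Real.exp (-m) := by
          rw [sub_eq_add_neg, Real.exp_add, mul_assoc]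
      _ ≤ 2 ^ Module.finrank ℝ E * Z * Real.exp (-m) := by gcongr
      _ = 2 ^ Module.finrank ℝ E * (Real.exp (-m) * Z) := by ring
      _ ≤ 2 ^ Module.finrank ℝ E * μ.real L := by gcongr
      _ = μ.real L * 2 ^ Module.finrank ℝ E := mul_comm _ _
  have hlog := Real.log_le_log (Real.exp_pos _) hexp
  rw [Real.log_exp, Real.log_pow] at hlog
  linarith

end LaplaceTransform

section Whitening

variable {E : Type*} [NormedAddCommGroup E] [InnerProductSpace ℝ E] [FiniteDimensional ℝ E]

theorem exists_whitening {A : E →L[ℝ] E} (hA : (A : E →ₗ[ℝ] E).IsSymmetric)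
    (hpos : ∀ v, v ≠ 0 → 0 < ⟪v, A v⟫) :
    ∃ W : E →L[ℝ] E, (W : E →ₗ[ℝ] E).IsSymmetric ∧ W ∘L A ∘L W = .id ℝ E := by
  set b := hA.eigenvectorBasis rfl
  set eig := hA.eigenvalues rfl
  have hAb i : A (b i) = eig i • b i := hA.apply_eigenvectorBasis rfl i
  have heig i : 0 < eig i := by
    simpa [hAb, inner_smul_right] using hpos (b i) (b.orthonormal.ne_zero i)
  set W : E →L[ℝ] E := ∑ i, (√(eig i))⁻¹ • InnerProductSpace.rankOne ℝ (b i) (b i) with hW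
  have hWb i : W (b i) = (√(eig i))⁻¹ • b i := by
    simp [hW, _root_.sum_apply, b.inner_eq_ite, ite_smul]
  refine ⟨W, ?_, ?_⟩
  · rw [hW, ContinuousLinearMap.toLinearMap_sum]
    exact LinearMap.isSymmetric_sum _ fun i _ =>
      (InnerProductSpace.isSymmetric_rankOne_self (b i)).smul (by simp)
  · refine ContinuousLinearMap.coe_injective (b.toBasis.ext fun i => ?_)
    have hsqrt : (√(eig i))⁻¹ * eig i * (√(eig i))⁻¹ = 1 := by
      nth_rewrite 2 [← Real.mul_self_sqrt (heig i).le]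
      field_simp [(Real.sqrt_pos.2 (heig i)).ne']
    simp [hWb, hAb, smul_smul, hsqrt]

omit [FiniteDimensional ℝ E] in
theorem det_sq_mul_det_eq_one_of_whitening {A W : E →L[ℝ] E} (hW : W ∘L A ∘L W = .id ℝ E) :
    W.det ^ 2 * A.det = 1 := by
  have hdet := congrArg ContinuousLinearMap.det hW
  simp only [ContinuousLinearMap.det, ContinuousLinearMap.toLinearMap_comp, LinearMap.det_comp,
    ContinuousLinearMap.coe_id, LinearMap.det_id] at hdet
  rw [← hdet]
  simp only [ContinuousLinearMap.det]
  ring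

variable [MeasurableSpace E] [BorelSpace E]

theorem integral_exp_neg_half_norm_sq_clm {W : E →L[ℝ] E} (hW : W.det ≠ 0) (m : E) :
    ∫ y, Real.exp (-(1 / 2) * ‖W (y - m)‖ ^ 2) =
      |W.det|⁻¹ * (2 * Real.pi) ^ (Module.finrank ℝ E / 2 : ℝ) := by
  rw [integral_sub_right_eq_self (fun y => Real.exp (-(1 / 2) * ‖W y‖ ^ 2)) m,
    ← integral_map (φ := W) (f := fun y => Real.exp (-(1 / 2) * ‖y‖ ^ 2)) W.measurable.aemeasurable
      (Continuous.aestronglyMeasurable (by fun_prop))]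
  have hmap : Measure.map W volume = ENNReal.ofReal |W.det⁻¹| • volume :=
    Measure.map_linearMap_addHaar_eq_smul_addHaar volume (f := (W : E →ₗ[ℝ] E)) hW
  rw [hmap, integral_smul_measure, GaussianFourier.integral_rexp_neg_mul_sq_norm (by norm_num),
    ENNReal.toReal_ofReal (abs_nonneg _), abs_inv, smul_eq_mul, div_div_eq_mul_div, div_one,
    mul_comm Real.pi]

variable {L : Set E} {ν : Measure E} [IsFiniteMeasure ν] [NeZero ν]
  (hL : IsCompact L) (hν : ∀ᵐ y ∂ν, y ∈ L)

include hL hν in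
theorem integral_norm_sq_whitening {W : E →L[ℝ] E} {x : E} (hWsymm : (W : E →ₗ[ℝ] E).IsSymmetric)
    (hW : W ∘L fderiv ℝ (tiltedMean ν) x ∘L W = .id ℝ E) :
    ∫ y, ‖W (y - tiltedMean ν x)‖ ^ 2 ∂expTilt ν x = Module.finrank ℝ E := by
  set b := stdOrthonormalBasis ℝ E
  have hexpand (z : E) : ‖W z‖ ^ 2 = ∑ i, ⟪W (b i), z⟫ * ⟪W (b i), z⟫ := by
    simp_rw [← b.sum_sq_inner_right (W z), sq, ← ContinuousLinearMap.coe_coe W, hWsymm _ z]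
  have hunit i : ⟪W (b i), fderiv ℝ (tiltedMean ν) x (W (b i))⟫ = 1 := by
    have hid : W (fderiv ℝ (tiltedMean ν) x (W (b i))) = b i := DFunLike.congr_fun hW (b i)
    calc ⟪W (b i), fderiv ℝ (tiltedMean ν) x (W (b i))⟫
        = ⟪b i, W (fderiv ℝ (tiltedMean ν) x (W (b i)))⟫ := hWsymm _ _
      _ = 1 := by rw [hid, b.inner_eq_one]
  simp_rw [hexpand]
  rw [integral_finsetSum _ fun i _ => integrable_expTilt_of_continuous hL hν x (by fun_prop)]
  simp_rw [← inner_fderiv_tiltedMean hL hν, hunit]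
  simp

include hL hν in
theorem exp_neg_finrank_div_two_le_integral_whitening {W : E →L[ℝ] E} {x : E}
    (hWsymm : (W : E →ₗ[ℝ] E).IsSymmetric)
    (hW : W ∘L fderiv ℝ (tiltedMean ν) x ∘L W = .id ℝ E) :
    Real.exp (-(Module.finrank ℝ E / 2 : ℝ)) ≤
      ∫ y, Real.exp (-(1 / 2) * ‖W (y - tiltedMean ν x)‖ ^ 2) ∂expTilt ν x := by
  have := isProbabilityMeasure_expTilt hL hν x
  have hcont : Continuous fun y => -(1 / 2) * ‖W (y - tiltedMean ν x)‖ ^ 2 := by fun_prop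
  have hjensen := exp_integral_le_integral_exp
    (integrable_expTilt_of_continuous hL hν x hcont)
    (integrable_expTilt_of_continuous hL hν x (Real.continuous_exp.comp hcont))
  rw [integral_const_mul, integral_norm_sq_whitening hL hν hWsymm hW] at hjensen
  convert hjensen using 2
  ring

omit [NeZero ν] in
include hL hν in
theorem integral_exp_inner_mul_le {W : E →L[ℝ] E} (hW : W.det ≠ 0) (hν_le : ν ≤ volume) (x m : E) :
    ∫ y, Real.exp ⟪x, y⟫ * Real.exp (-(1 / 2) * ‖W (y - m)‖ ^ 2) ∂ν ≤
      Real.exp (supportFunction L x) *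
        (|W.det|⁻¹ * (2 * Real.pi) ^ (Module.finrank ℝ E / 2 : ℝ)) := by
  have hgauss := integral_exp_neg_half_norm_sq_clm hW m
  have hint : Integrable fun y => Real.exp (-(1 / 2) * ‖W (y - m)‖ ^ 2) :=
    .of_integral_ne_zero (by rw [hgauss]; positivity)
  calc ∫ y, Real.exp ⟪x, y⟫ * Real.exp (-(1 / 2) * ‖W (y - m)‖ ^ 2) ∂ν
      ≤ ∫ y, Real.exp (supportFunction L x) * Real.exp (-(1 / 2) * ‖W (y - m)‖ ^ 2) ∂ν := by
        refine integral_mono_ae (integrable_of_continuous_of_ae_mem_compact hL hν (by fun_prop))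
          (integrable_of_continuous_of_ae_mem_compact hL hν (by fun_prop)) ?_
        filter_upwards [hν] with y hy
        gcongr
        exact inner_le_supportFunction hL x hy
    _ ≤ ∫ y, Real.exp (supportFunction L x) * Real.exp (-(1 / 2) * ‖W (y - m)‖ ^ 2) :=
        integral_mono_measure hν_le (.of_forall fun y => by positivity) (hint.const_mul _)
    _ = _ := by rw [integral_const_mul, hgauss]

include hL hν in
theorem sq_integral_exp_inner_le (hν_le : ν ≤ volume) (x : E) :
    (∫ y, Real.exp ⟪x, y⟫ ∂ν) ^ 2 ≤ (2 * Real.pi * Real.exp 1) ^ Module.finrank ℝ E *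
      Real.exp (supportFunction L x) ^ 2 * |(fderiv ℝ (tiltedMean ν) x).det| := by
  obtain ⟨W, hWsymm, hW⟩ := exists_whitening (isSymmetric_fderiv_tiltedMean hL hν x)
    fun v hv => inner_fderiv_tiltedMean_pos hL hν
      (Measure.absolutelyContinuous_of_le hν_le) x hv
  have hdet := det_sq_mul_det_eq_one_of_whitening hW
  have hWdet : W.det ≠ 0 := fun h => by simp [h] at hdet
  set n := Module.finrank ℝ E
  set Z := ∫ y, Real.exp ⟪x, y⟫ ∂ν
  set A := fderiv ℝ (tiltedMean ν) x
  have hZ : 0 < Z := integral_exp_inner_pos hL hν x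
  have hbound : Z ≤ Real.exp (n / 2 : ℝ) * (Real.exp (supportFunction L x) *
      (|W.det|⁻¹ * (2 * Real.pi) ^ (n / 2 : ℝ))) := by
    have hlower := exp_neg_finrank_div_two_le_integral_whitening hL hν hWsymm hW
    rw [integral_expTilt_eq, smul_eq_mul, ← div_eq_inv_mul, le_div_iff₀ hZ, Real.exp_neg,
      inv_mul_le_iff₀ (Real.exp_pos _)] at hlower
    refine hlower.trans ?_
    gcongr
    exact integral_exp_inner_mul_le hL hν hWdet hν_le x _
  have hsq (a : ℝ) (ha : 0 ≤ a) : (a ^ (n / 2 : ℝ)) ^ 2 = a ^ n := by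
    rw [← Real.rpow_mul_natCast ha]
    simp
  have hexp : Real.exp (n / 2 : ℝ) = Real.exp 1 ^ (n / 2 : ℝ) := (Real.exp_one_rpow _).symm
  have hdet_inv : (|W.det|⁻¹) ^ 2 = |A.det| := by
    rw [inv_pow, sq_abs, eq_inv_of_mul_eq_one_right hdet, abs_of_nonneg (by positivity)]
  calc Z ^ 2 ≤ _ := pow_le_pow_left₀ hZ.le hbound 2
    _ = _ := by
      rw [mul_pow, mul_pow, mul_pow, hexp, hsq _ (Real.exp_pos 1).le, hsq _ (by positivity),
        hdet_inv, mul_pow (2 * Real.pi)]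
      ring

end Whitening

section UpperBound

variable {E : Type*} [NormedAddCommGroup E] [InnerProductSpace ℝ E] [FiniteDimensional ℝ E]
  [MeasurableSpace E] [BorelSpace E] {L : Set E}

theorem sq_volume_mul_exp_neg_supportFunction_le (hL : IsCompact L) (hconv : Convex ℝ L)
    (hpos : volume L ≠ 0) (hbar : ∫ y in L, y = 0) (x : E) :
    volume.real L ^ 2 * Real.exp (-supportFunction L x) ≤
      (8 * Real.pi * Real.exp 1) ^ Module.finrank ℝ E *
        |(fderiv ℝ (tiltedMean (volume.restrict L)) x).det| := by
  have := isFiniteMeasure_restrict.2 (hL.measure_ne_top (μ := volume))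
  have : NeZero (volume.restrict L) := ⟨Measure.restrict_eq_zero.not.2 hpos⟩
  have hupper := sq_integral_exp_inner_le hL (ae_restrict_mem hL.measurableSet)
    Measure.restrict_le_self x
  have hlower := pow_le_pow_left₀ (by positivity) (measureReal_mul_exp_supportFunction_le volume hL
    (nonempty_of_measure_ne_zero hpos) hconv hbar x) 2
  set n := Module.finrank ℝ E
  set h := supportFunction L x
  have hexp : Real.exp (h / 2) ^ 2 * Real.exp (-(2 * h)) = Real.exp (-h) := by
    rw [← Real.exp_nat_mul, ← Real.exp_add]
    ring_nf
  have hexp' : Real.exp h ^ 2 * Real.exp (-(2 * h)) = 1 := by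
    rw [← Real.exp_nat_mul, ← Real.exp_add]
    simp
  have hconst : (8 * Real.pi * Real.exp 1) ^ n = (2 ^ n) ^ 2 * (2 * Real.pi * Real.exp 1) ^ n := by
    rw [← pow_mul, mul_comm n, pow_mul, ← mul_pow]
    ring_nf
  calc volume.real L ^ 2 * Real.exp (-h)
      = (volume.real L * Real.exp (h / 2)) ^ 2 * Real.exp (-(2 * h)) := by rw [← hexp]; ring
    _ ≤ (2 ^ n * ∫ y in L, Real.exp ⟪x, y⟫) ^ 2 * Real.exp (-(2 * h)) := by gcongr
    _ = (2 ^ n) ^ 2 * (∫ y in L, Real.exp ⟪x, y⟫) ^ 2 * Real.exp (-(2 * h)) := by rw [mul_pow]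
    _ ≤ (2 ^ n) ^ 2 * ((2 * Real.pi * Real.exp 1) ^ n * Real.exp h ^ 2 *
          |(fderiv ℝ (tiltedMean (volume.restrict L)) x).det|) * Real.exp (-(2 * h)) := by gcongr
    _ = (2 ^ n) ^ 2 * (2 * Real.pi * Real.exp 1) ^ n *
          |(fderiv ℝ (tiltedMean (volume.restrict L)) x).det| *
          (Real.exp h ^ 2 * Real.exp (-(2 * h))) := by ring
    _ = _ := by rw [hexp', hconst, mul_one]

theorem volume_mul_lintegral_exp_neg_supportFunction_le (hL : IsCompact L) (hconv : Convex ℝ L)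
    (hpos : volume L ≠ 0) (hbar : ∫ y in L, y = 0) :
    volume L * ∫⁻ x, ENNReal.ofReal (Real.exp (-supportFunction L x)) ≤
      ENNReal.ofReal ((8 * Real.pi * Real.exp 1) ^ Module.finrank ℝ E) := by
  have := isFiniteMeasure_restrict.2 (hL.measure_ne_top (μ := volume))
  have : NeZero (volume.restrict L) := ⟨Measure.restrict_eq_zero.not.2 hpos⟩
  have hfinite : volume L ≠ ⊤ := hL.measure_ne_top
  have hL_ae := ae_restrict_mem hL.measurableSet (μ := volume)
  have hdet : ∫⁻ x, ENNReal.ofReal |(fderiv ℝ (tiltedMean (volume.restrict L)) x).det| ≤ volume L :=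
    lintegral_abs_det_fderiv_le volume (differentiable_tiltedMean hL hL_ae)
      (fun x _ => inner_fderiv_tiltedMean_pos hL hL_ae
        Measure.absolutelyContinuous_restrict x)
      (tiltedMean_mem hL hL_ae hconv)
  refine (ENNReal.mul_le_mul_iff_right hpos hfinite).1 ?_
  calc volume L * (volume L * ∫⁻ x, ENNReal.ofReal (Real.exp (-supportFunction L x)))
      = ∫⁻ x, volume L ^ 2 * ENNReal.ofReal (Real.exp (-supportFunction L x)) := by
        rw [lintegral_const_mul' _ _ (by finiteness), sq, mul_assoc]
    _ ≤ ∫⁻ x, ENNReal.ofReal ((8 * Real.pi * Real.exp 1) ^ Module.finrank ℝ E) *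
          ENNReal.ofReal |(fderiv ℝ (tiltedMean (volume.restrict L)) x).det| := by
        refine lintegral_mono fun x => ?_
        rw [← ENNReal.ofReal_mul (by positivity), ← ofReal_measureReal hfinite,
          ← ENNReal.ofReal_pow (by positivity), ← ENNReal.ofReal_mul (by positivity)]
        exact ENNReal.ofReal_le_ofReal
          (sq_volume_mul_exp_neg_supportFunction_le hL hconv hpos hbar x)
    _ ≤ volume L * ENNReal.ofReal ((8 * Real.pi * Real.exp 1) ^ Module.finrank ℝ E) := by
        rw [lintegral_const_mul' _ _ (by finiteness), mul_comm]
        gcongr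

end UpperBound

section DilationInvariance

variable {E : Type*} [NormedAddCommGroup E] [NormedSpace ℝ E] [FiniteDimensional ℝ E]
  [MeasurableSpace E] [BorelSpace E] (μ : Measure E) [μ.IsAddHaarMeasure]

theorem addHaar_two_smul (S : Set E) : μ ((2 : ℝ) • S) = 2 ^ Module.finrank ℝ E * μ S := by
  rw [Measure.addHaar_smul, abs_of_pos (by positivity), ENNReal.ofReal_pow zero_le_two,
    ENNReal.ofReal_ofNat]

theorem lintegral_exp_neg_mul_pow_Ioi (n : ℕ) :
    ∫⁻ t in Ioi (0 : ℝ), ENNReal.ofReal (Real.exp (-t) * t ^ n) = n.factorial := by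
  have hn : (0 : ℝ) < n + 1 := by positivity
  have hint := Real.GammaIntegral_convergent hn
  have hgamma := Real.Gamma_eq_integral hn
  simp only [add_sub_cancel_right, Real.rpow_natCast] at hint hgamma
  have hnonneg : 0 ≤ᵐ[volume.restrict (Ioi (0 : ℝ))] fun t => Real.exp (-t) * t ^ n := by
    filter_upwards [ae_restrict_mem measurableSet_Ioi] with t ht
    have ht : 0 < t := ht
    rw [Pi.zero_apply]
    positivity
  rw [← ofReal_integral_eq_lintegral_ofReal hint hnonneg, ← hgamma, Real.Gamma_nat_eq_factorial,
    ENNReal.ofReal_natCast]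

theorem ofReal_exp_neg_eq_lintegral_indicator {a : ℝ} (ha : 0 ≤ a) :
    ENNReal.ofReal (Real.exp (-a)) =
      ∫⁻ t in Ioi (0 : ℝ), (Ici a).indicator (fun t => ENNReal.ofReal (Real.exp (-t))) t := by
  rw [← lintegral_congr_ae (ae_restrict_of_ae (indicator_ae_eq_of_ae_eq_set Ioi_ae_eq_Ici)),
    lintegral_indicator measurableSet_Ioi, Measure.restrict_restrict measurableSet_Ioi,
    Ioi_inter_Ioi, sup_of_le_left ha,
    ← ofReal_integral_eq_lintegral_ofReal (integrableOn_exp_neg_Ioi _)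
      (.of_forall fun t => (Real.exp_pos _).le),
    integral_exp_neg_Ioi]

theorem lintegral_exp_neg_eq_factorial_mul {G : E → ℝ} (hG : Measurable G) (hG0 : ∀ x, 0 ≤ G x)
    {S : Set E} (hS : ∀ t : ℝ, 0 < t → {x | G x ≤ t} = t • S) :
    ∫⁻ x, ENNReal.ofReal (Real.exp (-G x)) ∂μ = (Module.finrank ℝ E).factorial * μ S := by
  have hindicator (x : E) (t : ℝ) :
      (Ici (G x)).indicator (fun t => ENNReal.ofReal (Real.exp (-t))) t =
        {x | G x ≤ t}.indicator (fun _ => ENNReal.ofReal (Real.exp (-t))) x := by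
    simp [indicator]
  have hmeas : Measurable fun z : E × ℝ =>
      {x | G x ≤ z.2}.indicator (fun _ => ENNReal.ofReal (Real.exp (-z.2))) z.1 :=
    Measurable.indicator (f := fun z : E × ℝ => ENNReal.ofReal (Real.exp (-z.2)))
      (s := {z | G z.1 ≤ z.2}) (by fun_prop) (measurableSet_le (by fun_prop) (by fun_prop))
  simp_rw [ofReal_exp_neg_eq_lintegral_indicator (hG0 _), hindicator]
  rw [lintegral_lintegral_swap hmeas.aemeasurable, ← lintegral_exp_neg_mul_pow_Ioi,
    ← lintegral_mul_const _ (by fun_prop)]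
  refine setLIntegral_congr_fun measurableSet_Ioi fun t (ht : 0 < t) => ?_
  rw [lintegral_indicator_const (measurableSet_le hG measurable_const), hS t ht,
    Measure.addHaar_smul, abs_of_pos (by positivity), ENNReal.ofReal_mul (by positivity), mul_assoc]

end DilationInvariance

section DifferenceBody

variable {E : Type*} [NormedAddCommGroup E] [NormedSpace ℝ E] [FiniteDimensional ℝ E]
  [MeasurableSpace E] [BorelSpace E] (μ : Measure E) [μ.IsAddHaarMeasure] {L : Set E}

theorem lintegral_measure_inter_preimage_add (hL : MeasurableSet L) :
    ∫⁻ z, μ (L ∩ (· + z) ⁻¹' L) ∂μ = μ L * μ L := by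
  have hpres := measurePreserving_prod_add_swap μ μ
  have hpreimage := hpres.measure_preimage (hL.prod hL).nullMeasurableSet
  rw [Measure.prod_prod, Measure.prod_apply (hpres.measurable (hL.prod hL))] at hpreimage
  exact hpreimage

theorem measure_le_mul_measure_inter_preimage_add (hconv : Convex ℝ L) {a b : E} (ha : a ∈ L)
    (hb : b ∈ L) :
    μ L ≤ 2 ^ Module.finrank ℝ E * μ (L ∩ (· + (2⁻¹ : ℝ) • (a - b)) ⁻¹' L) := by
  have hsub : (2⁻¹ : ℝ) • b +ᵥ (2⁻¹ : ℝ) • L ⊆ L ∩ (· + (2⁻¹ : ℝ) • (a - b)) ⁻¹' L := by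
    rintro _ ⟨_, ⟨y, hy, rfl⟩, rfl⟩
    have hmid {c : E} (hc : c ∈ L) : (2⁻¹ : ℝ) • c + (2⁻¹ : ℝ) • y ∈ L :=
      hconv hc hy (by norm_num) (by norm_num) (by norm_num)
    refine ⟨hmid hb, ?_⟩
    simp only [mem_preimage, vadd_eq_add]
    convert hmid ha using 1
    module
  calc μ L = 2 ^ Module.finrank ℝ E * μ ((2⁻¹ : ℝ) • b +ᵥ (2⁻¹ : ℝ) • L) := by
        rw [measure_vadd, ← addHaar_two_smul, smul_inv_smul₀ two_ne_zero]
    _ ≤ _ := by gcongr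

theorem measure_sub_self_le (hL : IsCompact L) (hpos : μ L ≠ 0) (hconv : Convex ℝ L) :
    μ (L - L) ≤ 4 ^ Module.finrank ℝ E * μ L := by
  set n := Module.finrank ℝ E
  have hcompact : IsCompact ((2⁻¹ : ℝ) • (L - L)) := (sub_eq_add_neg L L ▸ hL.add hL.neg).smul _
  have hhalf : μ L * μ ((2⁻¹ : ℝ) • (L - L)) ≤ μ L * (2 ^ n * μ L) :=
    calc μ L * μ ((2⁻¹ : ℝ) • (L - L))
        = ∫⁻ _ in (2⁻¹ : ℝ) • (L - L), μ L ∂μ := (setLIntegral_const _ _).symm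
      _ ≤ ∫⁻ z in (2⁻¹ : ℝ) • (L - L), 2 ^ n * μ (L ∩ (· + z) ⁻¹' L) ∂μ := by
          refine setLIntegral_mono' hcompact.measurableSet ?_
          rintro _ ⟨_, ⟨a, ha, b, hb, rfl⟩, rfl⟩
          exact measure_le_mul_measure_inter_preimage_add μ hconv ha hb
      _ ≤ ∫⁻ z, 2 ^ n * μ (L ∩ (· + z) ⁻¹' L) ∂μ := setLIntegral_le_lintegral _ _
      _ = μ L * (2 ^ n * μ L) := by
          rw [lintegral_const_mul' _ _ (by finiteness),
            lintegral_measure_inter_preimage_add μ hL.measurableSet]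
          ring
  calc μ (L - L) = 2 ^ n * μ ((2⁻¹ : ℝ) • (L - L)) := by
        rw [← addHaar_two_smul, smul_inv_smul₀ two_ne_zero]
    _ ≤ 2 ^ n * (2 ^ n * μ L) := by
        gcongr
        exact (ENNReal.mul_le_mul_iff_right hpos hL.measure_ne_top).1 hhalf
    _ = 4 ^ n * μ L := by
        rw [← mul_assoc, ← mul_pow]
        norm_num

end DifferenceBody

section SymmetrizedMean

open Function

theorem fderiv_sub_comp_const_sub {E F : Type*} [NormedAddCommGroup E] [NormedSpace ℝ E]
    [NormedAddCommGroup F] [NormedSpace ℝ F] {f : E → F} (hf : Differentiable ℝ f) (p x : E) :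
    fderiv ℝ (fun x => f x - f (p - x)) x = fderiv ℝ f x + fderiv ℝ f (p - x) := by
  have hreflect : HasFDerivAt (fun x => f (p - x)) (-fderiv ℝ f (p - x)) x := by
    simpa using! (hf (p - x)).hasFDerivAt.comp x ((hasFDerivAt_id x).const_sub p)
  rw [((hf x).hasFDerivAt.fun_sub hreflect).fderiv, sub_neg_eq_add]

variable {E : Type*} [NormedAddCommGroup E] [InnerProductSpace ℝ E] [MeasurableSpace E]

/-- The gradient at `x` of the even function `log Z(x) + log Z(-x)`, where `Z` is the Laplace
transform of `ν`. -/
def symmetrizedMean (ν : Measure E) (x : E) : E := tiltedMean ν x - tiltedMean ν (-x)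

variable [FiniteDimensional ℝ E] [BorelSpace E] {L : Set E} {ν : Measure E} [IsFiniteMeasure ν]
  [NeZero ν]

theorem hasTemperateGrowth_symmetrizedMean (hL : IsCompact L) (hν : ∀ᵐ y ∂ν, y ∈ L) :
    (symmetrizedMean ν).HasTemperateGrowth :=
  have h := hasTemperateGrowth_tiltedMean hL hν
  h.sub (h.comp HasTemperateGrowth.id.neg)

theorem differentiable_symmetrizedMean (hL : IsCompact L) (hν : ∀ᵐ y ∂ν, y ∈ L) :
    Differentiable ℝ (symmetrizedMean ν) :=
  (hasTemperateGrowth_symmetrizedMean hL hν).1.differentiable (by simp)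

theorem inner_fderiv_symmetrizedMean_pos {μ : Measure E} [μ.IsAddHaarMeasure] (hL : IsCompact L)
    (hν : ∀ᵐ y ∂ν, y ∈ L) (hνμ : ν ≪ μ) (x : E) {v : E} (hv : v ≠ 0) :
    0 < ⟪v, fderiv ℝ (symmetrizedMean ν) x v⟫ := by
  have hfderiv := fderiv_sub_comp_const_sub (differentiable_tiltedMean hL hν) 0 x
  simp only [zero_sub] at hfderiv
  rw [funext fun x => symmetrizedMean.eq_def ν x, hfderiv, _root_.add_apply, inner_add_right]
  exact add_pos (inner_fderiv_tiltedMean_pos hL hν hνμ x hv)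
    (inner_fderiv_tiltedMean_pos hL hν hνμ (-x) hv)

theorem symmetrizedMean_sub_mem (hL : IsCompact L) (hν : ∀ᵐ y ∂ν, y ∈ L) (hconv : Convex ℝ L)
    (x y : E) : symmetrizedMean ν x - symmetrizedMean ν y ∈ (2 : ℝ) • (L - L) := by
  have hmid (a b : E) : (2⁻¹ : ℝ) • tiltedMean ν a + (2⁻¹ : ℝ) • tiltedMean ν b ∈ L :=
    hconv (tiltedMean_mem hL hν hconv a) (tiltedMean_mem hL hν hconv b) (by norm_num)
      (by norm_num) (by norm_num)
  refine ⟨_, sub_mem_sub (hmid x (-y)) (hmid (-x) y), ?_⟩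
  simp only [symmetrizedMean]
  module

end SymmetrizedMean

section SymmetrizedMeanOfConvex

variable {E : Type*} [NormedAddCommGroup E] [InnerProductSpace ℝ E] [FiniteDimensional ℝ E]
  [MeasurableSpace E] [BorelSpace E] (μ : Measure E) [μ.IsAddHaarMeasure] {L : Set E}

theorem lintegral_abs_det_fderiv_symmetrizedMean_add_le (hL : IsCompact L) (hconv : Convex ℝ L)
    (hpos : μ L ≠ 0) (p : E) :
    ∫⁻ x, ENNReal.ofReal |(fderiv ℝ (symmetrizedMean (μ.restrict L)) x +
        fderiv ℝ (symmetrizedMean (μ.restrict L)) (p - x)).det| ∂μ ≤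
      8 ^ Module.finrank ℝ E * μ L := by
  have := isFiniteMeasure_restrict.2 (hL.measure_ne_top (μ := μ))
  have : NeZero (μ.restrict L) := ⟨Measure.restrict_eq_zero.not.2 hpos⟩
  have hL_ae := ae_restrict_mem hL.measurableSet (μ := μ)
  have hdiff := differentiable_symmetrizedMean hL hL_ae
  have hinner_pos (x : E) {v : E} (hv : v ≠ 0) :=
    inner_fderiv_symmetrizedMean_pos hL hL_ae Measure.absolutelyContinuous_restrict x hv
  have hchange := lintegral_abs_det_fderiv_le μ
    (f := fun x => symmetrizedMean (μ.restrict L) x - symmetrizedMean (μ.restrict L) (p - x))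
    (by fun_prop) (fun x v hv => by
      rw [fderiv_sub_comp_const_sub hdiff, _root_.add_apply, inner_add_right]
      exact add_pos (hinner_pos x hv) (hinner_pos (p - x) hv))
    (fun x => symmetrizedMean_sub_mem hL hL_ae hconv x (p - x))
  simp only [fderiv_sub_comp_const_sub hdiff] at hchange
  calc _ ≤ μ ((2 : ℝ) • (L - L)) := hchange
    _ = 2 ^ Module.finrank ℝ E * μ (L - L) := addHaar_two_smul μ _
    _ ≤ 2 ^ Module.finrank ℝ E * (4 ^ Module.finrank ℝ E * μ L) := by
        gcongr
        exact measure_sub_self_le μ hL hpos hconv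
    _ = 8 ^ Module.finrank ℝ E * μ L := by
        rw [← mul_assoc, ← mul_pow]
        norm_num

theorem lintegral_prod_comp_add_mul_le {G : Type*} [AddCommGroup G] [MeasurableSpace G]
    [MeasurableAdd₂ G] [MeasurableSub₂ G] {μ : Measure G} [SFinite μ] [μ.IsAddRightInvariant]
    {H : G → ℝ≥0∞} {D : G → G → ℝ≥0∞} {B : ℝ≥0∞} (hH : Measurable H)
    (hD : Measurable fun z : G × G => D z.1 z.2) (hB : ∀ p, ∫⁻ x, D x (p - x) ∂μ ≤ B) :
    ∫⁻ z : G × G, H (z.1 + z.2) * D z.1 z.2 ∂μ.prod μ ≤ (∫⁻ p, H p ∂μ) * B := by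
  have hD_shear : Measurable fun z : G × G => D z.1 (z.2 - z.1) :=
    hD.comp (measurable_fst.prodMk (measurable_snd.sub measurable_fst))
  have hD_section (p : G) : Measurable fun x => D x (p - x) :=
    hD_shear.comp (measurable_id.prodMk measurable_const)
  calc ∫⁻ z : G × G, H (z.1 + z.2) * D z.1 z.2 ∂μ.prod μ
      = ∫⁻ x, ∫⁻ y, H (x + y) * D x y ∂μ ∂μ := lintegral_prod _ (by fun_prop)
    _ = ∫⁻ x, ∫⁻ p, H p * D x (p - x) ∂μ ∂μ := by
        refine lintegral_congr fun x => ?_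
        rw [← lintegral_sub_right_eq_self (fun y => H (x + y) * D x y) x]
        simp only [add_sub_cancel]
    _ = ∫⁻ p, ∫⁻ x, H p * D x (p - x) ∂μ ∂μ :=
        lintegral_lintegral_swap ((hH.comp measurable_snd).mul hD_shear).aemeasurable
    _ ≤ ∫⁻ p, H p * B ∂μ := by
        refine lintegral_mono fun p => ?_
        rw [lintegral_const_mul _ (hD_section p)]
        gcongr
        exact hB p
    _ = (∫⁻ p, H p ∂μ) * B := lintegral_mul_const _ hH

theorem lintegral_comp_add_mul_det_fderiv_symmetrizedMean_le (hL : IsCompact L)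
    (hconv : Convex ℝ L) (hpos : μ L ≠ 0) {H : E → ℝ≥0∞} (hH : Measurable H) :
    ∫⁻ z : E × E, H (z.1 + z.2) * ENNReal.ofReal
        |(fderiv ℝ (symmetrizedMean (μ.restrict L)) z.1 +
          fderiv ℝ (symmetrizedMean (μ.restrict L)) z.2).det| ∂μ.prod μ ≤
      (∫⁻ p, H p ∂μ) * (8 ^ Module.finrank ℝ E * μ L) := by
  have := isFiniteMeasure_restrict.2 (hL.measure_ne_top (μ := μ))
  have : NeZero (μ.restrict L) := ⟨Measure.restrict_eq_zero.not.2 hpos⟩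
  set u := symmetrizedMean (μ.restrict L)
  have hfderiv : Continuous (fderiv ℝ u) := (hasTemperateGrowth_fderiv
    (hasTemperateGrowth_symmetrizedMean hL (ae_restrict_mem hL.measurableSet))).1.continuous
  have hdet : Continuous fun z : E × E => (fderiv ℝ u z.1 + fderiv ℝ u z.2).det :=
    ContinuousLinearMap.continuous_det.comp (by fun_prop)
  exact lintegral_prod_comp_add_mul_le
    (D := fun x y => ENNReal.ofReal |(fderiv ℝ u x + fderiv ℝ u y).det|) hH
    hdet.abs.measurable.ennreal_ofReal
    (lintegral_abs_det_fderiv_symmetrizedMean_add_le μ hL hconv hpos)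

variable (hL : IsCompact L) (hconv : Convex ℝ L) (hpos : μ L ≠ 0)
  (hbar : ∫ y in L, y ∂μ = 0)

include hL hconv hpos hbar in
theorem supportFunction_add_sub_le_inner_symmetrizedMean (x : E) :
    (supportFunction L x + supportFunction L (-x)) / 2 - 2 * (Module.finrank ℝ E * Real.log 2) ≤
      ⟪x, symmetrizedMean (μ.restrict L) x⟫ := by
  have hx := supportFunction_div_two_sub_le_inner_tiltedMean μ hL hconv hpos hbar x
  have hneg := supportFunction_div_two_sub_le_inner_tiltedMean μ hL hconv hpos hbar (-x)
  rw [inner_neg_left] at hneg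
  rw [symmetrizedMean, inner_sub_right]
  linarith

include hL hconv hpos hbar in
theorem exp_neg_inner_symmetrizedMean_add_le (h0 : 0 ∈ L) (x y : E) :
    Real.exp (-(⟪x, symmetrizedMean (μ.restrict L) x⟫ + ⟪y, symmetrizedMean (μ.restrict L) y⟫)) ≤
      16 ^ Module.finrank ℝ E *
        Real.exp (-(max (supportFunction L (x + y)) (supportFunction L (-(x + y))) / 2)) := by
  have hsixteen : (16 : ℝ) ^ Module.finrank ℝ E =
      Real.exp (4 * (Module.finrank ℝ E * Real.log 2)) := by
    rw [mul_left_comm, Real.exp_nat_mul, mul_comm, Real.exp_mul, Real.exp_log two_pos]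
    norm_num
  rw [hsixteen, ← Real.exp_add, Real.exp_le_exp]
  have hx := supportFunction_add_sub_le_inner_symmetrizedMean μ hL hconv hpos hbar x
  have hy := supportFunction_add_sub_le_inner_symmetrizedMean μ hL hconv hpos hbar y
  have hnonneg := supportFunction_nonneg hL h0
  have hadd := supportFunction_add_le hL ⟨0, h0⟩ x y
  have hadd_neg := supportFunction_add_le hL ⟨0, h0⟩ (-x) (-y)
  rw [← neg_add] at hadd_neg
  have hmax : max (supportFunction L (x + y)) (supportFunction L (-(x + y))) ≤
      supportFunction L x + supportFunction L y +
        (supportFunction L (-x) + supportFunction L (-y)) :=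
    max_le (by linarith [hnonneg (-x), hnonneg (-y)]) (by linarith [hnonneg x, hnonneg y])
  linarith

end SymmetrizedMeanOfConvex

section LowerBound

variable {ι : Type*} [Fintype ι] {L : Set (EuclideanSpace ℝ ι)} (hL : IsCompact L)
  (hconv : Convex ℝ L) (h0 : 0 ∈ interior L) (hbar : ∫ y in L, y = 0)

include hL hconv h0 hbar in
theorem ofReal_two_pi_pow_le_lintegral_exp_mul_det_fderiv_symmetrizedMean :
    ENNReal.ofReal ((2 * Real.pi) ^ Fintype.card ι) ≤
      ∫⁻ z : EuclideanSpace ℝ ι × EuclideanSpace ℝ ι,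
        ENNReal.ofReal (Real.exp (-(⟪z.1, symmetrizedMean (volume.restrict L) z.1⟫ +
          ⟪z.2, symmetrizedMean (volume.restrict L) z.2⟫))) *
        ENNReal.ofReal |(fderiv ℝ (symmetrizedMean (volume.restrict L)) z.1 +
          fderiv ℝ (symmetrizedMean (volume.restrict L)) z.2).det| := by
  have hpos : volume L ≠ 0 := (Measure.measure_pos_of_nonempty_interior _ ⟨0, h0⟩).ne'
  have := isFiniteMeasure_restrict.2 (hL.measure_ne_top (μ := volume))
  have : NeZero (volume.restrict L) := ⟨Measure.restrict_eq_zero.not.2 hpos⟩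
  obtain ⟨r, hr, hgrowth⟩ := exists_mul_norm_le_supportFunction hL h0
  refine ofReal_two_pi_pow_le_lintegral_exp_mul_det_fderiv
    (hasTemperateGrowth_symmetrizedMean hL (ae_restrict_mem hL.measurableSet))
    (half_pos hr) (D := 2 * (Module.finrank ℝ (EuclideanSpace ℝ ι) * Real.log 2)) fun x => ?_
  linarith [hgrowth x, supportFunction_nonneg hL (interior_subset h0) (-x),
    supportFunction_add_sub_le_inner_symmetrizedMean volume hL hconv hpos hbar x]

include hL hconv h0 hbar in
theorem ofReal_two_pi_pow_le_volume_mul_lintegral_exp_neg_max_supportFunction :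
    ENNReal.ofReal ((2 * Real.pi) ^ Fintype.card ι) ≤
      128 ^ Fintype.card ι * volume L *
        ∫⁻ p, ENNReal.ofReal
          (Real.exp (-(max (supportFunction L p) (supportFunction L (-p)) / 2))) := by
  have hpos : volume L ≠ 0 := (Measure.measure_pos_of_nonempty_interior _ ⟨0, h0⟩).ne'
  have := isFiniteMeasure_restrict.2 (hL.measure_ne_top (μ := volume))
  have : NeZero (volume.restrict L) := ⟨Measure.restrict_eq_zero.not.2 hpos⟩
  have hmeas := measurable_supportFunction hL ⟨0, interior_subset h0⟩
  set u := symmetrizedMean (volume.restrict L)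
  let H (p : EuclideanSpace ℝ ι) : ℝ≥0∞ :=
    ENNReal.ofReal (Real.exp (-(max (supportFunction L p) (supportFunction L (-p)) / 2)))
  calc ENNReal.ofReal ((2 * Real.pi) ^ Fintype.card ι)
      ≤ ∫⁻ z : EuclideanSpace ℝ ι × EuclideanSpace ℝ ι,
          ENNReal.ofReal (Real.exp (-(⟪z.1, u z.1⟫ + ⟪z.2, u z.2⟫))) *
          ENNReal.ofReal |(fderiv ℝ u z.1 + fderiv ℝ u z.2).det| :=
        ofReal_two_pi_pow_le_lintegral_exp_mul_det_fderiv_symmetrizedMean hL hconv h0 hbar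
    _ ≤ ∫⁻ z : EuclideanSpace ℝ ι × EuclideanSpace ℝ ι, 16 ^ Fintype.card ι * H (z.1 + z.2) *
          ENNReal.ofReal |(fderiv ℝ u z.1 + fderiv ℝ u z.2).det| := by
        gcongr with z
        have hexp := ENNReal.ofReal_le_ofReal (exp_neg_inner_symmetrizedMean_add_le volume hL hconv
          hpos hbar (interior_subset h0) z.1 z.2)
        rwa [finrank_euclideanSpace, ENNReal.ofReal_mul (by positivity),
          ENNReal.ofReal_pow (by norm_num), ENNReal.ofReal_ofNat] at hexp
    _ ≤ (∫⁻ p, 16 ^ Fintype.card ι * H p) * (8 ^ Fintype.card ι * volume L) := by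
        rw [← finrank_euclideanSpace (𝕜 := ℝ) (ι := ι)]
        exact lintegral_comp_add_mul_det_fderiv_symmetrizedMean_le volume hL hconv hpos
          (H := fun p => _ * H p) (by fun_prop)
    _ = 128 ^ Fintype.card ι * volume L * ∫⁻ p, H p := by
        rw [lintegral_const_mul' _ _ (by finiteness), show (128 : ℝ≥0∞) = 16 * 8 by norm_num,
          mul_pow]
        ring

end LowerBound

section PolarBody

variable {n : ℕ} {K : Set (EuclideanSpace ℝ (Fin n))}

theorem isClosed_polarBody : IsClosed (polarBody K) := by
  simp only [polarBody, ofPred_forall]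
  exact isClosed_biInter fun y _ => isClosed_le (by fun_prop) continuous_const

theorem convex_polarBody : Convex ℝ (polarBody K) := by
  simp only [polarBody, ofPred_forall]
  exact convex_iInter₂ fun y _ =>
    convex_halfSpace_le ⟨fun a b => inner_add_left a b y, fun c a => real_inner_smul_left a y c⟩ 1

theorem isBounded_polarBody (h0 : 0 ∈ interior K) : Bornology.IsBounded (polarBody K) := by
  obtain ⟨r, hr, hinner⟩ := exists_mem_inner_eq_mul_norm h0
  refine isBounded_iff_forall_norm_le.2 ⟨r⁻¹, fun x hx => ?_⟩
  obtain ⟨y, hy, hxy⟩ := hinner x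
  exact (le_inv_mul_iff₀ hr).2 (hxy ▸ hx y hy) |>.trans_eq (mul_one _)

theorem isCompact_polarBody (h0 : 0 ∈ interior K) : IsCompact (polarBody K) :=
  isCompact_of_isClosed_isBounded isClosed_polarBody (isBounded_polarBody h0)

theorem zero_mem_interior_polarBody (hK : Bornology.IsBounded K) :
    0 ∈ interior (polarBody K) := by
  obtain ⟨R, hR, hnorm⟩ := hK.exists_pos_norm_le
  refine mem_interior_iff_mem_nhds.2 (Filter.mem_of_superset
    (closedBall_mem_nhds 0 (inv_pos.2 hR)) fun x hx y hy => ?_)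
  rw [mem_closedBall_zero_iff] at hx
  calc ⟪x, y⟫ ≤ ‖x‖ * ‖y‖ := real_inner_le_norm x y
    _ ≤ R⁻¹ * R := by gcongr; exact hnorm y hy
    _ = 1 := inv_mul_cancel₀ hR.ne'

theorem polarBody_polarBody (hK : IsClosed K) (hconv : Convex ℝ K) (h0 : 0 ∈ K) :
    polarBody (polarBody K) = K := by
  refine Subset.antisymm (fun x hx => ?_) fun x hx y hy => real_inner_comm x y ▸ hy x hx
  by_contra hxK
  obtain ⟨f, u, hlt, hgt⟩ := geometric_hahn_banach_closed_point hconv hK hxK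
  have hu : 0 < u := by simpa using hlt 0 h0
  let w := (InnerProductSpace.toDual ℝ (EuclideanSpace ℝ (Fin n))).symm f
  have hw (y) : ⟪u⁻¹ • w, y⟫ = u⁻¹ * f y := by simp [w, real_inner_smul_left]
  have hmem : u⁻¹ • w ∈ polarBody K := fun y hy => by
    rw [hw, inv_mul_le_one₀ hu]
    exact (hlt y hy).le
  have hle := hx _ hmem
  rw [real_inner_comm, hw, inv_mul_le_one₀ hu] at hle
  exact hle.not_gt hgt

theorem setOf_supportFunction_le_eq_smul_polarBody (hK : IsCompact K) (hne : K.Nonempty) {t : ℝ}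
    (ht : 0 < t) : {x | supportFunction K x ≤ t} = t • polarBody K := by
  ext x
  rw [mem_ofPred_eq, supportFunction_le_iff hK hne, mem_smul_set_iff_inv_smul_mem₀ ht.ne']
  refine forall₂_congr fun y _ => ?_
  rw [real_inner_smul_left, inv_mul_le_one₀ ht]

theorem setOf_max_supportFunction_le_eq_smul (hK : IsCompact K) (hne : K.Nonempty) {t : ℝ}
    (ht : 0 < t) :
    {x | max (supportFunction K x) (supportFunction K (-x)) / 2 ≤ t} =
      t • (2 : ℝ) • (polarBody K ∩ -polarBody K) := by
  have hsmul := setOf_supportFunction_le_eq_smul_polarBody hK hne (mul_pos ht two_pos)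
  rw [smul_smul, smul_set_inter₀ (by positivity), Set.smul_set_neg, ← hsmul]
  ext x
  simp [div_le_iff₀]

variable (hK : IsCompact K) (h0 : 0 ∈ K)

include hK h0 in
theorem lintegral_exp_neg_supportFunction :
    ∫⁻ x, ENNReal.ofReal (Real.exp (-supportFunction K x)) =
      n.factorial * volume (polarBody K) := by
  have hlayer := lintegral_exp_neg_eq_factorial_mul volume (measurable_supportFunction hK ⟨0, h0⟩)
    (supportFunction_nonneg hK h0)
    fun t ht => setOf_supportFunction_le_eq_smul_polarBody hK ⟨0, h0⟩ ht
  rwa [finrank_euclideanSpace_fin] at hlayer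

include hK h0 in
theorem lintegral_exp_neg_max_supportFunction :
    ∫⁻ x, ENNReal.ofReal
        (Real.exp (-(max (supportFunction K x) (supportFunction K (-x)) / 2))) =
      n.factorial * (2 ^ n * volume (polarBody K ∩ -polarBody K)) := by
  have hmeas := measurable_supportFunction hK ⟨0, h0⟩
  have hnonneg (x) : 0 ≤ max (supportFunction K x) (supportFunction K (-x)) / 2 :=
    div_nonneg (le_max_of_le_left (supportFunction_nonneg hK h0 x)) zero_le_two
  have hlayer := lintegral_exp_neg_eq_factorial_mul volume (by fun_prop) hnonneg
    fun t ht => setOf_max_supportFunction_le_eq_smul hK ⟨0, h0⟩ ht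
  rwa [addHaar_two_smul, finrank_euclideanSpace_fin] at hlayer

end PolarBody

section Symmetrization

variable {n : ℕ} {L : Set (EuclideanSpace ℝ (Fin n))}

theorem volume_polarBody_le_mul_volume_inter_neg (hL : IsCompact L) (hconv : Convex ℝ L)
    (h0 : 0 ∈ interior L) (hbar : ∫ y in L, y = 0) :
    volume (polarBody L) ≤
      ENNReal.ofReal ((1024 * Real.exp 1) ^ n) * volume (polarBody L ∩ -polarBody L) := by
  have hpos : volume L ≠ 0 := (Measure.measure_pos_of_nonempty_interior _ ⟨0, h0⟩).ne'
  have hupper := volume_mul_lintegral_exp_neg_supportFunction_le hL hconv hpos hbar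
  have hlower := ofReal_two_pi_pow_le_volume_mul_lintegral_exp_neg_max_supportFunction
    hL hconv h0 hbar
  rw [lintegral_exp_neg_supportFunction hL (interior_subset h0), finrank_euclideanSpace_fin]
    at hupper
  rw [lintegral_exp_neg_max_supportFunction hL (interior_subset h0), Fintype.card_fin] at hlower
  have hfactor : (8 * Real.pi * Real.exp 1) ^ n = (4 * Real.exp 1) ^ n * (2 * Real.pi) ^ n := by
    rw [← mul_pow]
    ring
  have hconst : ENNReal.ofReal ((1024 * Real.exp 1) ^ n) =
      ENNReal.ofReal ((4 * Real.exp 1) ^ n) * 128 ^ n * 2 ^ n := by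
    rw [show 1024 * Real.exp 1 = 4 * Real.exp 1 * 128 * 2 by ring, mul_pow, mul_pow,
      ENNReal.ofReal_mul (by positivity), ENNReal.ofReal_mul (by positivity),
      ENNReal.ofReal_pow (p := 128) (by norm_num), ENNReal.ofReal_pow (p := 2) (by norm_num),
      ENNReal.ofReal_ofNat, ENNReal.ofReal_ofNat]
  refine (ENNReal.mul_le_mul_iff_right (a := volume L * n.factorial)
    (mul_ne_zero hpos (by positivity)) (ENNReal.mul_ne_top hL.measure_ne_top (by finiteness))).1 ?_
  calc volume L * n.factorial * volume (polarBody L)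
      ≤ ENNReal.ofReal ((8 * Real.pi * Real.exp 1) ^ n) := by rwa [mul_assoc]
    _ = ENNReal.ofReal ((4 * Real.exp 1) ^ n) * ENNReal.ofReal ((2 * Real.pi) ^ n) := by
        rw [hfactor, ENNReal.ofReal_mul (by positivity)]
    _ ≤ ENNReal.ofReal ((4 * Real.exp 1) ^ n) * (128 ^ n * volume L *
          (n.factorial * (2 ^ n * volume (polarBody L ∩ -polarBody L)))) := by gcongr
    _ = _ := by
        rw [hconst]
        ring

end Symmetrization

/-- Rudelson's observation: if the Santaló point of `K` is at the origin (equivalently, the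
barycenter of `K°` is at the origin), then `vol(K ∩ (−K)) ≥ cⁿ·vol(K)`. -/
theorem stmt14 :
    ∃ c : ℝ, 0 < c ∧ ∀ (n : ℕ),
      ∀ K : Set (EuclideanSpace ℝ (Fin n)),
        IsCompact K → Convex ℝ K → (0 : EuclideanSpace ℝ (Fin n)) ∈ interior K →
        (∫ x in polarBody K, x) = 0 →
        ENNReal.ofReal (c ^ n) * volume K ≤ volume (K ∩ -K) := by
  refine ⟨(1024 * Real.exp 1)⁻¹, by positivity, fun n K hK hconv h0 hbar => ?_⟩
  have hvol := volume_polarBody_le_mul_volume_inter_neg (isCompact_polarBody h0) convex_polarBody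
    (zero_mem_interior_polarBody hK.isBounded) hbar
  rw [polarBody_polarBody hK.isClosed hconv (interior_subset h0)] at hvol
  rw [inv_pow, ENNReal.ofReal_inv_of_pos (by positivity)]
  exact ENNReal.inv_mul_le_iff (by positivity) (by finiteness) |>.2 hvol
end
end

section
/- There is an absolute constant c > 0 with the following property. Let K be a convex body in ℝ^n. Then for every 1 ≤ k ≤ n−1 and every k-dimensional linear subspace H of ℝ^n, vol_k((K−K) ∩ H)^{1/k} ≤ c·(n/k)² · vol_k(K ∩ (bar(K)+H))^{1/k}, where K−K = {x−y : x,y ∈ K} is the difference body and bar(K) is the barycenter of K. -/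
open MeasureTheory Metric Set
open scoped ENNReal RealInnerProductSpace Pointwise

noncomputable section

/-- The barycenter of a set. -/
def barycenter {n : ℕ} (K : Set (EuclideanSpace ℝ (Fin n))) : EuclideanSpace ℝ (Fin n) :=
  (volume K).toReal⁻¹ • ∫ x in K, x

/-!
Split `ℝⁿ = H ⊕ W`. The Prékopa–Leindler inequality gives Brunn–Minkowski, so the `k`-th root
`φ w` of the `k`-volume of the section of `K` over `w ∈ W` is concave on its support.

Fradelizi's bound `φ ≤ e (n / k) φ(bar)`: Jensen's inequality bounds `φ(bar)` from below by
`∫ φ ^ (k + 1) / ∫ φ ^ k`. Contracting towards an arbitrary `w₀` with ratio `n / (n + 1)` and using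
concavity of `φ` compares this quotient with `φ w₀`.

Rudelson's bound `vol_k((K - K) ∩ H)^(1 / k) ≤ 2 e (n / k) max φ`: integrate `vol_n(K ∩ (h + K))`
over `h ∈ H`. By Fubini the integral is at most `vol_n(K)` times the largest section volume, while
for `h ∈ a • (K - K)` the set `K ∩ (h + K)` contains a translate of `(1 - a) • K`. The weight
`a = k / (n + k)` gives the constant.
-/

open Module Function

section PrekopaLeindler

theorem volume_add_volume_le_of_isCompact {A B : Set ℝ} (hA : IsCompact A) (hB : IsCompact B)
    (hA₀ : A.Nonempty) (hB₀ : B.Nonempty) : volume A + volume B ≤ volume (A + B) := by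
  obtain ⟨a, haA, ha⟩ := hA.exists_isGreatest hA₀
  obtain ⟨b, hbB, hb⟩ := hB.exists_isLeast hB₀
  have hdisj : AEDisjoint volume (b +ᵥ A) (a +ᵥ B) := by
    refine measure_mono_null (t := {a + b}) ?_ (by simp)
    rintro _ ⟨⟨x, hx, rfl⟩, ⟨y, hy, hxy⟩⟩
    have hxa : x ≤ a := ha hx
    have hby : b ≤ y := hb hy
    simp only [vadd_eq_add, mem_singleton_iff] at hxy ⊢
    linarith
  calc volume A + volume B = volume ((b +ᵥ A) ∪ (a +ᵥ B)) := by
        rw [measure_union₀ (hB.vadd a).measurableSet.nullMeasurableSet hdisj, measure_vadd,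
          measure_vadd]
    _ ≤ volume (A + B) := measure_mono <| union_subset
        (by rintro _ ⟨x, hx, rfl⟩; exact ⟨x, hx, b, hbB, add_comm x b⟩)
        (by rintro _ ⟨y, hy, rfl⟩; exact ⟨a, haA, y, hy, rfl⟩)

theorem volume_add_volume_le {A B : Set ℝ} (hA : MeasurableSet A) (hB : MeasurableSet B)
    (hA₀ : A.Nonempty) (hB₀ : B.Nonempty) : volume A + volume B ≤ volume (A + B) := by
  obtain ⟨a, ha⟩ := hA₀
  obtain ⟨b, hb⟩ := hB₀
  rw [hA.measure_eq_iSup_isCompact, hB.measure_eq_iSup_isCompact]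
  simp only [iSup_and']
  refine ENNReal.biSup_add_biSup_le' ⟨∅, by simp⟩ ⟨∅, by simp⟩ fun A' hA' B' hB' ↦ ?_
  calc volume A' + volume B' ≤ volume (insert a A') + volume (insert b B') := by
        gcongr <;> exact subset_insert _ _
    _ ≤ volume (insert a A' + insert b B') :=
        volume_add_volume_le_of_isCompact (hA'.2.insert a) (hB'.2.insert b)
          (insert_nonempty _ _) (insert_nonempty _ _)
    _ ≤ volume (A + B) := by
        gcongr
        · exact insert_subset ha hA'.1
        · exact insert_subset hb hB'.1

theorem lintegral_eq_lintegral_measure_ofReal_lt {α : Type*} [MeasurableSpace α] (μ : Measure α)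
    {f : α → ℝ≥0∞} (hf : Measurable f) (hf_top : ∀ x, f x ≠ ⊤) :
    ∫⁻ x, f x ∂μ = ∫⁻ s in Ioi (0 : ℝ), μ {x | ENNReal.ofReal s < f x} := by
  calc ∫⁻ x, f x ∂μ = ∫⁻ x, ENNReal.ofReal (f x).toReal ∂μ := by
        simp only [ENNReal.ofReal_toReal (hf_top _)]
    _ = ∫⁻ s in Ioi (0 : ℝ), μ {x | s < (f x).toReal} :=
        lintegral_eq_lintegral_meas_lt μ (.of_forall fun _ ↦ ENNReal.toReal_nonneg)
          hf.ennreal_toReal.aemeasurable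
    _ = _ := setLIntegral_congr_fun measurableSet_Ioi fun s hs ↦ by
        simp only [← ENNReal.ofReal_lt_iff_lt_toReal (le_of_lt hs) (hf_top _)]

theorem ennreal_geom_mean_le_arith_mean2_weighted {a b : ℝ} (ha : 0 < a) (hb : 0 < b)
    (hab : a + b = 1) (x y : ℝ≥0∞) :
    x ^ a * y ^ b ≤ ENNReal.ofReal a * x + ENNReal.ofReal b * y := by
  rcases eq_or_ne x ⊤ with rfl | hx
  · simp [ENNReal.mul_top, ha]
  rcases eq_or_ne y ⊤ with rfl | hy
  · simp [ENNReal.mul_top, hb]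
  lift x to NNReal using hx
  lift y to NNReal using hy
  lift a to NNReal using ha.le
  lift b to NNReal using hb.le
  rw [← ENNReal.coe_rpow_of_nonneg _ ha.le, ← ENNReal.coe_rpow_of_nonneg _ hb.le,
    ENNReal.ofReal_coe_nnreal, ENNReal.ofReal_coe_nnreal]
  exact_mod_cast NNReal.geom_mean_le_arith_mean2_weighted a b x y (by exact_mod_cast hab)

/-- The Prékopa–Leindler inequality with weights `a` and `b`, as a property of the measure `μ`. -/
def PrekopaLeindler {E : Type*} [AddCommGroup E] [Module ℝ E] [MeasurableSpace E]
    (a b : ℝ) (μ : Measure E) : Prop :=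
  ∀ ⦃f g h : E → ℝ≥0∞⦄, Measurable f → Measurable g → Measurable h →
    (∀ x y, f x ^ a * g y ^ b ≤ h (a • x + b • y)) →
    (∫⁻ x, f x ∂μ) ^ a * (∫⁻ x, g x ∂μ) ^ b ≤ ∫⁻ x, h x ∂μ

variable {a b : ℝ}

section Real

variable {f g h : ℝ → ℝ≥0∞}

theorem volume_superlevel_add_le (ha : 0 < a) (hb : 0 < b) (hab : a + b = 1)
    (hf : Measurable f) (hg : Measurable g)
    (hfgh : ∀ x y, f x ^ a * g y ^ b ≤ h (a • x + b • y)) (hf₁ : ⨆ x, f x = 1)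
    (hg₁ : ⨆ x, g x = 1) (s : ℝ) :
    ENNReal.ofReal a * volume {x | ENNReal.ofReal s < f x} +
        ENNReal.ofReal b * volume {x | ENNReal.ofReal s < g x} ≤
      volume {x | ENNReal.ofReal s < min (h x) 1} := by
  rcases le_or_gt 1 (ENNReal.ofReal s) with hs | hs
  · have hf_le (x : ℝ) : f x ≤ ENNReal.ofReal s := (hf₁ ▸ le_iSup f x).trans hs
    have hg_le (x : ℝ) : g x ≤ ENNReal.ofReal s := (hg₁ ▸ le_iSup g x).trans hs
    simp [(hf_le _).not_gt, (hg_le _).not_gt]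
  set F := {x | ENNReal.ofReal s < f x}
  set G := {x | ENNReal.ofReal s < g x}
  obtain ⟨x₀, hx₀⟩ : ∃ x, ENNReal.ofReal s < f x := lt_iSup_iff.1 (hs.trans_eq hf₁.symm)
  obtain ⟨y₀, hy₀⟩ : ∃ y, ENNReal.ofReal s < g y := lt_iSup_iff.1 (hs.trans_eq hg₁.symm)
  have hsub : a • F + b • G ⊆ {x | ENNReal.ofReal s < min (h x) 1} := by
    rintro _ ⟨_, ⟨x, hx, rfl⟩, _, ⟨y, hy, rfl⟩, rfl⟩
    refine lt_min (lt_of_lt_of_le ?_ (hfgh x y)) hs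
    calc ENNReal.ofReal s = ENNReal.ofReal s ^ a * ENNReal.ofReal s ^ b := by
          rw [← ENNReal.rpow_add_of_nonneg _ _ ha.le hb.le, hab, ENNReal.rpow_one]
      _ < f x ^ a * g y ^ b :=
          ENNReal.mul_lt_mul (ENNReal.rpow_lt_rpow hx ha) (ENNReal.rpow_lt_rpow hy hb)
  calc ENNReal.ofReal a * volume F + ENNReal.ofReal b * volume G
      = volume (a • F) + volume (b • G) := by
        simp [abs_of_pos ha, abs_of_pos hb]
    _ ≤ volume (a • F + b • G) :=
        volume_add_volume_le ((measurableSet_lt measurable_const hf).const_smul₀ a)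
          ((measurableSet_lt measurable_const hg).const_smul₀ b) (Nonempty.smul_set ⟨x₀, hx₀⟩)
          (Nonempty.smul_set ⟨y₀, hy₀⟩)
    _ ≤ _ := measure_mono hsub

theorem lintegral_add_lintegral_le_of_iSup_eq_one (ha : 0 < a) (hb : 0 < b) (hab : a + b = 1)
    (hf : Measurable f) (hg : Measurable g) (hh : Measurable h)
    (hfgh : ∀ x y, f x ^ a * g y ^ b ≤ h (a • x + b • y)) (hf₁ : ⨆ x, f x = 1)
    (hg₁ : ⨆ x, g x = 1) :
    ENNReal.ofReal a * (∫⁻ x, f x) + ENNReal.ofReal b * (∫⁻ x, g x) ≤ ∫⁻ x, h x := by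
  have meas_superlevel (φ : ℝ → ℝ≥0∞) :
      Measurable fun s : ℝ ↦ volume {x | ENNReal.ofReal s < φ x} :=
    Antitone.measurable fun s s' hs ↦
      measure_mono fun x hx ↦ (ENNReal.ofReal_le_ofReal hs).trans_lt hx
  have ne_top_of_le_one {r : ℝ≥0∞} (hr : r ≤ 1) : r ≠ ⊤ := ne_top_of_le_ne_top ENNReal.one_ne_top hr
  calc ENNReal.ofReal a * (∫⁻ x, f x) + ENNReal.ofReal b * (∫⁻ x, g x)
      = ∫⁻ s in Ioi (0 : ℝ), (ENNReal.ofReal a * volume {x | ENNReal.ofReal s < f x} +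
          ENNReal.ofReal b * volume {x | ENNReal.ofReal s < g x}) := by
        rw [lintegral_eq_lintegral_measure_ofReal_lt volume hf
            fun x ↦ ne_top_of_le_one (hf₁ ▸ le_iSup f x),
          lintegral_eq_lintegral_measure_ofReal_lt volume hg
            fun x ↦ ne_top_of_le_one (hg₁ ▸ le_iSup g x),
          lintegral_add_left ((meas_superlevel f).const_mul _),
          lintegral_const_mul _ (meas_superlevel f), lintegral_const_mul _ (meas_superlevel g)]
    _ ≤ ∫⁻ s in Ioi (0 : ℝ), volume {x | ENNReal.ofReal s < min (h x) 1} :=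
        lintegral_mono fun s ↦ volume_superlevel_add_le ha hb hab hf hg hfgh hf₁ hg₁ s
    _ = ∫⁻ x, min (h x) 1 :=
        (lintegral_eq_lintegral_measure_ofReal_lt volume (hh.min measurable_const)
          fun x ↦ ne_top_of_le_one (min_le_right _ _)).symm
    _ ≤ ∫⁻ x, h x := lintegral_mono fun x ↦ min_le_left _ _

theorem rpow_lintegral_mul_le_of_iSup_ne_top (ha : 0 < a) (hb : 0 < b) (hab : a + b = 1)
    (hf : Measurable f) (hg : Measurable g) (hh : Measurable h)
    (hfgh : ∀ x y, f x ^ a * g y ^ b ≤ h (a • x + b • y)) (hf_top : ⨆ x, f x ≠ ⊤)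
    (hg_top : ⨆ x, g x ≠ ⊤) :
    (∫⁻ x, f x) ^ a * (∫⁻ x, g x) ^ b ≤ ∫⁻ x, h x := by
  rcases eq_or_ne (⨆ x, f x) 0 with hf₀ | hf₀
  · simp [ENNReal.iSup_eq_zero.1 hf₀, ha]
  rcases eq_or_ne (⨆ x, g x) 0 with hg₀ | hg₀
  · simp [ENNReal.iSup_eq_zero.1 hg₀, hb]
  set p := (⨆ x, f x)⁻¹ with hp
  set q := (⨆ x, g x)⁻¹ with hq
  have mul_rpow_mul (x y : ℝ≥0∞) :
      (p * x) ^ a * (q * y) ^ b = p ^ a * q ^ b * (x ^ a * y ^ b) := by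
    rw [ENNReal.mul_rpow_of_nonneg _ _ ha.le, ENNReal.mul_rpow_of_nonneg _ _ hb.le,
      mul_mul_mul_comm]
  have hnormalized : (p * ∫⁻ x, f x) ^ a * (q * ∫⁻ x, g x) ^ b ≤ p ^ a * q ^ b * ∫⁻ x, h x := by
    rw [← lintegral_const_mul _ hf, ← lintegral_const_mul _ hg, ← lintegral_const_mul _ hh]
    refine (ennreal_geom_mean_le_arith_mean2_weighted ha hb hab _ _).trans <|
      lintegral_add_lintegral_le_of_iSup_eq_one ha hb hab (hf.const_mul _) (hg.const_mul _)
        (hh.const_mul _) (fun x y ↦ ?_) ?_ ?_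
    · rw [mul_rpow_mul]
      gcongr
      exact hfgh x y
    · rw [← ENNReal.mul_iSup, hp, ENNReal.inv_mul_cancel hf₀ hf_top]
    · rw [← ENNReal.mul_iSup, hq, ENNReal.inv_mul_cancel hg₀ hg_top]
  rw [mul_rpow_mul] at hnormalized
  refine (ENNReal.mul_le_mul_iff_right ?_ ?_).1 hnormalized
  · simp [p, q, ENNReal.rpow_eq_zero_iff, hf₀, hg₀, hf_top, hg_top]
  · exact ENNReal.mul_ne_top (ENNReal.rpow_ne_top_of_nonneg ha.le (by simpa [p] using hf₀))
      (ENNReal.rpow_ne_top_of_nonneg hb.le (by simpa [q] using hg₀))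

end Real

theorem prekopaLeindler_volume_real (ha : 0 < a) (hb : 0 < b) (hab : a + b = 1) :
    PrekopaLeindler a b (volume : Measure ℝ) := by
  intro f g h hf hg hh hfgh
  have iSup_rpow_lintegral_min {φ : ℝ → ℝ≥0∞} (hφ : Measurable φ) {c : ℝ} (hc : 0 < c) :
      (∫⁻ x, φ x) ^ c = ⨆ n : ℕ, (∫⁻ x, min (φ x) n) ^ c := by
    have iSup_min (x : ℝ) : ⨆ n : ℕ, min (φ x) n = φ x := by
      rw [← inf_iSup_eq, ENNReal.iSup_natCast, inf_top_eq]
    calc (∫⁻ x, φ x) ^ c = (⨆ n : ℕ, ∫⁻ x, min (φ x) n) ^ c := by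
          rw [← lintegral_iSup (fun n ↦ hφ.min measurable_const)
            fun m n hmn x ↦ min_le_min_left _ (by exact_mod_cast hmn)]
          simp only [iSup_min]
      _ = _ := (ENNReal.orderIsoRpow c hc).map_iSup _
  rw [iSup_rpow_lintegral_min hf ha, iSup_rpow_lintegral_min hg hb]
  simp only [ENNReal.iSup_mul, ENNReal.mul_iSup]
  refine iSup_le fun n ↦ iSup_le fun m ↦ ?_
  have iSup_min_ne_top (φ : ℝ → ℝ≥0∞) (n : ℕ) : ⨆ x, min (φ x) n ≠ ⊤ :=
    ne_top_of_le_ne_top (ENNReal.natCast_ne_top n) (iSup_le fun x ↦ min_le_right _ _)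
  refine rpow_lintegral_mul_le_of_iSup_ne_top ha hb hab (hf.min measurable_const)
    (hg.min measurable_const) hh (fun x y ↦ le_trans ?_ (hfgh x y)) (iSup_min_ne_top f m)
    (iSup_min_ne_top g n)
  gcongr <;> exact min_le_left _ _

theorem prekopaLeindler_of_unique {E : Type*} [AddCommGroup E] [Module ℝ E] [MeasurableSpace E]
    [Unique E] (ha : 0 < a) (hb : 0 < b) (hab : a + b = 1) (μ : Measure E) :
    PrekopaLeindler a b μ := by
  intro f g h _ _ _ hfgh
  simp only [lintegral_unique]
  calc (f default * μ univ) ^ a * (g default * μ univ) ^ b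
      = f default ^ a * g default ^ b * μ univ := by
        rw [ENNReal.mul_rpow_of_nonneg _ _ ha.le, ENNReal.mul_rpow_of_nonneg _ _ hb.le,
          mul_mul_mul_comm, ← ENNReal.rpow_add_of_nonneg _ _ ha.le hb.le, hab, ENNReal.rpow_one]
    _ ≤ h default * μ univ := by
        gcongr
        exact (hfgh default default).trans_eq (congrArg h (Subsingleton.elim _ _))

namespace PrekopaLeindler

section Operations

variable {E F : Type*} [AddCommGroup E] [Module ℝ E] [MeasurableSpace E]
  [AddCommGroup F] [Module ℝ F] [MeasurableSpace F] {μ : Measure E} {ν : Measure F}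

theorem prod [SFinite ν] (hμ : PrekopaLeindler a b μ) (hν : PrekopaLeindler a b ν) :
    PrekopaLeindler a b (μ.prod ν) := by
  intro f g h hf hg hh hfgh
  rw [lintegral_prod _ hf.aemeasurable, lintegral_prod _ hg.aemeasurable,
    lintegral_prod _ hh.aemeasurable]
  exact hμ hf.lintegral_prod_right' hg.lintegral_prod_right' hh.lintegral_prod_right' fun x x' ↦
    hν (hf.comp measurable_prodMk_left) (hg.comp measurable_prodMk_left)
      (hh.comp measurable_prodMk_left) fun y y' ↦ hfgh (x, y) (x', y')

theorem map (hμ : PrekopaLeindler a b μ) (L : E →ₗ[ℝ] F) (hL : Measurable L) :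
    PrekopaLeindler a b (μ.map L) := by
  intro f g h hf hg hh hfgh
  rw [lintegral_map hf hL, lintegral_map hg hL, lintegral_map hh hL]
  refine hμ (hf.comp hL) (hg.comp hL) (hh.comp hL) fun x y ↦ ?_
  simpa using hfgh (L x) (L y)

theorem smul (ha : 0 < a) (hb : 0 < b) (hab : a + b = 1)
    (hμ : PrekopaLeindler a b μ) (c : ℝ≥0∞) : PrekopaLeindler a b (c • μ) := by
  intro f g h hf hg hh hfgh
  simp only [lintegral_smul_measure, smul_eq_mul]
  calc (c * ∫⁻ x, f x ∂μ) ^ a * (c * ∫⁻ x, g x ∂μ) ^ b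
      = c * ((∫⁻ x, f x ∂μ) ^ a * (∫⁻ x, g x ∂μ) ^ b) := by
        rw [ENNReal.mul_rpow_of_nonneg _ _ ha.le, ENNReal.mul_rpow_of_nonneg _ _ hb.le,
          mul_mul_mul_comm, ← ENNReal.rpow_add_of_nonneg _ _ ha.le hb.le, hab, ENNReal.rpow_one]
    _ ≤ c * ∫⁻ x, h x ∂μ := by
        gcongr
        exact hμ hf hg hh hfgh

end Operations

section Haar

variable {E F : Type*} [NormedAddCommGroup E] [NormedSpace ℝ E] [MeasurableSpace E] [BorelSpace E]
  [NormedAddCommGroup F] [NormedSpace ℝ F] [FiniteDimensional ℝ F] [MeasurableSpace F]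
  [BorelSpace F]

theorem of_continuousLinearEquiv (ha : 0 < a) (hb : 0 < b) (hab : a + b = 1) {μ : Measure E}
    [μ.IsAddHaarMeasure] (hμ : PrekopaLeindler a b μ) (e : E ≃L[ℝ] F) (ν : Measure F)
    [ν.IsAddHaarMeasure] : PrekopaLeindler a b ν := by
  have := e.isAddHaarMeasure_map μ
  rw [Measure.isAddLeftInvariant_eq_smul ν (μ.map e)]
  exact (hμ.map e.toLinearEquiv.toLinearMap e.continuous.measurable).smul ha hb hab _

end Haar

end PrekopaLeindler

theorem prekopaLeindler_volume_pi (ha : 0 < a) (hb : 0 < b) (hab : a + b = 1) (d : ℕ) :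
    PrekopaLeindler a b (volume : Measure (Fin d → ℝ)) := by
  induction d with
  | zero => exact prekopaLeindler_of_unique ha hb hab _
  | succ d ih =>
    exact ((prekopaLeindler_volume_real ha hb hab).prod ih).of_continuousLinearEquiv ha hb hab
      (ContinuousLinearEquiv.ofFinrankEq (by simp [add_comm])) volume

variable {E : Type*} [NormedAddCommGroup E] [NormedSpace ℝ E] [FiniteDimensional ℝ E]
  [MeasurableSpace E] [BorelSpace E]

theorem prekopaLeindler_of_isAddHaarMeasure (ha : 0 < a) (hb : 0 < b) (hab : a + b = 1)
    (μ : Measure E) [μ.IsAddHaarMeasure] : PrekopaLeindler a b μ :=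
  (prekopaLeindler_volume_pi ha hb hab (finrank ℝ E)).of_continuousLinearEquiv ha hb hab
    (ContinuousLinearEquiv.ofFinrankEq (by simp)) μ

theorem rpow_measure_mul_rpow_measure_le (ha : 0 < a) (hb : 0 < b) (hab : a + b = 1)
    (μ : Measure E) [μ.IsAddHaarMeasure] {A B : Set E} (hA : IsCompact A) (hB : IsCompact B) :
    μ A ^ a * μ B ^ b ≤ μ (a • A + b • B) := by
  have hmeas {S : Set E} (hS : IsCompact S) : Measurable (S.indicator (1 : E → ℝ≥0∞)) :=
    measurable_one.indicator hS.measurableSet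
  have hAB : IsCompact (a • A + b • B) := (hA.smul a).add (hB.smul b)
  simp only [← lintegral_indicator_one hA.measurableSet,
    ← lintegral_indicator_one hB.measurableSet, ← lintegral_indicator_one hAB.measurableSet]
  refine prekopaLeindler_of_isAddHaarMeasure ha hb hab μ (hmeas hA) (hmeas hB) (hmeas hAB)
    fun x y ↦ ?_
  by_cases hx : x ∈ A
  · by_cases hy : y ∈ B
    · have hxy : a • x + b • y ∈ a • A + b • B :=
        add_mem_add (smul_mem_smul_set hx) (smul_mem_smul_set hy)
      simp [hx, hy, hxy]
    · simp [hy, hb]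
  · simp [hx, ha]

end PrekopaLeindler

section VolumeRoot

variable {E : Type*} [NormedAddCommGroup E] [NormedSpace ℝ E] [MeasurableSpace E] {μ : Measure E}
  {A B S T : Set E}

/-- The root `vol(S)^{1/d}` of the volume of a set in a `d`-dimensional space: it scales like a
length, and the Brunn–Minkowski inequality says that it is superadditive. It is `0` when `d ≠ 0`
and `S` has infinite measure. -/
def volumeRoot (μ : Measure E) (S : Set E) : ℝ := μ.real S ^ (finrank ℝ E : ℝ)⁻¹

theorem volumeRoot_nonneg : 0 ≤ volumeRoot μ S :=
  Real.rpow_nonneg measureReal_nonneg _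

theorem volumeRoot_mono (hST : S ⊆ T) (hT : μ T ≠ ⊤) : volumeRoot μ S ≤ volumeRoot μ T :=
  Real.rpow_le_rpow measureReal_nonneg (measureReal_mono hST hT) (by positivity)

theorem ofReal_volumeRoot (hS : μ S ≠ ⊤) :
    ENNReal.ofReal (volumeRoot μ S) = μ S ^ (finrank ℝ E : ℝ)⁻¹ := by
  rw [volumeRoot, ← ENNReal.ofReal_rpow_of_nonneg measureReal_nonneg (by positivity),
    ofReal_measureReal hS]

theorem volumeRoot_le_volumeRoot_add_left [BorelSpace E] [FiniteDimensional ℝ E]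
    [μ.IsAddHaarMeasure] (hA : IsCompact A) (hB : IsCompact B) (hA₀ : A.Nonempty) :
    volumeRoot μ B ≤ volumeRoot μ (A + B) := by
  obtain ⟨x, hx⟩ := hA₀
  calc volumeRoot μ B = volumeRoot μ (x +ᵥ B) := by
        simp only [volumeRoot, measureReal_def, measure_vadd]
    _ ≤ volumeRoot μ (A + B) := by
        refine volumeRoot_mono ?_ (hA.add hB).measure_lt_top.ne
        rintro _ ⟨y, hy, rfl⟩
        exact add_mem_add hx hy

variable [FiniteDimensional ℝ E] [Nontrivial E]

theorem volumeRoot_pow : volumeRoot μ S ^ finrank ℝ E = μ.real S :=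
  Real.rpow_inv_natCast_pow measureReal_nonneg finrank_pos.ne'

theorem volumeRoot_empty : volumeRoot μ ∅ = 0 := by
  simp [volumeRoot, Real.zero_rpow, finrank_pos.ne']

theorem volumeRoot_le_iff {r : ℝ} (hr : 0 ≤ r) :
    volumeRoot μ S ≤ r ↔ μ.real S ≤ r ^ finrank ℝ E := by
  rw [← volumeRoot_pow, pow_le_pow_iff_left₀ volumeRoot_nonneg hr finrank_pos.ne']

theorem le_volumeRoot_iff {r : ℝ} (hr : 0 ≤ r) :
    r ≤ volumeRoot μ S ↔ r ^ finrank ℝ E ≤ μ.real S := by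
  rw [← volumeRoot_pow, pow_le_pow_iff_left₀ hr volumeRoot_nonneg finrank_pos.ne']

variable [BorelSpace E] [μ.IsAddHaarMeasure]

theorem volumeRoot_smul {r : ℝ} (hr : 0 ≤ r) : volumeRoot μ (r • S) = r * volumeRoot μ S := by
  rw [← pow_left_inj₀ volumeRoot_nonneg (mul_nonneg hr volumeRoot_nonneg)
      (finrank_pos (R := ℝ) (M := E)).ne',
    mul_pow, volumeRoot_pow, volumeRoot_pow, measureReal_def, Measure.addHaar_smul_of_nonneg μ hr,
    ENNReal.toReal_mul, ENNReal.toReal_ofReal (by positivity), measureReal_def]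

theorem one_le_volumeRoot_smul_add_smul {a b : ℝ} (ha : 0 < a) (hb : 0 < b) (hab : a + b = 1)
    (hA : IsCompact A) (hB : IsCompact B) (hA₁ : volumeRoot μ A = 1) (hB₁ : volumeRoot μ B = 1) :
    1 ≤ volumeRoot μ (a • A + b • B) := by
  have measure_eq_one {S : Set E} (hS : volumeRoot μ S = 1) : μ S = 1 := by
    have h := volumeRoot_pow (μ := μ) (S := S)
    rw [hS, one_pow, measureReal_def] at h
    exact (ENNReal.toReal_eq_one_iff _).1 h.symm
  have h := rpow_measure_mul_rpow_measure_le ha hb hab μ hA hB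
  rw [measure_eq_one hA₁, measure_eq_one hB₁, ENNReal.one_rpow, ENNReal.one_rpow, one_mul] at h
  rw [le_volumeRoot_iff zero_le_one, one_pow, measureReal_def]
  exact ENNReal.toReal_mono ((hA.smul a).add (hB.smul b)).measure_lt_top.ne h

theorem volumeRoot_add_volumeRoot_le (hA : IsCompact A) (hB : IsCompact B) (hA₀ : A.Nonempty)
    (hB₀ : B.Nonempty) : volumeRoot μ A + volumeRoot μ B ≤ volumeRoot μ (A + B) := by
  set α := volumeRoot μ A with hα
  set β := volumeRoot μ B with hβ
  have hα_nonneg : 0 ≤ α := volumeRoot_nonneg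
  have hβ_nonneg : 0 ≤ β := volumeRoot_nonneg
  rcases hα_nonneg.eq_or_lt with hα₀ | hα₀
  · rw [← hα₀, zero_add]
    exact volumeRoot_le_volumeRoot_add_left hA hB hA₀
  rcases hβ_nonneg.eq_or_lt with hβ₀ | hβ₀
  · rw [← hβ₀, add_zero, add_comm A B]
    exact volumeRoot_le_volumeRoot_add_left hB hA hB₀
  have hαβ : 0 < α + β := add_pos hα₀ hβ₀
  have hsum : A + B = (α + β) • ((α / (α + β)) • α⁻¹ • A + (β / (α + β)) • β⁻¹ • B) := by
    have hα_coeff : (α + β) * (α / (α + β) * α⁻¹) = 1 := by field_simp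
    have hβ_coeff : (α + β) * (β / (α + β) * β⁻¹) = 1 := by field_simp
    simp only [smul_add, smul_smul, hα_coeff, hβ_coeff, one_smul]
  rw [hsum, volumeRoot_smul hαβ.le]
  refine le_mul_of_one_le_right hαβ.le <| one_le_volumeRoot_smul_add_smul (by positivity)
    (by positivity) (by field_simp) (hA.smul _) (hB.smul _) ?_ ?_
  · rw [volumeRoot_smul (by positivity), ← hα, inv_mul_cancel₀ hα₀.ne']
  · rw [volumeRoot_smul (by positivity), ← hβ, inv_mul_cancel₀ hβ₀.ne']

end VolumeRoot

section Slice

/-- The section of `K ⊆ U × V` by the fibre `U × {v}`, viewed as a subset of `U`. -/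
def slice {U V : Type*} (K : Set (U × V)) (v : V) : Set U := (fun u ↦ (u, v)) ⁻¹' K

theorem slice_subset_fst_image {U V : Type*} (K : Set (U × V)) (v : V) :
    slice K v ⊆ Prod.fst '' K :=
  fun u hu ↦ ⟨(u, v), hu, rfl⟩

theorem slice_nonempty_iff {U V : Type*} {K : Set (U × V)} {v : V} :
    (slice K v).Nonempty ↔ v ∈ Prod.snd '' K := by
  constructor
  · rintro ⟨u, hu⟩
    exact ⟨(u, v), hu, rfl⟩
  · rintro ⟨⟨u, _⟩, hu, rfl⟩
    exact ⟨u, hu⟩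

theorem measurableSet_slice {U V : Type*} [MeasurableSpace U] [MeasurableSpace V] {K : Set (U × V)}
    (hK : MeasurableSet K) (v : V) : MeasurableSet (slice K v) :=
  measurable_prodMk_right hK

section Topology

variable {U V : Type*} [TopologicalSpace U] [TopologicalSpace V] [T2Space V]
  {K : Set (U × V)}

theorem isCompact_slice [T2Space U] (hK : IsCompact K) (v : V) : IsCompact (slice K v) :=
  (hK.image continuous_fst).of_isClosed_subset (hK.isClosed.preimage (by fun_prop))
    (slice_subset_fst_image K v)

theorem upperSemicontinuous_measure_slice [MeasurableSpace U] (μ : Measure U)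
    [μ.OuterRegular] (hK : IsCompact K) : UpperSemicontinuous fun v ↦ μ (slice K v) := by
  intro v y hy
  obtain ⟨O, hO, hO_open, hO_lt⟩ := exists_isOpen_lt_of_lt _ _ hy
  have hclosed : IsClosed (Prod.snd '' (K \ Prod.fst ⁻¹' O)) :=
    ((hK.diff (hO_open.preimage continuous_fst)).image continuous_snd).isClosed
  have hv : v ∈ (Prod.snd '' (K \ Prod.fst ⁻¹' O))ᶜ := by
    rintro ⟨⟨u, w⟩, ⟨huK, huO⟩, rfl⟩
    exact huO (hO huK)
  filter_upwards [hclosed.isOpen_compl.mem_nhds hv] with w hw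
  have hwO : slice K w ⊆ O := fun u hu ↦ by_contra fun huO ↦ hw ⟨(u, w), ⟨hu, huO⟩, rfl⟩
  exact (measure_mono hwO).trans_lt hO_lt

end Topology

theorem setIntegral_comp_snd {U V : Type*} [MeasurableSpace U] [MeasurableSpace V] {μ : Measure U}
    {ν : Measure V} [SFinite μ] [SFinite ν] {K : Set (U × V)} {φ : V → ℝ} (hK : MeasurableSet K)
    (hφ : IntegrableOn (fun z ↦ φ z.2) K (μ.prod ν)) :
    ∫ z in K, φ z.2 ∂μ.prod ν = ∫ v, φ v * μ.real (slice K v) ∂ν := by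
  rw [← integral_indicator hK, integral_prod_symm _ (hφ.integrable_indicator hK)]
  refine integral_congr_ae (.of_forall fun v ↦ ?_)
  calc ∫ u, K.indicator (fun z ↦ φ z.2) (u, v) ∂μ
      = ∫ u, (slice K v).indicator (fun _ ↦ φ v) u ∂μ := rfl
    _ = φ v * μ.real (slice K v) := by
        rw [integral_indicator_const _ (measurableSet_slice hK v), smul_eq_mul, mul_comm]

variable {U V : Type*} [NormedAddCommGroup U] [NormedSpace ℝ U] [MeasurableSpace U]
  {K : Set (U × V)} {μ : Measure U}

theorem volumeRoot_slice_eq_zero [FiniteDimensional ℝ U] [Nontrivial U] {v : V}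
    (hv : v ∉ Prod.snd '' K) : volumeRoot μ (slice K v) = 0 := by
  rw [← slice_nonempty_iff, not_nonempty_iff_eq_empty] at hv
  rw [hv, volumeRoot_empty]

theorem volumeRoot_slice_le_fst_image [TopologicalSpace V] [IsFiniteMeasureOnCompacts μ]
    (hK : IsCompact K) (v : V) : volumeRoot μ (slice K v) ≤ volumeRoot μ (Prod.fst '' K) :=
  volumeRoot_mono (slice_subset_fst_image K v) (hK.image continuous_fst).measure_lt_top.ne

variable [FiniteDimensional ℝ U] [BorelSpace U] [NormedAddCommGroup V] [μ.IsAddHaarMeasure]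

theorem upperSemicontinuous_volumeRoot_slice (hK : IsCompact K) :
    UpperSemicontinuous fun v ↦ volumeRoot μ (slice K v) := by
  have husc : UpperSemicontinuous fun v ↦ ENNReal.ofReal (volumeRoot μ (slice K v)) := by
    simp only [ofReal_volumeRoot (isCompact_slice hK _).measure_lt_top.ne]
    exact ENNReal.continuous_rpow_const.comp_upperSemicontinuous
      (upperSemicontinuous_measure_slice μ hK) (ENNReal.monotone_rpow_of_nonneg (by positivity))
  intro v y hy
  have hy₀ : 0 < y := volumeRoot_nonneg.trans_lt hy
  filter_upwards [husc v _ ((ENNReal.ofReal_lt_ofReal_iff hy₀).2 hy)] with w hw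
  exact (ENNReal.ofReal_lt_ofReal_iff hy₀).1 hw

theorem concaveOn_volumeRoot_slice [Nontrivial U] [NormedSpace ℝ V] (hK : IsCompact K)
    (hKc : Convex ℝ K) : ConcaveOn ℝ (Prod.snd '' K) fun v ↦ volumeRoot μ (slice K v) := by
  refine ⟨hKc.linear_image (LinearMap.snd ℝ U V), fun v hv w hw a b ha hb hab ↦ ?_⟩
  have hsub : a • slice K v + b • slice K w ⊆ slice K (a • v + b • w) := by
    rintro _ ⟨_, ⟨x, hx, rfl⟩, _, ⟨y, hy, rfl⟩, rfl⟩
    exact hKc hx hy ha hb hab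
  calc a • volumeRoot μ (slice K v) + b • volumeRoot μ (slice K w)
      = volumeRoot μ (a • slice K v) + volumeRoot μ (b • slice K w) := by
        rw [volumeRoot_smul ha, volumeRoot_smul hb, smul_eq_mul, smul_eq_mul]
    _ ≤ volumeRoot μ (a • slice K v + b • slice K w) :=
        volumeRoot_add_volumeRoot_le ((isCompact_slice hK v).smul a) ((isCompact_slice hK w).smul b)
          (slice_nonempty_iff.2 hv).smul_set (slice_nonempty_iff.2 hw).smul_set
    _ ≤ volumeRoot μ (slice K (a • v + b • w)) :=
        volumeRoot_mono hsub (isCompact_slice hK _).measure_lt_top.ne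

end Slice

section Fradelizi

theorem setAverage_le_of_concaveOn_of_upperSemicontinuousOn {α E : Type*} [MeasurableSpace α]
    {μ : Measure α} [NormedAddCommGroup E] [NormedSpace ℝ E] [CompleteSpace E] {s : Set E}
    {g : E → ℝ} {t : Set α} {f : α → E} (hg : ConcaveOn ℝ s g) (hgs : UpperSemicontinuousOn g s)
    (hs : IsClosed s) (ht₀ : μ t ≠ 0) (ht : μ t ≠ ⊤) (hfs : ∀ᵐ x ∂μ.restrict t, f x ∈ s)
    (hf : IntegrableOn f t μ) (hgf : IntegrableOn (fun x ↦ g (f x)) t μ) :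
    ⨍ x in t, g (f x) ∂μ ≤ g (⨍ x in t, f x ∂μ) := by
  have hmem : ⨍ x in t, (f x, g (f x)) ∂μ ∈ {p : E × ℝ | p.1 ∈ s ∧ p.2 ≤ g p.1} :=
    hg.convex_hypograph.set_average_mem
      ((upperSemicontinuousOn_iff_isClosed_hypograph hs).1 hgs) ht₀ ht
      (hfs.mono fun x hx ↦ ⟨hx, le_rfl⟩) (hf.prodMk hgf)
  rw [average_pair hf hgf] at hmem
  exact hmem.2

theorem succ_mul_pow_mul_le_add_pow {x y : ℝ} (hx : 0 ≤ x) (hy : 0 ≤ y) (k : ℕ) :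
    (k + 1) * x ^ k * y ≤ (x + y) ^ (k + 1) := by
  have h := pow_add_mul_le_add_pow hx (b := y) (by positivity) (k + 1)
  have hxk : 0 ≤ x ^ (k + 1) := by positivity
  push_cast [Nat.add_sub_cancel] at h
  linarith

section Concave

variable {V : Type*} [NormedAddCommGroup V] [NormedSpace ℝ V] {P : Set V} {φ : V → ℝ} {a b : ℝ}
  {v₀ : V} {k : ℕ}

theorem mul_pow_le_pow_succ_of_concaveOn (hφ : ConcaveOn ℝ P φ) (hφ_nonneg : ∀ v, 0 ≤ φ v)
    (hφ_zero : ∀ v ∉ P, φ v = 0) (ha : 0 ≤ a) (hb : 0 ≤ b) (hab : a + b = 1) (hk : k ≠ 0)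
    (v : V) :
    (k + 1) * a * φ v₀ * b ^ k * φ v ^ k ≤ φ (a • v₀ + b • v) ^ (k + 1) := by
  have hpow_nonneg : 0 ≤ φ (a • v₀ + b • v) ^ (k + 1) := pow_nonneg (hφ_nonneg _) _
  by_cases hv₀ : v₀ ∈ P
  · by_cases hv : v ∈ P
    · have hφv := hφ_nonneg v
      have hφv₀ := hφ_nonneg v₀
      calc (k + 1) * a * φ v₀ * b ^ k * φ v ^ k = (k + 1) * (b * φ v) ^ k * (a * φ v₀) := by ring
        _ ≤ (b * φ v + a * φ v₀) ^ (k + 1) :=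
            succ_mul_pow_mul_le_add_pow (by positivity) (by positivity) k
        _ ≤ φ (a • v₀ + b • v) ^ (k + 1) := by
            rw [add_comm]
            gcongr
            exact hφ.2 hv₀ hv ha hb hab
    · simpa [hφ_zero v hv, hk] using hpow_nonneg
  · simpa [hφ_zero v₀ hv₀] using hpow_nonneg

theorem mul_integral_pow_le_integral_pow_succ [FiniteDimensional ℝ V] [MeasurableSpace V]
    [BorelSpace V] {ν : Measure V} [ν.IsAddHaarMeasure] (hφ : ConcaveOn ℝ P φ)
    (hφ_nonneg : ∀ v, 0 ≤ φ v) (hφ_zero : ∀ v ∉ P, φ v = 0) (ha : 0 ≤ a) (hb : 0 < b)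
    (hab : a + b = 1) (hk : k ≠ 0) (hφk : Integrable (fun v ↦ φ v ^ k) ν)
    (hφk' : Integrable (fun v ↦ φ v ^ (k + 1)) ν) (v₀ : V) :
    (k + 1) * a * φ v₀ * b ^ (k + finrank ℝ V) * ∫ v, φ v ^ k ∂ν ≤ ∫ v, φ v ^ (k + 1) ∂ν := by
  have hscaled : (k + 1) * a * φ v₀ * b ^ k * ∫ v, φ v ^ k ∂ν ≤
      (b ^ finrank ℝ V)⁻¹ * ∫ v, φ v ^ (k + 1) ∂ν := by
    calc (k + 1) * a * φ v₀ * b ^ k * ∫ v, φ v ^ k ∂ν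
        = ∫ v, (k + 1) * a * φ v₀ * b ^ k * φ v ^ k ∂ν := (integral_const_mul _ _).symm
      _ ≤ ∫ v, φ (a • v₀ + b • v) ^ (k + 1) ∂ν :=
          integral_mono (hφk.const_mul _) ((hφk'.comp_add_left (a • v₀)).comp_smul hb.ne')
            fun v ↦ mul_pow_le_pow_succ_of_concaveOn hφ hφ_nonneg hφ_zero ha hb.le hab hk v
      _ = (b ^ finrank ℝ V)⁻¹ * ∫ v, φ v ^ (k + 1) ∂ν := by
          rw [Measure.integral_comp_smul ν (fun v ↦ φ (a • v₀ + v) ^ (k + 1)) b,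
            integral_add_left_eq_self (fun v ↦ φ v ^ (k + 1)), abs_of_pos (by positivity),
            smul_eq_mul]
  rw [inv_mul_eq_div, le_div_iff₀ (by positivity)] at hscaled
  calc (k + 1) * a * φ v₀ * b ^ (k + finrank ℝ V) * ∫ v, φ v ^ k ∂ν
      = (k + 1) * a * φ v₀ * b ^ k * (∫ v, φ v ^ k ∂ν) * b ^ finrank ℝ V := by ring
    _ ≤ _ := hscaled

end Concave

theorem one_add_div_pow_le_exp {x : ℝ} (hx : 0 ≤ x) (n : ℕ) : (1 + x / n) ^ n ≤ Real.exp x := by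
  have h := Real.one_sub_div_pow_le_exp_neg ((neg_nonpos.2 hx).trans n.cast_nonneg)
  simpa [neg_div] using h

variable {U V : Type*} [NormedAddCommGroup U] [NormedSpace ℝ U] [FiniteDimensional ℝ U]
  [MeasurableSpace U] [BorelSpace U] [NormedAddCommGroup V] [MeasurableSpace V] [BorelSpace V]
  {K : Set (U × V)} {μ : Measure U} [μ.IsAddHaarMeasure] {ν : Measure V} [ν.IsAddHaarMeasure]

theorem integrableOn_volumeRoot_slice_snd (hK : IsCompact K) :
    IntegrableOn (fun z : U × V ↦ volumeRoot μ (slice K z.2)) K (μ.prod ν) := by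
  refine Measure.integrableOn_of_bounded (M := volumeRoot μ (Prod.fst '' K)) hK.measure_lt_top.ne
    ((upperSemicontinuous_volumeRoot_slice hK).measurable.comp measurable_snd).aestronglyMeasurable
    (.of_forall fun z ↦ ?_)
  rw [Real.norm_of_nonneg volumeRoot_nonneg]
  exact volumeRoot_slice_le_fst_image hK z.2

variable [Nontrivial U]

theorem integrable_volumeRoot_slice_pow (hK : IsCompact K) {j : ℕ} (hj : j ≠ 0) :
    Integrable (fun v ↦ volumeRoot μ (slice K v) ^ j) ν := by
  have hsupport : support (fun v ↦ volumeRoot μ (slice K v) ^ j) ⊆ Prod.snd '' K := by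
    refine fun v hv ↦ by_contra fun hvK ↦ hv ?_
    simp only [volumeRoot_slice_eq_zero hvK, zero_pow hj]
  rw [← integrableOn_iff_integrable_of_support_subset hsupport]
  refine Measure.integrableOn_of_bounded (M := volumeRoot μ (Prod.fst '' K) ^ j)
    (hK.image continuous_snd).measure_lt_top.ne
    ((upperSemicontinuous_volumeRoot_slice hK).measurable.pow_const j).aestronglyMeasurable
    (.of_forall fun v ↦ ?_)
  rw [Real.norm_of_nonneg (pow_nonneg volumeRoot_nonneg j)]
  gcongr
  exacts [volumeRoot_nonneg, volumeRoot_slice_le_fst_image hK v]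

variable [NormedSpace ℝ V] [FiniteDimensional ℝ V]

theorem integral_volumeRoot_slice_pow_finrank (hK : IsCompact K) :
    ∫ v, volumeRoot μ (slice K v) ^ finrank ℝ U ∂ν = (μ.prod ν).real K := by
  have h := setIntegral_comp_snd (φ := fun _ ↦ 1) hK.measurableSet
    (integrableOn_const (μ := μ.prod ν) hK.measure_lt_top.ne)
  simpa [volumeRoot_pow] using h.symm

theorem integral_volumeRoot_slice_pow_succ_le (hK : IsCompact K) (hKc : Convex ℝ K)
    (hK₀ : (μ.prod ν) K ≠ 0) :
    ∫ v, volumeRoot μ (slice K v) ^ (finrank ℝ U + 1) ∂ν ≤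
      volumeRoot μ (slice K (⨍ z in K, z.2 ∂μ.prod ν)) * (μ.prod ν).real K := by
  have hK_top : (μ.prod ν) K ≠ ⊤ := hK.measure_lt_top.ne
  have hK_pos : 0 < (μ.prod ν).real K := ENNReal.toReal_pos hK₀ hK_top
  have hjensen := setAverage_le_of_concaveOn_of_upperSemicontinuousOn
    (concaveOn_volumeRoot_slice (μ := μ) hK hKc)
    ((upperSemicontinuous_volumeRoot_slice hK).upperSemicontinuousOn _)
    (hK.image continuous_snd).isClosed hK₀ hK_top
    (ae_restrict_of_forall_mem hK.measurableSet fun z hz ↦ mem_image_of_mem Prod.snd hz)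
    (continuous_snd.continuousOn.integrableOn_compact hK) (integrableOn_volumeRoot_slice_snd hK)
  rw [setAverage_eq, smul_eq_mul, inv_mul_le_iff₀' hK_pos] at hjensen
  calc ∫ v, volumeRoot μ (slice K v) ^ (finrank ℝ U + 1) ∂ν
      = ∫ v, volumeRoot μ (slice K v) * μ.real (slice K v) ∂ν := by
        simp only [pow_succ', volumeRoot_pow]
    _ = ∫ z in K, volumeRoot μ (slice K z.2) ∂μ.prod ν :=
        (setIntegral_comp_snd hK.measurableSet (integrableOn_volumeRoot_slice_snd hK)).symm
    _ ≤ _ := hjensen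

theorem exp_neg_one_mul_div_le {k n : ℕ} (hk : k ≠ 0) (hkn : k ≤ n) :
    Real.exp (-1) * (k / n) ≤ (k + 1) * (1 / (n + 1)) * ((n : ℝ) / (n + 1)) ^ n := by
  have hk₀ : (0 : ℝ) < k := by positivity
  have hkn' : (k : ℝ) ≤ n := by exact_mod_cast hkn
  have hn₀ : (0 : ℝ) < n := hk₀.trans_le hkn'
  have hexp : Real.exp (-1) ≤ ((n : ℝ) / (n + 1)) ^ n := by
    rw [Real.exp_neg, ← inv_div, inv_pow]
    gcongr
    simpa [add_div, hn₀.ne', add_comm] using one_add_div_pow_le_exp zero_le_one n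
  have hratio : (k : ℝ) / n ≤ (k + 1) * (1 / (n + 1)) := by
    rw [mul_one_div, div_le_div_iff₀ hn₀ (by positivity)]
    linarith
  rw [mul_comm]
  gcongr

theorem volumeRoot_slice_le_volumeRoot_slice_average (hK : IsCompact K) (hKc : Convex ℝ K)
    (hK₀ : (μ.prod ν) K ≠ 0) (v : V) :
    volumeRoot μ (slice K v) ≤ Real.exp 1 * (finrank ℝ (U × V) / finrank ℝ U) *
      volumeRoot μ (slice K (⨍ z in K, z.2 ∂μ.prod ν)) := by
  set k := finrank ℝ U
  set n := finrank ℝ (U × V)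
  have hk : k ≠ 0 := finrank_pos.ne'
  have hn : n = k + finrank ℝ V := finrank_prod
  have hn₀ : (0 : ℝ) < n := by rw [hn]; positivity
  have hK_pos : 0 < (μ.prod ν).real K := ENNReal.toReal_pos hK₀ hK.measure_lt_top.ne
  have hscale : (k + 1) * (1 / (n + 1)) * volumeRoot μ (slice K v) * (n / (n + 1)) ^ n *
      (μ.prod ν).real K ≤ ∫ v, volumeRoot μ (slice K v) ^ (k + 1) ∂ν := by
    have h := mul_integral_pow_le_integral_pow_succ (concaveOn_volumeRoot_slice hK hKc)
      (fun _ ↦ volumeRoot_nonneg) (fun _ ↦ volumeRoot_slice_eq_zero)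
      (a := 1 / (n + 1)) (b := n / (n + 1)) (by positivity) (by positivity) (by field_simp; ring) hk
      (integrable_volumeRoot_slice_pow (μ := μ) (ν := ν) hK hk)
      (integrable_volumeRoot_slice_pow hK k.succ_ne_zero) v
    rwa [integral_volumeRoot_slice_pow_finrank hK, ← hn] at h
  have hbound := le_of_mul_le_mul_right
    (hscale.trans (integral_volumeRoot_slice_pow_succ_le hK hKc hK₀)) hK_pos
  calc volumeRoot μ (slice K v)
      = Real.exp 1 * (n / k) * (Real.exp (-1) * (k / n) * volumeRoot μ (slice K v)) := by
        rw [Real.exp_neg]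
        field_simp
    _ ≤ Real.exp 1 * (n / k) *
          ((k + 1) * (1 / (n + 1)) * (n / (n + 1)) ^ n * volumeRoot μ (slice K v)) := by
        gcongr _ * (?_ * _)
        · exact volumeRoot_nonneg
        · exact exp_neg_one_mul_div_le hk (by lia)
    _ ≤ _ := by
        gcongr
        rwa [mul_right_comm]

end Fradelizi

section Rudelson

theorem lintegral_measure_inter_vadd {U V : Type*} [AddCommGroup U] [MeasurableSpace U]
    [MeasurableAdd₂ U] [MeasurableNeg U] [AddCommGroup V] [MeasurableSpace V] {μ : Measure U}
    {ν : Measure V} [SFinite μ] [SFinite ν] [μ.IsAddLeftInvariant] [μ.IsNegInvariant]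
    {K : Set (U × V)} (hK : MeasurableSet K) :
    ∫⁻ h, (μ.prod ν) (K ∩ ((h, (0 : V)) +ᵥ K)) ∂μ = ∫⁻ z in K, μ (slice K z.2) ∂μ.prod ν := by
  let D : Set (U × U × V) := {p | p.2 ∈ K ∧ (p.2.1 - p.1, p.2.2) ∈ K}
  have hD : MeasurableSet D := (measurable_snd hK).inter
    ((by fun_prop : Measurable fun p : U × U × V ↦ (p.2.1 - p.1, p.2.2)) hK)
  have hD_left (h : U) : Prod.mk h ⁻¹' D = K ∩ ((h, (0 : V)) +ᵥ K) := by
    ext z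
    have hsub : -(h, (0 : V)) +ᵥ z = (z.1 - h, z.2) := by
      ext <;> simp [sub_eq_neg_add]
    rw [mem_inter_iff, mem_vadd_set_iff_neg_vadd_mem, hsub]
    rfl
  have hD_right (z : U × V) :
      μ ((fun h ↦ (h, z)) ⁻¹' D) = K.indicator (fun z ↦ μ (slice K z.2)) z := by
    by_cases hz : z ∈ K
    · rw [indicator_of_mem hz, ← (Measure.measurePreserving_sub_left μ z.1).measure_preimage
        (measurableSet_slice hK z.2).nullMeasurableSet]
      congr 1
      ext h
      simp [D, slice, hz]
    · simp [D, hz]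
  calc ∫⁻ h, (μ.prod ν) (K ∩ ((h, (0 : V)) +ᵥ K)) ∂μ = (μ.prod (μ.prod ν)) D := by
        simp only [Measure.prod_apply hD, hD_left]
    _ = ∫⁻ z in K, μ (slice K z.2) ∂μ.prod ν := by
        simp only [Measure.prod_apply_symm hD, hD_right, lintegral_indicator hK]

theorem ofReal_pow_mul_measure_le_measure_inter_vadd {E : Type*} [NormedAddCommGroup E]
    [NormedSpace ℝ E] [FiniteDimensional ℝ E] [MeasurableSpace E] [BorelSpace E] (μ : Measure E)
    [μ.IsAddHaarMeasure] {K : Set E} (hK : Convex ℝ K) {x : E} (hx : x ∈ K - K) {a b : ℝ}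
    (ha : 0 ≤ a) (hb : 0 ≤ b) (hab : a + b = 1) :
    ENNReal.ofReal (b ^ finrank ℝ E) * μ K ≤ μ (K ∩ (a • x +ᵥ K)) := by
  obtain ⟨y, hy, y', hy', rfl⟩ := hx
  have hsub : a • y +ᵥ b • K ⊆ K ∩ (a • (y - y') +ᵥ K) := by
    rintro _ ⟨_, ⟨z, hz, rfl⟩, rfl⟩
    refine ⟨hK hy hz ha hb hab, a • y' + b • z, hK hy' hz ha hb hab, ?_⟩
    simp only [vadd_eq_add, smul_sub]
    abel
  calc ENNReal.ofReal (b ^ finrank ℝ E) * μ K = μ (a • y +ᵥ b • K) := by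
        rw [measure_vadd, Measure.addHaar_smul_of_nonneg μ hb]
    _ ≤ μ (K ∩ (a • (y - y') +ᵥ K)) := measure_mono hsub

variable {U V : Type*} [NormedAddCommGroup U] [NormedSpace ℝ U] [FiniteDimensional ℝ U]
  [MeasurableSpace U] [BorelSpace U] [NormedAddCommGroup V] [NormedSpace ℝ V]
  [FiniteDimensional ℝ V] [MeasurableSpace V] [BorelSpace V]
  {K : Set (U × V)} {μ : Measure U} [μ.IsAddHaarMeasure] (ν : Measure V) [ν.IsAddHaarMeasure]

theorem isCompact_sub {G : Type*} [AddGroup G] [TopologicalSpace G] [IsTopologicalAddGroup G]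
    {s t : Set G} (hs : IsCompact s) (ht : IsCompact t) : IsCompact (s - t) := by
  rw [sub_eq_add_neg]
  exact hs.add ht.neg

theorem ofReal_mul_measure_slice_sub_self_le (hK : IsCompact K) (hKc : Convex ℝ K)
    (hK₀ : (μ.prod ν) K ≠ 0) {S : ℝ≥0∞}
    (hS : ∀ v, μ (slice K v) ≤ S) {a b : ℝ} (ha : 0 ≤ a) (hb : 0 ≤ b) (hab : a + b = 1) :
    ENNReal.ofReal (a ^ finrank ℝ U * b ^ finrank ℝ (U × V)) * μ (slice (K - K) 0) ≤ S := by
  have hD : MeasurableSet (a • slice (K - K) 0) :=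
    ((isCompact_slice (isCompact_sub hK hK) 0).smul a).measurableSet
  have hlower {h : U} (hh : h ∈ a • slice (K - K) 0) :
      ENNReal.ofReal (b ^ finrank ℝ (U × V)) * (μ.prod ν) K ≤
        (μ.prod ν) (K ∩ ((h, (0 : V)) +ᵥ K)) := by
    obtain ⟨u, hu, rfl⟩ := hh
    simpa using ofReal_pow_mul_measure_le_measure_inter_vadd (μ.prod ν) hKc hu ha hb hab
  refine (ENNReal.mul_le_mul_iff_left hK₀ hK.measure_lt_top.ne).1 ?_
  calc ENNReal.ofReal (a ^ finrank ℝ U * b ^ finrank ℝ (U × V)) * μ (slice (K - K) 0) *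
        (μ.prod ν) K
      = ENNReal.ofReal (b ^ finrank ℝ (U × V)) * (μ.prod ν) K * μ (a • slice (K - K) 0) := by
        rw [Measure.addHaar_smul_of_nonneg μ ha, ENNReal.ofReal_mul (by positivity)]
        ring
    _ = ∫⁻ _ in a • slice (K - K) 0, ENNReal.ofReal (b ^ finrank ℝ (U × V)) * (μ.prod ν) K ∂μ :=
        (setLIntegral_const _ _).symm
    _ ≤ ∫⁻ h in a • slice (K - K) 0, (μ.prod ν) (K ∩ ((h, (0 : V)) +ᵥ K)) ∂μ :=
        setLIntegral_mono' hD fun h ↦ hlower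
    _ ≤ ∫⁻ h, (μ.prod ν) (K ∩ ((h, (0 : V)) +ᵥ K)) ∂μ := setLIntegral_le_lintegral _ _
    _ = ∫⁻ z in K, μ (slice K z.2) ∂μ.prod ν := lintegral_measure_inter_vadd hK.measurableSet
    _ ≤ ∫⁻ _ in K, S ∂μ.prod ν := lintegral_mono fun z ↦ hS z.2
    _ = S * (μ.prod ν) K := setLIntegral_const _ _

theorem one_le_mul_div_pow_mul_div_pow {k n : ℕ} (hk : k ≠ 0) (hkn : k ≤ n) :
    1 ≤ (2 * Real.exp 1 * (n / k)) ^ k * ((k / (n + k) : ℝ) ^ k * ((n : ℝ) / (n + k)) ^ n) := by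
  have hk₀ : (0 : ℝ) < k := by positivity
  have hkn' : (k : ℝ) ≤ n := by exact_mod_cast hkn
  have hn₀ : (0 : ℝ) < n := hk₀.trans_le hkn'
  have hfactor_k : ((n + k : ℝ) / k) ^ k ≤ (2 * (n / k)) ^ k := by
    rw [← mul_div_assoc]
    gcongr
    linarith
  have hfactor_n : ((n + k : ℝ) / n) ^ n ≤ Real.exp 1 ^ k := by
    have h := one_add_div_pow_le_exp hk₀.le n
    rw [Real.exp_one_pow]
    rwa [one_add_div hn₀.ne'] at h
  calc (1 : ℝ) = ((n + k) / k) ^ k * ((n + k) / n) ^ n *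
        ((k / (n + k)) ^ k * (n / (n + k)) ^ n) := by
        simp only [div_pow]
        field_simp
    _ ≤ (2 * (n / k)) ^ k * Real.exp 1 ^ k * ((k / (n + k)) ^ k * (n / (n + k)) ^ n) := by
        gcongr
    _ = _ := by rw [← mul_pow, mul_right_comm]

variable [Nontrivial U]

theorem volumeRoot_slice_sub_self_le (hK : IsCompact K) (hKc : Convex ℝ K)
    (hK₀ : (μ.prod ν) K ≠ 0) {M : ℝ}
    (hM : ∀ v, volumeRoot μ (slice K v) ≤ M) :
    volumeRoot μ (slice (K - K) 0) ≤
      2 * Real.exp 1 * (finrank ℝ (U × V) / finrank ℝ U) * M := by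
  have hM₀ : 0 ≤ M := volumeRoot_nonneg.trans (hM 0)
  set k := finrank ℝ U with hk_def
  set n := finrank ℝ (U × V) with hn_def
  have hk : k ≠ 0 := finrank_pos.ne'
  have hkn : k ≤ n := by simp [hk_def, hn_def]
  have hk₀ : (0 : ℝ) < k := by positivity
  have hn₀ : (0 : ℝ) < n := hk₀.trans_le (by exact_mod_cast hkn)
  have hS (v : V) : μ (slice K v) ≤ ENNReal.ofReal (M ^ k) := by
    rw [← ofReal_measureReal (isCompact_slice hK v).measure_lt_top.ne]
    exact ENNReal.ofReal_le_ofReal ((volumeRoot_le_iff hM₀).1 (hM v))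
  have haverage : (k / (n + k) : ℝ) ^ k * (n / (n + k)) ^ n * μ.real (slice (K - K) 0) ≤ M ^ k := by
    have h := ENNReal.toReal_mono ENNReal.ofReal_ne_top <|
      ofReal_mul_measure_slice_sub_self_le ν hK hKc hK₀ hS (a := k / (n + k)) (b := n / (n + k))
        (by positivity) (by positivity) (by field_simp; ring)
    rwa [ENNReal.toReal_mul, ENNReal.toReal_ofReal (by positivity),
      ENNReal.toReal_ofReal (by positivity)] at h
  rw [volumeRoot_le_iff (by positivity)]
  calc μ.real (slice (K - K) 0)
      ≤ (2 * Real.exp 1 * (n / k)) ^ k * ((k / (n + k) : ℝ) ^ k * ((n : ℝ) / (n + k)) ^ n) *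
          μ.real (slice (K - K) 0) :=
        le_mul_of_one_le_left measureReal_nonneg (one_le_mul_div_pow_mul_div_pow hk hkn)
    _ ≤ (2 * Real.exp 1 * (n / k)) ^ k * M ^ k := by
        rw [mul_assoc]
        gcongr
    _ = (2 * Real.exp 1 * (n / k) * M) ^ k := (mul_pow _ _ _).symm

theorem volumeRoot_slice_sub_self_le_volumeRoot_slice_average (hK : IsCompact K) (hKc : Convex ℝ K)
    (hK₀ : (μ.prod ν) K ≠ 0) :
    volumeRoot μ (slice (K - K) 0) ≤
      2 * Real.exp 1 ^ 2 * (finrank ℝ (U × V) / finrank ℝ U) ^ 2 *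
        volumeRoot μ (slice K (⨍ z in K, z.2 ∂μ.prod ν)) := by
  refine (volumeRoot_slice_sub_self_le ν hK hKc hK₀
    (volumeRoot_slice_le_volumeRoot_slice_average hK hKc hK₀)).trans_eq ?_
  ring

end Rudelson

section Transport

variable {E : Type*} [NormedAddCommGroup E] [NormedSpace ℝ E] [MeasurableSpace E] [BorelSpace E]

theorem map_setAverage_preimage [FiniteDimensional ℝ E] {F : Type*} [NormedAddCommGroup F]
    [NormedSpace ℝ F] [MeasurableSpace F] [BorelSpace F] (e : F ≃L[ℝ] E)
    (μ : Measure E) [μ.IsAddHaarMeasure] (ν : Measure F) [ν.IsAddHaarMeasure] (K : Set E) :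
    e (⨍ z in e ⁻¹' K, z ∂ν) = ⨍ x in K, x ∂μ := by
  have he : MeasurableEmbedding e := e.toHomeomorph.measurableEmbedding
  have := e.isAddHaarMeasure_map ν
  obtain ⟨c, hμ⟩ : ∃ c : NNReal, μ = c • ν.map e := ⟨_, Measure.isAddLeftInvariant_eq_smul μ _⟩
  have hc : (c : ℝ) ≠ 0 := by
    rw [NNReal.coe_ne_zero]
    rintro rfl
    exact NeZero.ne μ (by rw [hμ, zero_smul])
  have hreal : μ.real K = c * ν.real (e ⁻¹' K) := by
    rw [hμ, measureReal_nnreal_smul_apply, measureReal_def, he.map_apply, measureReal_def]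
  have hintegral : ∫ x in K, x ∂μ = (c : ℝ) • e (∫ z in e ⁻¹' K, z ∂ν) := by
    rw [hμ, Measure.restrict_smul, integral_smul_nnreal_measure, he.setIntegral_map]
    exact congrArg _ (e.integral_comp_comm _)
  rw [setAverage_eq, setAverage_eq, hreal, hintegral, map_smul, smul_smul]
  congr 1
  field_simp

theorem snd_symm_setAverage [FiniteDimensional ℝ E] {U V : Type*} [NormedAddCommGroup U]
    [NormedSpace ℝ U] [FiniteDimensional ℝ U] [MeasurableSpace U] [BorelSpace U]
    [NormedAddCommGroup V] [NormedSpace ℝ V] [FiniteDimensional ℝ V] [MeasurableSpace V]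
    [BorelSpace V] (e : (U × V) ≃L[ℝ] E) (μ : Measure E) [μ.IsAddHaarMeasure]
    (ν : Measure (U × V)) [ν.IsAddHaarMeasure] {K : Set E} (hK : IsCompact K) :
    (e.symm (⨍ x in K, x ∂μ)).2 = ⨍ z in e ⁻¹' K, z.2 ∂ν := by
  have hint : IntegrableOn id (e ⁻¹' K) ν :=
    continuousOn_id.integrableOn_compact (e.toHomeomorph.isCompact_preimage.2 hK)
  rw [← map_setAverage_preimage e μ ν, e.symm_apply_apply, setAverage_eq, setAverage_eq,
    Prod.smul_snd]
  congr 1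
  exact snd_integral hint

theorem hausdorffMeasure_inter_add_image_submodule {H W : Submodule ℝ E} (h : IsCompl H W)
    {d : ℝ} (hd : 0 ≤ d) (K : Set E) (x : E) :
    μH[d] (K ∩ (x + ·) '' (H : Set E)) =
      μH[d] (slice (H.prodEquivOfIsCompl W h ⁻¹' K) ((H.prodEquivOfIsCompl W h).symm x).2) := by
  obtain ⟨⟨u, w⟩, rfl⟩ := (H.prodEquivOfIsCompl W h).surjective x
  have hiso : Isometry fun v : H ↦ (w : E) + v :=
    (isometry_add_left _).comp isometry_subtype_coe
  rw [LinearEquiv.symm_apply_apply, ← hiso.hausdorffMeasure_image (Or.inl hd),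
    Submodule.coe_prodEquivOfIsCompl']
  congr 1
  ext y
  constructor
  · rintro ⟨hy, v, hv, rfl⟩
    have hsum : (u + w + v : E) = w + (u + ⟨v, hv⟩ : H) := by
      rw [Submodule.coe_add]
      abel
    refine ⟨u + ⟨v, hv⟩, ?_, hsum.symm⟩
    rwa [slice, mem_preimage, mem_preimage, Submodule.coe_prodEquivOfIsCompl', add_comm, ← hsum]
  · rintro ⟨v, hv, rfl⟩
    have hsum : (u + w + (v - u) : E) = w + v := by abel
    refine ⟨?_, v - u, H.sub_mem v.2 u.2, hsum⟩
    rwa [slice, mem_preimage, mem_preimage, Submodule.coe_prodEquivOfIsCompl', add_comm] at hv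

end Transport

theorem stmt15_general {E : Type*} [NormedAddCommGroup E] [NormedSpace ℝ E]
    [FiniteDimensional ℝ E] [MeasurableSpace E] [BorelSpace E] (μ : Measure E)
    [μ.IsAddHaarMeasure] {K : Set E} (hK : IsCompact K) (hKc : Convex ℝ K)
    (hKi : (interior K).Nonempty) (H : Submodule ℝ E) [Nontrivial H] :
    μH[finrank ℝ H] ((K - K) ∩ H) ^ (finrank ℝ H : ℝ)⁻¹ ≤
      ENNReal.ofReal (2 * Real.exp 1 ^ 2 * (finrank ℝ E / finrank ℝ H) ^ 2) *
        μH[finrank ℝ H] (K ∩ ((⨍ x in K, x ∂μ) + ·) '' (H : Set E)) ^ (finrank ℝ H : ℝ)⁻¹ := by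
  obtain ⟨W, hW⟩ := H.exists_isCompl
  let e : (H × W) ≃L[ℝ] E := (H.prodEquivOfIsCompl W hW).toContinuousLinearEquiv
  let ν : Measure (H × W) := (μH[finrank ℝ H] : Measure H).prod Measure.addHaar
  have hL : IsCompact (e ⁻¹' K) := e.toHomeomorph.isCompact_preimage.2 hK
  have hLc : Convex ℝ (e ⁻¹' K) := hKc.linear_preimage e.toLinearMap
  have hLi : (interior (e ⁻¹' K)).Nonempty :=
    (hKi.preimage e.surjective).mono (preimage_interior_subset_interior_preimage e.continuous)
  have hdiff : e ⁻¹' (K - K) = e ⁻¹' K - e ⁻¹' K :=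
    preimage_sub e e.injective (by simp) (by simp)
  have hdiff_slice : μH[finrank ℝ H] ((K - K) ∩ H) =
      μH[finrank ℝ H] (slice (e ⁻¹' K - e ⁻¹' K) 0) := by
    have h := hausdorffMeasure_inter_add_image_submodule hW (finrank ℝ H).cast_nonneg (K - K) 0
    simp only [zero_add, image_id', map_zero, Prod.snd_zero] at h
    rwa [← hdiff]
  have hbar_slice : μH[finrank ℝ H] (K ∩ ((⨍ x in K, x ∂μ) + ·) '' (H : Set E)) =
      μH[finrank ℝ H] (slice (e ⁻¹' K) (⨍ z in e ⁻¹' K, z.2 ∂ν)) := by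
    rw [← snd_symm_setAverage e μ ν hK]
    exact hausdorffMeasure_inter_add_image_submodule hW (finrank ℝ H).cast_nonneg K _
  rw [hdiff_slice, hbar_slice,
    ← ofReal_volumeRoot (isCompact_slice (isCompact_sub hL hL) 0).measure_lt_top.ne,
    ← ofReal_volumeRoot (isCompact_slice hL _).measure_lt_top.ne,
    ← ENNReal.ofReal_mul (by positivity), ← e.toLinearEquiv.finrank_eq]
  exact ENNReal.ofReal_le_ofReal <| volumeRoot_slice_sub_self_le_volumeRoot_slice_average _ hL hLc
    (Measure.measure_pos_of_nonempty_interior ν hLi).ne'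

/-- The Rudelson–Fradelizi inequality:
`vol_k((K−K) ∩ H)^{1/k} ≤ c·(n/k)²·vol_k(K ∩ (bar(K)+H))^{1/k}`. -/
theorem stmt15 :
    ∃ c : ℝ, 0 < c ∧ ∀ (n : ℕ),
      ∀ K : Set (EuclideanSpace ℝ (Fin n)),
        IsCompact K → Convex ℝ K → (interior K).Nonempty →
        ∀ k : ℕ, 1 ≤ k → k ≤ n - 1 →
          ∀ H : Submodule ℝ (EuclideanSpace ℝ (Fin n)), Module.finrank ℝ H = k →
            (μH[(k : ℝ)] ((K - K) ∩ (H : Set _))) ^ ((k : ℝ)⁻¹) ≤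
              ENNReal.ofReal (c * ((n : ℝ) / k) ^ 2) *
                (μH[(k : ℝ)] (K ∩ ((fun x => barycenter K + x) '' (H : Set _)))) ^
                  ((k : ℝ)⁻¹) := by
  refine ⟨2 * Real.exp 1 ^ 2, by positivity, ?_⟩
  rintro n K hK hKc hKi _ hk _ H rfl
  have : Nontrivial H := nontrivial_of_finrank_pos hk
  simpa [barycenter, setAverage_eq, measureReal_def] using stmt15_general volume hK hKc hKi H
end
end
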